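/- For any choice of four nonzero real masses m₁, m₂, m₃, m₄ (of arbitrary signs), the number of central configurations of the planar four-body problem with nonzero multiplier is finite. Precisely: the set of 6-tuples of mutual distances (|r_j − r_k|)_{1 ≤ j < k ≤ 4} ranging over all 4-tuples of pairwise distinct points r₁, r₂, r₃, r₄ ∈ ℝ² satisfying σ·r_k = Σ_{j ≠ k} m_j (r_j − r_k)/|r_j − r_k|³ for k = 1, 2, 3, 4 for some σ ∈ {1, −1}, is finite. -/

import Mathlib

/-!
If infinitely many tuples of mutual distances occurred, there would be a nonprincipal ultrafilter on
the set of these tuples, and in the corresponding ultrapower `L` of `ℂ` the distances become six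
elements satisfying polynomial equations with real coefficients. It suffices to show that all six
are algebraic over `ℝ`: then each distance is constant along the ultrafilter (`eventually_const`),
so that a single tuple has measure one, a contradiction. A transcendental element of `L` is
infinitely large at some place of `L` (`exists_place`), i.e. for a valuation that is trivial on `ℝ`,
and comparing leading orders and residues of the equations at the places of `L` leads to
contradictions. There are three cases.

* Not collinear, nonzero total mass (`CoreI`). The affine dependency of four points that span the
  plane is unique up to a factor, which gives `ρ i j ^ (-3) = c + ξ i * ξ j` with a real `c`. Let `μ`
  be the common value of the sums `∑ m j * ξ j * ρ i j ^ 2` over `j`. At any place `μ` is finite if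
  all `ξ` are finite (`CoreI.claim1`), and infinitesimal if some `ξ` is infinite (`CoreI.claim2`).
  Hence `μ` is never infinite, so it is algebraic, and it must vanish if some `ξ` is infinite at some
  place. This last possibility is excluded by `CoreI.claim3`. So the `ξ` are finite at every place
  and no `ρ i j` is ever infinitesimal, which makes the `ρ i j` algebraic.
* Not collinear, zero total mass (`CoreII`). Here `ρ i j ^ (-3) = a i + a j`, and the same two claims
  show that `μ`, now without the factors `ξ`, is algebraic. If `μ` is not zero, the `a` are finite at
  every place and the argument ends as before. If `μ = 0`, all ratios between the `a p` are
  algebraic, and a linear relation among the `a p` fixes their scale (`CoreII.claim3`).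
* Collinear (`CoreIII`). If some distance is transcendental, then any given pair of bodies is much
  closer than some other pair at some place. Close bodies form clusters, and leading orders only
  permit a cluster of three bodies far away from the fourth one. The limit of such a cluster is an
  equilibrium (`T0`) or a uniform translation (`T1`) of its three bodies alone, which imposes one
  real relation `T` on their masses. Applied to several pairs, this gives `T` for three triples that
  are incompatible for nonzero masses (`triples_I`, `triples_II`).
-/

open Finset in
/-- The set of 6-tuples of mutual distances attained by planar central
configurations of four pairwise distinct bodies with multiplier `σ = ±1`. -/
def CCDistanceSet (m : Fin 4 → ℝ) : Set (Fin 4 → Fin 4 → ℝ) :=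
  {d | ∃ (σ : ℝ) (r : Fin 4 → EuclideanSpace ℝ (Fin 2)),
      (σ = 1 ∨ σ = -1) ∧
      (∀ j k, j ≠ k → r j ≠ r k) ∧
      (∀ k, σ • r k = ∑ j ∈ univ.filter (fun j => j ≠ k),
          (m j / ‖r j - r k‖ ^ 3) • (r j - r k)) ∧
      (∀ j k, d j k = ‖r j - r k‖)}

/-! ### Places -/

/-- Logarithmic size function together with the residue map of a valuation of `L` that is trivial
on the real scalars. `G` is the value group written additively, with the convention that
`0 < s x` means that `x` is infinitely large; `s 0` is a junk value. `res` is meaningful only on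
elements that are not infinitely large. -/
structure Place (L : Type*) [Field L] [Algebra ℝ L] (G : Type*) [AddCommGroup G] [LinearOrder G]
    [IsOrderedAddMonoid G] (k : Type*) [Field k] where
  s : L → G
  res : L → k
  φ : ℝ →+* k
  s_mul : ∀ x y, x ≠ 0 → y ≠ 0 → s (x * y) = s x + s y
  s_add : ∀ x y, x ≠ 0 → y ≠ 0 → x + y ≠ 0 → s (x + y) ≤ max (s x) (s y)
  s_real : ∀ r : ℝ, r ≠ 0 → s (algebraMap ℝ L r) = 0
  res_real : ∀ r : ℝ, res (algebraMap ℝ L r) = φ r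
  res_add' : ∀ x y, (x ≠ 0 → s x ≤ 0) → (y ≠ 0 → s y ≤ 0) → res (x + y) = res x + res y
  res_mul' : ∀ x y, (x ≠ 0 → s x ≤ 0) → (y ≠ 0 → s y ≤ 0) → res (x * y) = res x * res y
  res_eq_zero' : ∀ x, (x ≠ 0 → s x ≤ 0) → (res x = 0 ↔ (x ≠ 0 → s x < 0))

namespace Place

variable {L : Type*} [Field L] [Algebra ℝ L] {G : Type*} [AddCommGroup G] [LinearOrder G]
    [IsOrderedAddMonoid G] {k : Type*} [Field k] (P : Place L G k)

/-- `x` is zero or has size at most `g`. -/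
def le (x : L) (g : G) : Prop := x ≠ 0 → P.s x ≤ g

/-- `x` is zero or has size less than `g`. -/
def lt (x : L) (g : G) : Prop := x ≠ 0 → P.s x < g

variable {P} {x y z : L} {g h : G}

theorem lt.le (H : P.lt x g) : P.le x g := fun hx => (H hx).le
theorem le.mono (H : P.le x g) (hg : g ≤ h) : P.le x h := fun hx => (H hx).trans hg
theorem lt.mono (H : P.lt x g) (hg : g ≤ h) : P.lt x h := fun hx => (H hx).trans_le hg
theorem le.trans_lt (H : P.le x g) (hg : g < h) : P.lt x h := fun hx => (H hx).trans_lt hg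
theorem le_zero : P.le 0 g := fun h => absurd rfl h
theorem lt_zero : P.lt 0 g := fun h => absurd rfl h
theorem not_le (H : ¬ P.le x g) : x ≠ 0 ∧ g < P.s x := by
  unfold le at H; push Not at H; exact H
theorem not_lt (H : ¬ P.lt x g) : x ≠ 0 ∧ g ≤ P.s x := by
  unfold lt at H; push Not at H; exact H

theorem s_one : P.s 1 = 0 := by
  have := P.s_real 1 one_ne_zero; rwa [map_one] at this

theorem s_neg (x : L) : P.s (-x) = P.s x := by
  rcases eq_or_ne x 0 with rfl | hx
  · simp
  · have h1 := P.s_mul (algebraMap ℝ L (-1)) x (by simp) hx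
    rw [P.s_real _ (by norm_num)] at h1
    simpa using h1

theorem s_pow (hx : x ≠ 0) (n : ℕ) : P.s (x ^ n) = n • P.s x := by
  induction n with
  | zero => simp [s_one]
  | succ n ih => rw [pow_succ, P.s_mul _ _ (pow_ne_zero _ hx) hx, ih, succ_nsmul]

theorem s_inv (hx : x ≠ 0) : P.s x⁻¹ = - P.s x := by
  have := P.s_mul x x⁻¹ hx (inv_ne_zero hx)
  rw [mul_inv_cancel₀ hx, s_one] at this
  exact (neg_eq_of_add_eq_zero_right this.symm).symm

theorem s_div (hx : x ≠ 0) (hy : y ≠ 0) : P.s (x / y) = P.s x - P.s y := by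
  rw [div_eq_mul_inv, P.s_mul _ _ hx (inv_ne_zero hy), s_inv hy, sub_eq_add_neg]

theorem s_real_mul {r : ℝ} (hr : r ≠ 0) (hx : x ≠ 0) : P.s (algebraMap ℝ L r * x) = P.s x := by
  rw [P.s_mul _ _ (by simpa using hr) hx, P.s_real r hr, zero_add]

theorem le.neg (H : P.le x g) : P.le (-x) g := fun hx => by
  rw [s_neg]; exact H (by simpa using hx)
theorem lt.neg (H : P.lt x g) : P.lt (-x) g := fun hx => by
  rw [s_neg]; exact H (by simpa using hx)

theorem le.add (hx : P.le x g) (hy : P.le y g) : P.le (x + y) g := by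
  intro h
  rcases eq_or_ne x 0 with rfl | hx0
  · rw [zero_add] at h ⊢; exact hy h
  rcases eq_or_ne y 0 with rfl | hy0
  · rw [add_zero] at h ⊢; exact hx h
  exact (P.s_add x y hx0 hy0 h).trans (max_le (hx hx0) (hy hy0))

theorem lt.add (hx : P.lt x g) (hy : P.lt y g) : P.lt (x + y) g := by
  intro h
  rcases eq_or_ne x 0 with rfl | hx0
  · rw [zero_add] at h ⊢; exact hy h
  rcases eq_or_ne y 0 with rfl | hy0
  · rw [add_zero] at h ⊢; exact hx h
  exact (P.s_add x y hx0 hy0 h).trans_lt (max_lt (hx hx0) (hy hy0))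

theorem le.sub (hx : P.le x g) (hy : P.le y g) : P.le (x - y) g := by
  rw [sub_eq_add_neg]; exact hx.add hy.neg
theorem lt.sub (hx : P.lt x g) (hy : P.lt y g) : P.lt (x - y) g := by
  rw [sub_eq_add_neg]; exact hx.add hy.neg

theorem le.mul (hx : P.le x g) (hy : P.le y h) : P.le (x * y) (g + h) := by
  intro H
  have hx0 := left_ne_zero_of_mul H
  have hy0 := right_ne_zero_of_mul H
  rw [P.s_mul _ _ hx0 hy0]; exact add_le_add (hx hx0) (hy hy0)

theorem lt.mul_le (hx : P.lt x g) (hy : P.le y h) : P.lt (x * y) (g + h) := by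
  intro H
  have hx0 := left_ne_zero_of_mul H
  have hy0 := right_ne_zero_of_mul H
  rw [P.s_mul _ _ hx0 hy0]; exact add_lt_add_of_lt_of_le (hx hx0) (hy hy0)

theorem le.mul_lt (hx : P.le x g) (hy : P.lt y h) : P.lt (x * y) (g + h) := by
  rw [mul_comm, add_comm]; exact hy.mul_le hx

theorem le_self (x : L) : P.le x (P.s x) := fun _ => le_rfl
theorem le_s (h : P.s x ≤ g) : P.le x g := fun _ => h
theorem lt_s (h : P.s x < g) : P.lt x g := fun _ => h

theorem le_real (r : ℝ) : P.le (algebraMap ℝ L r) 0 := fun h =>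
  (P.s_real r (by rintro rfl; simp at h)).le

theorem le_one : P.le 1 0 := fun _ => s_one.le

theorem le_sq (hb : ¬ 0 < P.s x) : P.le (x ^ 2) 0 := fun h => by
  have hx : x ≠ 0 := by rintro rfl; simp at h
  rw [s_pow hx]; exact nsmul_nonpos (_root_.not_lt.1 hb) _

theorem le.real_mul (H : P.le x g) (r : ℝ) : P.le (algebraMap ℝ L r * x) g := by
  simpa using (le_real (P := P) r).mul H
theorem lt.real_mul (H : P.lt x g) (r : ℝ) : P.lt (algebraMap ℝ L r * x) g := by
  simpa using (le_real (P := P) r).mul_lt H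

theorem lt.of_real_mul {r : ℝ} (hr : r ≠ 0) (H : P.lt (algebraMap ℝ L r * x) g) : P.lt x g := by
  have := H.real_mul r⁻¹
  rwa [← mul_assoc, ← map_mul, inv_mul_cancel₀ hr, map_one, one_mul] at this
theorem le.of_real_mul {r : ℝ} (hr : r ≠ 0) (H : P.le (algebraMap ℝ L r * x) g) : P.le x g := by
  have := H.real_mul r⁻¹
  rwa [← mul_assoc, ← map_mul, inv_mul_cancel₀ hr, map_one, one_mul] at this

theorem not_lt_self (hx : x ≠ 0) (H : P.lt x (P.s x)) : False := lt_irrefl _ (H hx)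

/-- A strictly dominant term determines the size of a sum. -/
theorem dom (hx : x ≠ 0) (hy : P.lt y (P.s x)) : x + y ≠ 0 ∧ P.s (x + y) = P.s x := by
  have h0 : x + y ≠ 0 := by
    intro h
    have : y = -x := by linear_combination h
    rw [this] at hy
    exact absurd (hy (neg_ne_zero.mpr hx)) (by simp [s_neg])
  refine ⟨h0, le_antisymm ((le_self x).add hy.le h0) ?_⟩
  by_contra hlt
  have : P.lt (x + y - y) (P.s x) := (lt_s (lt_of_not_ge hlt)).sub hy
  rw [add_sub_cancel_right] at this
  exact not_lt_self hx this

theorem res_add (hx : P.le x 0) (hy : P.le y 0) : P.res (x + y) = P.res x + P.res y :=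
  P.res_add' x y hx hy
theorem res_mul (hx : P.le x 0) (hy : P.le y 0) : P.res (x * y) = P.res x * P.res y :=
  P.res_mul' x y hx hy
theorem res_eq_zero (hx : P.le x 0) : P.res x = 0 ↔ P.lt x 0 := P.res_eq_zero' x hx
theorem res_eq_zero_of_lt (hx : P.lt x 0) : P.res x = 0 := (res_eq_zero hx.le).2 hx
theorem res_one : P.res 1 = 1 := by simpa using P.res_real 1
theorem res_neg (hx : P.le x 0) : P.res (-x) = - P.res x := by
  have := res_add hx hx.neg
  rw [add_neg_cancel, res_eq_zero_of_lt lt_zero] at this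
  exact (neg_eq_of_add_eq_zero_right this.symm).symm
theorem res_sub (hx : P.le x 0) (hy : P.le y 0) : P.res (x - y) = P.res x - P.res y := by
  rw [sub_eq_add_neg, res_add hx hy.neg, res_neg hy, sub_eq_add_neg]
theorem res_eq (hx : P.le x 0) (hy : P.le y 0) (h : P.lt (x - y) 0) : P.res x = P.res y := by
  have := res_sub hx hy
  rw [res_eq_zero_of_lt h] at this
  exact (sub_eq_zero.1 this.symm)
theorem le.pow (hx : P.le x 0) (n : ℕ) : P.le (x ^ n) 0 := by
  intro h
  rcases n with _ | n
  · simp [s_one]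
  · have hx0 : x ≠ 0 := by rintro rfl; simp at h
    rw [s_pow hx0]; exact nsmul_nonpos (hx hx0) _
theorem res_pow (hx : P.le x 0) (n : ℕ) : P.res (x ^ n) = P.res x ^ n := by
  induction n with
  | zero => simp [res_one]
  | succ n ih => rw [pow_succ, res_mul (hx.pow n) hx, ih, pow_succ]
theorem res_real_mul (hx : P.le x 0) (r : ℝ) :
    P.res (algebraMap ℝ L r * x) = P.φ r * P.res x := by
  rw [res_mul (le_real r) hx, P.res_real]
theorem res_ne_zero (hx : x ≠ 0) (h : P.s x = 0) : P.res x ≠ 0 := by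
  rw [Ne, res_eq_zero (le_s h.le)]
  intro H; exact absurd (H hx) (by simp [h])

end Place

/-- The four indices are pairwise distinct. -/
def D4 (i j k l : Fin 4) : Prop := i ≠ j ∧ i ≠ k ∧ i ≠ l ∧ j ≠ k ∧ j ≠ l ∧ k ≠ l

instance (i j k l : Fin 4) : Decidable (D4 i j k l) := by unfold D4; infer_instance

namespace D4
variable {i j k l : Fin 4}
theorem a (h : D4 i j k l) : D4 j i k l := by unfold D4 at *; tauto
theorem b (h : D4 i j k l) : D4 i k j l := by unfold D4 at *; tauto
theorem c (h : D4 i j k l) : D4 i j l k := by unfold D4 at *; tauto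
theorem cases (h : D4 i j k l) (p : Fin 4) : p = i ∨ p = j ∨ p = k ∨ p = l := by
  revert h; revert i j k l p; decide
theorem ij (h : D4 i j k l) : i ≠ j := h.1
theorem ik (h : D4 i j k l) : i ≠ k := h.2.1
theorem il (h : D4 i j k l) : i ≠ l := h.2.2.1
theorem jk (h : D4 i j k l) : j ≠ k := h.2.2.2.1
theorem jl (h : D4 i j k l) : j ≠ l := h.2.2.2.2.1
theorem kl (h : D4 i j k l) : k ≠ l := h.2.2.2.2.2
theorem complete2 : ∀ {i j : Fin 4}, i ≠ j → ∃ k l, D4 i j k l := by decide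
theorem complete1 : ∀ i : Fin 4, ∃ j k l, D4 i j k l := by decide
theorem complete3 : ∀ {i j k : Fin 4}, i ≠ j → i ≠ k → j ≠ k → ∃ l, D4 i j k l := by decide
end D4

/-! ### Existence of places -/

section Existence

universe u
variable {L : Type u} [Field L] [Algebra ℝ L]

/-- Elements algebraic over `ℝ` are neither infinite nor infinitesimal at any place. -/
theorem Place.s_algebraic {G : Type*} [AddCommGroup G] [LinearOrder G]
    [IsOrderedAddMonoid G] {k : Type*} [Field k] (P : Place L G k) {x : L} (hx : x ≠ 0)
    (h : IsAlgebraic ℝ x) : P.s x = 0 := by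
  have key : ∀ y : L, y ≠ 0 → IsIntegral ℝ y → P.s y ≤ 0 := by
    intro y hy ⟨p, hp, hpy⟩
    by_contra hlt
    push Not at hlt
    have hdeg : P.le (y ^ p.natDegree) ((p.natDegree) • P.s y - P.s y) := by
      have e : y ^ p.natDegree =
          - ∑ i ∈ Finset.range p.natDegree, algebraMap ℝ L (p.coeff i) * y ^ i := by
        rw [Polynomial.eval₂_eq_sum_range, Finset.sum_range_succ, hp.coeff_natDegree, map_one,
          one_mul] at hpy
        linear_combination hpy
      rw [e]
      apply Place.le.neg
      refine Finset.sum_induction _ (fun z => P.le z ((p.natDegree) • P.s y - P.s y))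
        (fun _ _ h1 h2 => h1.add h2) Place.le_zero ?_
      intro i hi
      apply Place.le.real_mul
      apply Place.le_s
      rw [Place.s_pow hy, le_sub_iff_add_le, ← succ_nsmul]
      exact nsmul_le_nsmul_left hlt.le (Finset.mem_range.1 hi)
    have := hdeg (pow_ne_zero _ hy)
    rw [Place.s_pow hy] at this
    have h2 := sub_lt_self (p.natDegree • P.s y) hlt
    exact absurd this (not_le_of_gt h2)
  refine le_antisymm (key x hx h.isIntegral) ?_
  have := key x⁻¹ (inv_ne_zero hx) (h.inv).isIntegral
  rw [Place.s_inv hx] at this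
  exact neg_nonpos.1 this

/-- An element that is transcendental over `ℝ` becomes infinitely large at some place. -/
theorem exists_place (f : L) (hf : ¬ IsAlgebraic ℝ f) :
    ∃ (G : Type u) (_ : AddCommGroup G) (_ : LinearOrder G) (_ : IsOrderedAddMonoid G)
      (k : Type u) (_ : Field k) (P : Place L G k), 0 < P.s f := by
  classical
  let R : Subring L := (integralClosure ℝ L).toSubring
  have hR : f ∉ R := fun h => hf (IsIntegral.isAlgebraic (R := ℝ) h)
  have : IsIntegrallyClosedIn R L := by
    have : IsIntegrallyClosedIn (integralClosure ℝ L) L := inferInstance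
    exact this
  obtain ⟨V, hRV, hfV⟩ := Subring.exists_le_valuationSubring_of_isIntegrallyClosedIn hR
  have hreal : ∀ r : ℝ, algebraMap ℝ L r ∈ V := fun r =>
    hRV (show algebraMap ℝ L r ∈ integralClosure ℝ L from isIntegral_algebraMap)
  let v := V.valuation
  let s : L → Additive (V.ValueGroup)ˣ := fun x =>
    if h : x = 0 then 0 else Additive.ofMul (Units.mk0 (v x) ((Valuation.ne_zero_iff v).2 h))
  have s_le : ∀ x y : L, x ≠ 0 → y ≠ 0 → (s x ≤ s y ↔ v x ≤ v y) := by
    intro x y hx hy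
    simp only [s, hx, hy, dif_neg, not_false_iff]
    rw [Additive.ofMul_le, ← Units.val_le_val]; rfl
  have s_nonpos : ∀ x : L, x ≠ 0 → (s x ≤ 0 ↔ v x ≤ 1) := by
    intro x hx
    simp only [s, hx, dif_neg, not_false_iff]
    rw [← ofMul_one, Additive.ofMul_le, ← Units.val_le_val]; rfl
  have s_neg' : ∀ x : L, x ≠ 0 → (s x < 0 ↔ v x < 1) := by
    intro x hx
    simp only [s, hx, dif_neg, not_false_iff]
    rw [← ofMul_one, Additive.ofMul_lt, ← Units.val_lt_val]; rfl
  have s_pos' : ∀ x : L, x ≠ 0 → (0 < s x ↔ 1 < v x) := by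
    intro x hx
    rw [← not_le, s_nonpos x hx, not_le]
  have mem : ∀ x : L, (x ≠ 0 → s x ≤ 0) ↔ x ∈ V := by
    intro x
    rw [← V.valuation_le_one_iff]
    by_cases hx : x = 0
    · simp [hx]
    · simp only [ne_eq, hx, not_false_iff, true_imp_iff]; exact s_nonpos x hx
  let res : L → IsLocalRing.ResidueField V := fun x =>
    if h : x ∈ V then IsLocalRing.residue V ⟨x, h⟩ else 0
  have hres : ∀ (x : L) (h : x ∈ V), res x = IsLocalRing.residue V ⟨x, h⟩ := fun x h => by
    simp [res, h]
  let cv : ℝ →+* V := (algebraMap ℝ L).codRestrict V.toSubring hreal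
  refine ⟨Additive (V.ValueGroup)ˣ, inferInstance, inferInstance, inferInstance,
    IsLocalRing.ResidueField V, inferInstance,
    { s := s, res := res, φ := (IsLocalRing.residue V).comp cv,
      s_mul := ?_, s_add := ?_, s_real := ?_, res_real := ?_, res_add' := ?_, res_mul' := ?_,
      res_eq_zero' := ?_ }, ?_⟩
  · intro x y hx hy
    simp only [s, hx, hy, mul_ne_zero hx hy, dif_neg, not_false_iff]
    rw [← ofMul_mul]
    congr 1
    ext
    simp
  · intro x y hx hy hxy
    rcases le_total (v x) (v y) with h | h
    · refine le_max_of_le_right ((s_le _ _ hxy hy).2 ?_)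
      exact (v.map_add x y).trans (max_le h le_rfl)
    · refine le_max_of_le_left ((s_le _ _ hxy hx).2 ?_)
      exact (v.map_add x y).trans (max_le le_rfl h)
  · intro r hr
    have h0 : algebraMap ℝ L r ≠ 0 := by simpa using hr
    refine le_antisymm ((mem _).2 (hreal r) h0) ?_
    rw [← not_lt, s_neg' _ h0, not_lt]
    have h1 := (V.valuation_le_one_iff _).2 (hreal r⁻¹)
    rw [map_inv₀, map_inv₀] at h1
    exact (inv_le_one₀ (by
      rw [zero_lt_iff]; exact (Valuation.ne_zero_iff _).2 h0)).1 h1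
  · intro r
    rw [hres _ (hreal r)]; rfl
  · intro x y hx hy
    have hx := (mem x).1 hx
    have hy := (mem y).1 hy
    rw [hres x hx, hres y hy, hres (x + y) (V.add_mem _ _ hx hy), ← map_add]; rfl
  · intro x y hx hy
    have hx := (mem x).1 hx
    have hy := (mem y).1 hy
    rw [hres x hx, hres y hy, hres (x * y) (V.mul_mem _ _ hx hy), ← map_mul]; rfl
  · intro x hx
    have hxV := (mem x).1 hx
    rw [hres x hxV, IsLocalRing.residue_eq_zero_iff, V.valuation_lt_one_iff]
    by_cases h0 : x = 0
    · simp [h0]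
    · simp only [ne_eq, h0, not_false_iff, true_imp_iff, s_neg' x h0]; rfl
  · have h0 : f ≠ 0 := by rintro rfl; exact hfV V.zero_mem
    exact (s_pos' f h0).2 (by rw [← not_le, V.valuation_le_one_iff]; exact hfV)

end Existence

/-! ### Nonzero total mass, not collinear: all `ξ` finite -/

theorem Place.φ_ne {L : Type*} [Field L] [Algebra ℝ L] {G : Type*} [AddCommGroup G] [LinearOrder G]
    [IsOrderedAddMonoid G] {k : Type*} [Field k] (P : Place L G k) {r : ℝ} (hr : r ≠ 0) :
    P.φ r ≠ 0 := by simpa using hr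

theorem Place.two_ne {L : Type*} [Field L] [Algebra ℝ L] {G : Type*} [AddCommGroup G]
    [LinearOrder G] [IsOrderedAddMonoid G] {k : Type*} [Field k] (P : Place L G k) :
    (2 : k) ≠ 0 := by
  have := P.φ_ne (two_ne_zero (α := ℝ))
  rwa [map_ofNat] at this

theorem cst_ne (L : Type*) [Field L] [Algebra ℝ L] {r : ℝ} (hr : r ≠ 0) :
    algebraMap ℝ L r ≠ 0 := by
  rwa [Ne, map_eq_zero]

/-- The weights `w i` (equal to `m i * ξ i` or to `m i`) sum to zero and `∑ⱼ y i j = w i * μ`;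
then opposite edges are related. -/
theorem weights_S2 {L : Type*} [Field L] {w : Fin 4 → L} {y : Fin 4 → Fin 4 → L} {μ : L}
    (h2 : (2 : L) ≠ 0)
    (symm : ∀ i j, y i j = y j i) (sum : ∀ i j k l, D4 i j k l → w i + w j + w k + w l = 0)
    (E : ∀ i j k l, D4 i j k l → w i * μ = y i j + y i k + y i l) {i j k l : Fin 4}
    (D : D4 i j k l) : (w i + w k) * μ = y i k - y j l := by
  have e1 := E i j k l D
  have e2 := E j i k l D.a
  have e3 := E k i j l D.b.a
  have e4 := E l i j k D.c.b.a
  rw [symm j i] at e2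
  rw [symm k i, symm k j] at e3
  rw [symm l i, symm l j, symm l k] at e4
  have s := sum i j k l D
  apply mul_left_cancel₀ h2
  linear_combination e1 - e2 + e3 - e4 + s * μ

/-- Under the assumptions of `weights_S2`, the edges at `i` can be traded for the triangle opposite
to `i`. -/
theorem weights_S1 {L : Type*} [Field L] {w : Fin 4 → L} {y : Fin 4 → Fin 4 → L} {μ : L}
    (h2 : (2 : L) ≠ 0)
    (symm : ∀ i j, y i j = y j i) (sum : ∀ i j k l, D4 i j k l → w i + w j + w k + w l = 0)
    (E : ∀ i j k l, D4 i j k l → w i * μ = y i j + y i k + y i l) {i j k l : Fin 4}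
    (D : D4 i j k l) : w i * μ = -(y j k + y j l + y k l) := by
  have e1 := E i j k l D
  have e2 := E j i k l D.a
  have e3 := E k i j l D.b.a
  have e4 := E l i j k D.c.b.a
  rw [symm j i] at e2
  rw [symm k i, symm k j] at e3
  rw [symm l i, symm l j, symm l k] at e4
  have s := sum i j k l D
  apply mul_left_cancel₀ h2
  linear_combination e1 - e2 - e3 - e4 + s * μ

theorem L_two_ne (L : Type*) [Field L] [Algebra ℝ L] : (2 : L) ≠ 0 := by
  have : algebraMap ℝ L 2 ≠ 0 := by rw [Ne, map_eq_zero]; norm_num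
  rwa [map_ofNat] at this

section CoreI

variable {L : Type*} [Field L] [Algebra ℝ L] {G : Type*} [AddCommGroup G] [LinearOrder G]
    [IsOrderedAddMonoid G] {K : Type*} [Field K]

local notation "C" => algebraMap ℝ L

/-- Algebraic equations satisfied by non-collinear central configurations with nonzero total mass:
`ρ i j` are the mutual distances, `ξ i` is proportional to the `i`-th coefficient of the affine
dependency of the bodies divided by `m i`, and `c` is `-σ` divided by the total mass. -/
structure CoreI (m : Fin 4 → ℝ) (c : ℝ) (ξ : Fin 4 → L) (ρ : Fin 4 → Fin 4 → L) (μ : L) :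
    Prop where
  hm : ∀ i, m i ≠ 0
  hc : c ≠ 0
  hM : ∀ i j k l, D4 i j k l → m i + m j + m k + m l ≠ 0
  symm : ∀ i j, ρ i j = ρ j i
  eqn : ∀ i j, i ≠ j → (C c + ξ i * ξ j) * ρ i j ^ 3 = 1
  sum : ∀ i j k l, D4 i j k l →
    C (m i) * ξ i + C (m j) * ξ j + C (m k) * ξ k + C (m l) * ξ l = 0
  F : ∀ i j k l, D4 i j k l →
    C (m j) * ξ j * ρ i j ^ 2 + C (m k) * ξ k * ρ i k ^ 2 + C (m l) * ξ l * ρ i l ^ 2 = μ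

namespace CoreI
open Place

variable {m : Fin 4 → ℝ} {c : ℝ} {ξ : Fin 4 → L} {ρ : Fin 4 → Fin 4 → L} {μ : L}
  (H : CoreI m c ξ ρ μ) (P : Place L G K)
  {i j k l : Fin 4}
include H


theorem S2 (D : D4 i j k l) : (C (m i) * ξ i + C (m k) * ξ k) * μ =
    C (m i) * ξ i * (C (m k) * ξ k) * ρ i k ^ 2 - C (m j) * ξ j * (C (m l) * ξ l) * ρ j l ^ 2 :=
  weights_S2 (w := fun i => C (m i) * ξ i)
    (y := fun i j => C (m i) * ξ i * (C (m j) * ξ j) * ρ i j ^ 2) (L_two_ne L)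
    (fun i j => by rw [H.symm i j]; ring) H.sum
    (fun i j k l D => by rw [← H.F i j k l D]; ring) D

theorem S1 (D : D4 i j k l) : C (m i) * ξ i * μ =
    -(C (m j) * ξ j * (C (m k) * ξ k) * ρ j k ^ 2 + C (m j) * ξ j * (C (m l) * ξ l) * ρ j l ^ 2 +
      C (m k) * ξ k * (C (m l) * ξ l) * ρ k l ^ 2) :=
  weights_S1 (w := fun i => C (m i) * ξ i)
    (y := fun i j => C (m i) * ξ i * (C (m j) * ξ j) * ρ i j ^ 2) (L_two_ne L)
    (fun i j => by rw [H.symm i j]; ring) H.sum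
    (fun i j k l D => by rw [← H.F i j k l D]; ring) D

theorem ρ_ne (h : i ≠ j) : ρ i j ≠ 0 := by
  intro h0
  have := H.eqn i j h
  rw [h0] at this; simp at this

theorem ε_ne (h : i ≠ j) : C c + ξ i * ξ j ≠ 0 := by
  intro h0
  have := H.eqn i j h
  rw [h0] at this; simp at this

theorem s_ε (h : i ≠ j) : P.s (C c + ξ i * ξ j) + 3 • P.s (ρ i j) = 0 := by
  have := H.eqn i j h
  have h2 := P.s_mul _ _ (H.ε_ne h) (pow_ne_zero 3 (H.ρ_ne h))
  rw [this, s_one, s_pow (H.ρ_ne h)] at h2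
  exact h2.symm

theorem s_ρ_of_pos (h : i ≠ j) (hi : ξ i ≠ 0) (hj : ξ j ≠ 0) (ht : 0 < P.s (ξ i) + P.s (ξ j)) :
    3 • P.s (ρ i j) = - (P.s (ξ i) + P.s (ξ j)) := by
  have h1 := P.s_mul _ _ hi hj
  have h2 := dom (P := P) (mul_ne_zero hi hj) (y := C c) ((le_real c).trans_lt (by rwa [h1]))
  have h3 := H.s_ε P h
  rw [add_comm (C c), h2.2, h1] at h3
  grind

theorem s_ρ_of_lt (h : i ≠ j) (ht : P.lt (ξ i * ξ j) 0) : P.s (ρ i j) = 0 := by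
  have hc : P.s (C c) = 0 := P.s_real c H.hc
  have h2 := dom (P := P) (x := C c) (by simpa using H.hc) (y := ξ i * ξ j) (by rwa [hc])
  have h3 := H.s_ε P h
  rw [h2.2, hc] at h3
  grind

theorem s_ρ_of_le (h : i ≠ j) (ht : P.le (ξ i * ξ j) 0) : 0 ≤ P.s (ρ i j) := by
  have h2 := ((le_real (P := P) c).add ht) (H.ε_ne h)
  have h3 := H.s_ε P h
  grind

/-- An infinite distance makes `c + ξ i * ξ j` infinitesimal, so that `ξ i` and `ξ j` have inverse
sizes. -/
theorem of_big (h : i ≠ j) (hb : 0 < P.s (ρ i j)) :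
    ξ i ≠ 0 ∧ ξ j ≠ 0 ∧ P.s (ξ i) + P.s (ξ j) = 0 := by
  by_cases h0 : ξ i * ξ j = 0
  · have := H.s_ρ_of_lt P h (by rw [h0]; exact lt_zero)
    grind
  · have hi := left_ne_zero_of_mul h0
    have hj := right_ne_zero_of_mul h0
    refine ⟨hi, hj, ?_⟩
    rcases lt_trichotomy (P.s (ξ i) + P.s (ξ j)) 0 with h1 | h1 | h1
    · have := H.s_ρ_of_lt P h (lt_s (by rw [P.s_mul _ _ hi hj]; exact h1))
      grind
    · exact h1
    · have := H.s_ρ_of_pos P h hi hj h1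
      grind

theorem lt_of_big (h : i ≠ j) (hb : 0 < P.s (ρ i j)) : P.lt (C c + ξ i * ξ j) 0 := by
  have h3 := H.s_ε P h
  exact lt_s (by grind)

theorem res_of_big (h : i ≠ j) (hb : 0 < P.s (ρ i j)) (hi : P.le (ξ i) 0) (hj : P.le (ξ j) 0) :
    P.res (ξ i) * P.res (ξ j) = - P.φ c := by
  have := res_eq_zero_of_lt (H.lt_of_big P h hb)
  rw [res_add (le_real c) (by simpa using hi.mul hj), res_mul hi hj, P.res_real] at this
  linear_combination this

/-- If every `ξ` is finite and `μ` is infinite, every body is at an infinite distance from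
another one. -/
theorem exists_big (hle : ∀ p, P.le (ξ p) 0) (hμ : ¬ P.le μ 0) (i : Fin 4) :
    ∃ j, i ≠ j ∧ 0 < P.s (ρ i j) := by
  by_contra hcon
  push Not at hcon
  obtain ⟨j, k, l, D⟩ := D4.complete1 i
  apply hμ
  rw [← H.F i j k l D]
  have key : ∀ q, i ≠ q → P.le (C (m q) * ξ q * ρ i q ^ 2) 0 := fun q hq => by
    simpa using (((hle q).real_mul (m q)).mul ((le_s (hcon q hq)).pow 2))
  exact ((key _ D.ij).add (key _ D.ik)).add (key _ D.il)

/-- If no distance in the triangle opposite to `i` is infinite, then `S1` bounds `μ`. -/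
theorem claim1_single (hle : ∀ p, P.le (ξ p) 0) (D : D4 i j k l) (h0 : P.res (ξ i) ≠ 0)
    (h1 : ¬ 0 < P.s (ρ j k)) (h2 : ¬ 0 < P.s (ρ j l)) (h3 : ¬ 0 < P.s (ρ k l)) : P.le μ 0 := by
  have e := H.S1 D
  have key : ∀ p q, p ≠ q → ¬ 0 < P.s (ρ p q) →
      P.le (C (m p) * ξ p * (C (m q) * ξ q) * ρ p q ^ 2) 0 := fun p q hpq hb => by
    simpa using (((hle p).real_mul (m p)).mul ((hle q).real_mul (m q))).mul (le_sq hb)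
  have h4 : P.le (C (m i) * (ξ i * μ)) 0 := by
    rw [← mul_assoc, e]
    exact (((key _ _ D.jk h1).add (key _ _ D.jl h2)).add (key _ _ D.kl h3)).neg
  have h5 := h4.of_real_mul (H.hm i)
  intro hμ
  have hξ : ξ i ≠ 0 := by
    intro h; apply h0; rw [h]; exact res_eq_zero_of_lt lt_zero
  have h6 : 0 ≤ P.s (ξ i) := by
    by_contra hlt
    exact h0 (res_eq_zero_of_lt (lt_s (not_le.1 hlt)))
  have h7 := h5 (mul_ne_zero hξ hμ)
  rw [P.s_mul _ _ hξ hμ] at h7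
  grind

/-- The residues of `ξ` are nonzero and agree within the pairs `i`, `k` and `j`, `l`, whose inner
distances are not infinite: `S2` bounds `μ` unless `m i + m k = 0`, and in this case `m j + m l = 0`
as well, by the relation `∑ m p * ξ p = 0`, which is excluded by the nonzero total mass. -/
theorem claim1_pairs (hle : ∀ p, P.le (ξ p) 0) (D : D4 i j k l) (h0 : P.res (ξ i) ≠ 0)
    (h0' : P.res (ξ j) ≠ 0) (hik : P.res (ξ i) = P.res (ξ k)) (hjl : P.res (ξ j) = P.res (ξ l))
    (h1 : ¬ 0 < P.s (ρ i k)) (h2 : ¬ 0 < P.s (ρ j l)) : P.le μ 0 := by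
  have e := H.S2 D
  have key : ∀ p q, p ≠ q → ¬ 0 < P.s (ρ p q) →
      P.le (C (m p) * ξ p * (C (m q) * ξ q) * ρ p q ^ 2) 0 := fun p q hpq hb => by
    simpa using (((hle p).real_mul (m p)).mul ((hle q).real_mul (m q))).mul (le_sq hb)
  have hl : ∀ p, P.le (C (m p) * ξ p) 0 := fun p => (hle p).real_mul (m p)
  have hr : P.res (C (m i) * ξ i + C (m k) * ξ k) = P.φ (m i + m k) * P.res (ξ i) := by
    rw [res_add (hl _) (hl _), res_real_mul (hle _), res_real_mul (hle _), ← hik, map_add]; ring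
  have hr' : P.res (C (m j) * ξ j + C (m l) * ξ l) = P.φ (m j + m l) * P.res (ξ j) := by
    rw [res_add (hl _) (hl _), res_real_mul (hle _), res_real_mul (hle _), ← hjl, map_add]; ring
  by_cases hm : m i + m k = 0
  · exfalso
    have s : C (m j) * ξ j + C (m l) * ξ l = - (C (m i) * ξ i + C (m k) * ξ k) := by
      linear_combination H.sum i j k l D
    rw [s, res_neg ((hl _).add (hl _)), hr, hm, map_zero, zero_mul, neg_zero] at hr'
    have : m j + m l ≠ 0 := by
      intro h; apply H.hM i j k l D; linear_combination h + hm
    exact mul_ne_zero (P.φ_ne this) h0' hr'.symm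
  · intro hμ
    have hne : P.res (C (m i) * ξ i + C (m k) * ξ k) ≠ 0 := by
      rw [hr]; exact mul_ne_zero (P.φ_ne hm) h0
    have hx : C (m i) * ξ i + C (m k) * ξ k ≠ 0 := by
      intro h; apply hne; rw [h]; exact res_eq_zero_of_lt lt_zero
    have h6 : 0 ≤ P.s (C (m i) * ξ i + C (m k) * ξ k) := by
      by_contra hlt
      exact hne (res_eq_zero_of_lt (lt_s (not_le.1 hlt)))
    have h7 := (key _ _ D.ik h1).sub (key _ _ D.jl h2)
    rw [← e] at h7
    have h7 := h7 (mul_ne_zero hx hμ)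
    rw [P.s_mul _ _ hx hμ] at h7
    grind

/-- If `i` is infinitely far from two bodies and `l` from some body, then by `res_of_big` the
residues of `ξ` take at most two values; bodies with equal residues are not infinitely far from each
other. -/
theorem claim1_path (hle : ∀ p, P.le (ξ p) 0) (D : D4 i j k l) (hij : 0 < P.s (ρ i j))
    (hik : 0 < P.s (ρ i k)) (hl : ∃ p, l ≠ p ∧ 0 < P.s (ρ l p)) : P.le μ 0 := by
  have e1 := H.res_of_big P D.ij hij (hle _) (hle _)
  have e2 := H.res_of_big P D.ik hik (hle _) (hle _)
  have hcne : - P.φ c ≠ 0 := neg_ne_zero.2 (P.φ_ne H.hc)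
  have hi : P.res (ξ i) ≠ 0 := by intro h; rw [h, zero_mul] at e1; exact hcne e1.symm
  have hj : P.res (ξ j) ≠ 0 := by intro h; rw [h, mul_zero] at e1; exact hcne e1.symm
  have hjk : P.res (ξ j) = P.res (ξ k) := mul_left_cancel₀ hi (e1.trans e2.symm)
  have hl' : P.res (ξ l) = P.res (ξ i) ∨ P.res (ξ l) = P.res (ξ j) := by
    obtain ⟨p, hp, hb⟩ := hl
    have e3 := H.res_of_big P hp hb (hle _) (hle _)
    rcases D.cases p with rfl | rfl | rfl | rfl
    · right; apply mul_right_cancel₀ hi; rw [e3, mul_comm, e1]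
    · left; apply mul_right_cancel₀ hj; rw [e3, e1]
    · left; apply mul_right_cancel₀ hj; nth_rewrite 1 [hjk]; rw [e3, e1]
    · exact absurd rfl hp
  by_cases hab : P.res (ξ i) = P.res (ξ j)
  · exfalso
    have hli : P.res (ξ l) = P.res (ξ i) := by rcases hl' with h | h <;> simp [h, hab]
    have s := congrArg P.res (H.sum i j k l D)
    have hlm : ∀ p, P.le (C (m p) * ξ p) 0 := fun p => (hle p).real_mul (m p)
    rw [res_add (((hlm _).add (hlm _)).add (hlm _)) (hlm _), res_add ((hlm _).add (hlm _)) (hlm _),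
      res_add (hlm _) (hlm _), res_eq_zero_of_lt lt_zero] at s
    simp only [res_real_mul (hle _)] at s
    rw [hli, ← hjk, ← hab] at s
    apply mul_ne_zero (P.φ_ne (H.hM i j k l D)) hi
    simp only [map_add]; linear_combination s
  · have nb : ∀ p q, p ≠ q → P.res (ξ p) = P.res (ξ q) →
        (P.res (ξ p) = P.res (ξ i) ∨ P.res (ξ p) = P.res (ξ j)) → ¬ 0 < P.s (ρ p q) := by
      intro p q hpq hr hr2 hb
      have e3 := H.res_of_big P hpq hb (hle _) (hle _)
      rw [← hr] at e3
      rcases hr2 with h | h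
      · rw [h, ← e1] at e3; exact hab (mul_left_cancel₀ hi e3)
      · rw [h, ← e1] at e3; exact hab (mul_right_cancel₀ hj e3).symm
    rcases hl' with h | h
    · exact H.claim1_pairs P hle D.c hi hj h.symm hjk
        (nb _ _ D.il h.symm (Or.inl rfl)) (nb _ _ D.jk hjk (Or.inr rfl))
    · exact H.claim1_single P hle D hi (nb _ _ D.jk hjk (Or.inr rfl))
        (nb _ _ D.jl h.symm (Or.inr rfl)) (nb _ _ D.kl (hjk.symm.trans h.symm) (Or.inr hjk.symm))

set_option maxHeartbeats 1000000 in
/-- Two pairs of mutually infinite distances, all other distances being finite: comparing the two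
infinite distances `ρ i j` and `ρ k l`, the residue `γ` of their ratio would satisfy both
`γ ^ 2 = -1` and `γ ^ 3 = 1`. -/
theorem claim1_matching (hle : ∀ p, P.le (ξ p) 0) (D : D4 i j k l) (hij : 0 < P.s (ρ i j))
    (hkl : 0 < P.s (ρ k l)) (hik : ¬ 0 < P.s (ρ i k)) (hil : ¬ 0 < P.s (ρ i l))
    (hjk : ¬ 0 < P.s (ρ j k)) (hjl : ¬ 0 < P.s (ρ j l)) : P.le μ 0 := by
  by_contra hμ
  obtain ⟨hμ0, hμ⟩ := Place.not_le hμ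
  have rij := H.ρ_ne D.ij
  have rkl := H.ρ_ne D.kl
  have size0 : ∀ p q, p ≠ q → 0 < P.s (ρ p q) → ξ p ≠ 0 ∧ P.s (ξ p) = 0 := by
    intro p q hpq hb
    obtain ⟨h1, h2, h3⟩ := H.of_big P hpq hb
    refine ⟨h1, ?_⟩
    have := hle p h1
    have := hle q h2
    grind
  obtain ⟨xi0, si⟩ := size0 i j D.ij hij
  obtain ⟨xj0, sj⟩ := size0 j i D.ij.symm (by rwa [H.symm])
  obtain ⟨xk0, sk⟩ := size0 k l D.kl hkl
  obtain ⟨xl0, sl⟩ := size0 l k D.kl.symm (by rwa [H.symm])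
  have hf : ∀ p q, p ≠ q → ¬ 0 < P.s (ρ p q) → P.le (C (m q) * ξ q * ρ p q ^ 2) 0 :=
    fun p q hpq hb => by
    simpa using ((hle q).real_mul (m q)).mul (le_sq hb)
  have tik := hf _ _ D.ik hik
  have til := hf _ _ D.il hil
  have tjk := hf _ _ D.jk hjk
  have tjl := hf _ _ D.jl hjl
  have tki := hf _ _ D.ik.symm (by rwa [H.symm])
  have tli := hf _ _ D.il.symm (by rwa [H.symm])
  have tkj := hf _ _ D.jk.symm (by rwa [H.symm])
  have tlj := hf _ _ D.jl.symm (by rwa [H.symm])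
  have Fi := H.F i j k l D
  have Fj := H.F j i k l D.a
  have Fk := H.F k l i j (by unfold D4 at *; tauto)
  have Fl := H.F l k i j (by unfold D4 at *; tauto)
  rw [H.symm j i] at Fj
  rw [H.symm l k] at Fl
  -- the infinite distances have the size of a square root of `μ`
  have size : ∀ (a x y z : L) (r : ℝ), r ≠ 0 → a ≠ 0 → x ≠ 0 → P.s a = 0 → P.le y 0 → P.le z 0 →
      C r * a * x ^ 2 + y + z = μ → 2 • P.s x = P.s μ := by
    intro a x y z r hr ha hx hsa hy hz he
    have h1 : μ + -(y + z) = C r * a * x ^ 2 := by linear_combination -he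
    have h2 := (dom hμ0 ((hy.add hz).neg.trans_lt hμ)).2
    have hr' : C r ≠ 0 := by simpa using hr
    rw [h1, P.s_mul _ _ (mul_ne_zero hr' ha) (pow_ne_zero 2 hx), P.s_mul _ _ hr' ha, hsa,
      P.s_real r hr, s_pow hx] at h2
    grind
  have s1 := size _ _ _ _ _ (H.hm j) xj0 rij sj tik til Fi
  have s2 := size _ _ _ _ _ (H.hm l) xl0 rkl sl tki tkj Fk
  obtain ⟨q, hq⟩ : ∃ q, q = P.s (ρ i j) := ⟨_, rfl⟩
  have hqk : P.s (ρ k l) = q := by grind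
  -- `u` and `u'` are the differences of the weights
  have diff : ∀ (u x a b : L), x ≠ 0 → P.s x = q → P.le a 0 → P.le b 0 → u * x ^ 2 = a + b →
      P.le u (-(2 • q)) := by
    intro u x a b hx hsx ha hb he hu
    have h1 := (ha.add hb)
    rw [← he] at h1
    have h2 := h1 (mul_ne_zero hu (pow_ne_zero 2 hx))
    rw [P.s_mul _ _ hu (pow_ne_zero 2 hx), s_pow hx] at h2
    grind
  obtain ⟨u, hu⟩ : ∃ u, u = C (m j) * ξ j - C (m i) * ξ i := ⟨_, rfl⟩
  obtain ⟨u', hu'⟩ : ∃ u', u' = C (m l) * ξ l - C (m k) * ξ k := ⟨_, rfl⟩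
  have du : P.le u (-(2 • q)) := diff u (ρ i j) _ _ rij hq.symm (tjk.sub tik) (tjl.sub til)
    (by rw [hu]; linear_combination Fi - Fj)
  have du' : P.le u' (-(2 • q)) := diff u' (ρ k l) _ _ rkl hqk (tli.sub tki) (tlj.sub tkj)
    (by rw [hu']; linear_combination Fk - Fl)
  have hq0 : 0 < q := by grind
  have lm : ∀ p, P.le (C (m p) * ξ p) 0 := fun p => (hle p).real_mul (m p)
  have ru : P.res (C (m j) * ξ j) = P.res (C (m i) * ξ i) :=
    res_eq (lm _) (lm _) (by rw [← hu]; exact du.trans_lt (by grind))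
  have ru' : P.res (C (m l) * ξ l) = P.res (C (m k) * ξ k) :=
    res_eq (lm _) (lm _) (by rw [← hu']; exact du'.trans_lt (by grind))
  have K2 := P.two_ne
  have sm := H.sum i j k l D
  have rs : P.res (C (m l) * ξ l) = - P.res (C (m j) * ξ j) := by
    have s := congrArg P.res sm
    rw [res_add (((lm _).add (lm _)).add (lm _)) (lm _), res_add ((lm _).add (lm _)) (lm _),
      res_add (lm _) (lm _), res_eq_zero_of_lt lt_zero, ru, ru'] at s
    rw [ru, ru']
    apply mul_left_cancel₀ K2; linear_combination s
  have rj0 : P.res (C (m j) * ξ j) ≠ 0 := by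
    rw [res_real_mul (hle _)]
    exact mul_ne_zero (P.φ_ne (H.hm j)) (res_ne_zero xj0 sj)
  obtain ⟨g, hg⟩ : ∃ g, g = ρ i j / ρ k l := ⟨_, rfl⟩
  have sg : P.s g = 0 := by rw [hg, s_div rij rkl, hqk, hq, sub_self]
  have lg : P.le g 0 := le_s sg.le
  have g2 : P.res g ^ 2 = -1 := by
    have h1 : P.lt (C (m j) * ξ j * g ^ 2 - C (m l) * ξ l) 0 := by
      have e : (C (m j) * ξ j * g ^ 2 - C (m l) * ξ l) * ρ k l ^ 2 =
          (C (m i) * ξ i * ρ k i ^ 2 - C (m k) * ξ k * ρ i k ^ 2) +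
          (C (m j) * ξ j * ρ k j ^ 2 - C (m l) * ξ l * ρ i l ^ 2) := by
        rw [hg]; field_simp; linear_combination Fi - Fk
      exact (diff _ _ _ _ rkl hqk (tki.sub tik) (tkj.sub til) e).trans_lt (by grind)
    have lg2 : P.le (C (m j) * ξ j * g ^ 2) 0 := by simpa using (lm j).mul (lg.pow 2)
    have h2 := res_eq lg2 (lm l) h1
    rw [res_mul (lm _) (lg.pow 2), res_pow lg, rs] at h2
    apply mul_left_cancel₀ rj0; rw [h2]; ring
  have se1 := H.s_ε P D.ij
  have se2 := H.s_ε P D.kl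
  have main : C (4 * (m i * m j)) * (C c + ξ i * ξ j) - C (4 * (m k * m l)) * (C c + ξ k * ξ l)
      - C (4 * (c * (m i * m j - m k * m l))) = u' * u' - u * u := by
    simp only [map_mul, map_sub, map_ofNat]
    rw [hu, hu']
    linear_combination (C (m i) * ξ i + C (m j) * ξ j - C (m k) * ξ k - C (m l) * ξ l) * sm
  have uu : P.le (u' * u' - u * u) (-(4 • q)) :=
    ((du'.mul du').mono (by grind)).sub ((du.mul du).mono (by grind))
  have mm : m i * m j = m k * m l := by
    by_contra hne
    have e : C (4 * (c * (m i * m j - m k * m l))) =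
      C (4 * (m i * m j)) * (C c + ξ i * ξ j) - C (4 * (m k * m l)) * (C c + ξ k * ξ l)
        - (u' * u' - u * u) := by linear_combination -main
    have l1 : P.lt (C (4 * (c * (m i * m j - m k * m l)))) 0 := by
      rw [e]
      exact (((H.lt_of_big P D.ij hij).real_mul _).sub ((H.lt_of_big P D.kl hkl).real_mul _)).sub
        (uu.trans_lt (by grind))
    have hne' : 4 * (c * (m i * m j - m k * m l)) ≠ 0 :=
      mul_ne_zero (by norm_num) (mul_ne_zero H.hc (sub_ne_zero.2 hne))
    have := l1 (cst_ne L hne')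
    rw [P.s_real _ hne'] at this
    exact lt_irrefl _ this
  have g3 : P.res g ^ 3 = 1 := by
    have l1 : P.le (C (4 * (m i * m j)) * ((C c + ξ i * ξ j) - (C c + ξ k * ξ l))) (-(4 • q)) := by
      convert uu using 1
      rw [← main, mm]; simp only [map_mul, sub_self, map_zero, mul_zero]; ring
    have l2 := (l1.of_real_mul
      (mul_ne_zero (by norm_num) (mul_ne_zero (H.hm i) (H.hm j)))).mul
      (le_s (P := P) (x := ρ i j ^ 3) (g := 3 • q) (by rw [s_pow rij, hq]))
    have e : ((C c + ξ i * ξ j) - (C c + ξ k * ξ l)) * ρ i j ^ 3 = 1 - g ^ 3 := by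
      have e1 := H.eqn i j D.ij
      have e2 := H.eqn k l D.kl
      have : C c + ξ k * ξ l = (ρ k l ^ 3)⁻¹ := eq_inv_of_mul_eq_one_left e2
      rw [sub_mul, e1, this, hg]; field_simp
    rw [e] at l2
    have := res_eq le_one (lg.pow 3) (l2.trans_lt (by grind))
    rw [res_pow lg, res_one] at this
    exact this.symm
  have h1 : P.res g = -1 := by linear_combination P.res g * g2 - g3
  rw [h1] at g2
  apply K2; linear_combination g2

/-- When every `ξ` is finite, so is `μ`. -/
theorem claim1 (hle : ∀ p, P.le (ξ p) 0) : P.le μ 0 := by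
  by_contra hμ
  have nb := H.exists_big P hle hμ
  obtain ⟨j, h0, hb⟩ := nb 0
  obtain ⟨k, l, D⟩ := D4.complete2 h0
  have hb' := hb
  rw [H.symm] at hb'
  by_cases h1 : 0 < P.s (ρ 0 k)
  · exact hμ (H.claim1_path P hle D hb h1 (nb l))
  by_cases h2 : 0 < P.s (ρ 0 l)
  · exact hμ (H.claim1_path P hle D.c hb h2 (nb k))
  by_cases h3 : 0 < P.s (ρ j k)
  · exact hμ (H.claim1_path P hle D.a hb' h3 (nb l))
  by_cases h4 : 0 < P.s (ρ j l)
  · exact hμ (H.claim1_path P hle D.a.c hb' h4 (nb k))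
  obtain ⟨p, hkp, hp⟩ := nb k
  rcases D.cases p with rfl | rfl | rfl | rfl
  · rw [H.symm] at hp; exact h1 hp
  · rw [H.symm] at hp; exact h3 hp
  · exact hkp rfl
  · exact hμ (H.claim1_matching P hle D hb hp h1 h2 h3 h4)

end CoreI
end CoreI

/-! ### Nonzero total mass, not collinear: `μ` is infinitesimal when some `ξ` is infinite -/

section Omega

variable {L : Type*} [Field L] [Algebra ℝ L] {G : Type*} [AddCommGroup G] [LinearOrder G]
    [IsOrderedAddMonoid G] {K : Type*} [Field K] (P : Place L G K)

/-- If `p + q + r = 0` then `p ^ 3 + q ^ 3 + r ^ 3 = 3 * p * q * r`; cubing eliminates the cube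
roots of unity `e`, `f` and leaves an equation between the real masses. -/
theorem Place.omega_sum_ne {a b c : ℝ} (ha : a ≠ 0) (hb : b ≠ 0) (hc : c ≠ 0) (hs : a + b + c = 0)
    {e f : K} (he : e ^ 3 = 1) (hf : f ^ 3 = 1) :
    P.φ (a * b) + P.φ (a * c) * e + P.φ (b * c) * f ≠ 0 := by
  intro h
  obtain ⟨p, hp⟩ : ∃ p, p = a * b := ⟨_, rfl⟩
  obtain ⟨q, hq⟩ : ∃ q, q = a * c := ⟨_, rfl⟩
  obtain ⟨r, hr⟩ : ∃ r, r = b * c := ⟨_, rfl⟩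
  rw [← hp, ← hq, ← hr] at h
  have h1 : P.φ p ^ 3 + P.φ q ^ 3 + P.φ r ^ 3 = 3 * (P.φ p * P.φ q * P.φ r) * (e * f) := by
    have : P.φ p ^ 3 + P.φ q ^ 3 * e ^ 3 + P.φ r ^ 3 * f ^ 3 =
        3 * (P.φ p * P.φ q * P.φ r) * (e * f) := by
      have h' : P.φ p = -(P.φ q * e + P.φ r * f) := by linear_combination h
      rw [h']; ring
    rwa [he, hf, mul_one, mul_one] at this
  have h2 : P.φ ((p ^ 3 + q ^ 3 + r ^ 3) ^ 3) = P.φ ((3 * (p * q * r)) ^ 3) := by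
    simp only [map_pow, map_add, map_mul, map_ofNat]
    rw [h1]
    linear_combination 27 * (P.φ p * P.φ q * P.φ r) ^ 3 * (he * f ^ 3 + hf)
  have h3 := P.φ.injective h2
  have h4 : p ^ 3 + q ^ 3 + r ^ 3 = 3 * (p * q * r) := (Odd.strictMono_pow (by decide : Odd 3)).injective h3
  have h5 : (p + q + r) * ((p - q) ^ 2 + (q - r) ^ 2 + (p - r) ^ 2) = 0 := by
    linear_combination 2 * h4
  rcases mul_eq_zero.1 h5 with h6 | h6
  · have : a ^ 2 + b ^ 2 + c ^ 2 = 0 := by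
      rw [hp, hq, hr] at h6; linear_combination (a + b + c) * hs - 2 * h6
    have := pow_pos (abs_pos.2 ha) 2
    rw [sq_abs] at this
    nlinarith [sq_nonneg b, sq_nonneg c]
  · have e1 : p - q = 0 := by
      apply pow_eq_zero_iff (two_ne_zero) |>.1
      nlinarith [sq_nonneg (p - q), sq_nonneg (q - r), sq_nonneg (p - r)]
    have e2 : q - r = 0 := by
      apply pow_eq_zero_iff (two_ne_zero) |>.1
      nlinarith [sq_nonneg (p - q), sq_nonneg (q - r), sq_nonneg (p - r)]
    have e3 : b = c := by
      apply mul_left_cancel₀ ha; rw [← hp, ← hq]; linear_combination e1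
    have e4 : a = b := by
      apply mul_right_cancel₀ hc; rw [← hq, ← hr]; linear_combination e2
    apply ha; subst e3 e4; linarith

end Omega

section CoreI

variable {L : Type*} [Field L] [Algebra ℝ L] {G : Type*} [AddCommGroup G] [LinearOrder G]
    [IsOrderedAddMonoid G] {K : Type*} [Field K]

local notation "C" => algebraMap ℝ L

theorem Place.s_term (P : Place L G K) {r : ℝ} {x y : L} (hr : r ≠ 0) (hx : x ≠ 0) (hy : y ≠ 0) :
    P.s (C r * x * y ^ 2) = P.s x + 2 • P.s y := by
  rw [mul_assoc, s_real_mul hr (mul_ne_zero hx (pow_ne_zero 2 hy)),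
    P.s_mul _ _ hx (pow_ne_zero 2 hy), s_pow hy]

theorem Place.s_edge (P : Place L G K) {r t : ℝ} {x y z : L} (hr : r ≠ 0) (ht : t ≠ 0)
    (hx : x ≠ 0) (hz : z ≠ 0) (hy : y ≠ 0) :
    P.s (C r * x * (C t * z) * y ^ 2) = P.s x + P.s z + 2 • P.s y := by
  rw [P.s_mul _ _ (mul_ne_zero (mul_ne_zero (cst_ne L hr) hx) (mul_ne_zero (cst_ne L ht) hz))
    (pow_ne_zero 2 hy), P.s_mul _ _ (mul_ne_zero (cst_ne L hr) hx) (mul_ne_zero (cst_ne L ht) hz),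
    s_real_mul hr hx, s_real_mul ht hz, s_pow hy]

theorem Place.exists_max (P : Place L G K) {ξ : Fin 4 → L} (h : ∃ p, ¬ P.le (ξ p) 0) :
    ∃ i, ξ i ≠ 0 ∧ 0 < P.s (ξ i) ∧ ∀ p, P.le (ξ p) (P.s (ξ i)) := by
  classical
  obtain ⟨p, hp⟩ := h
  obtain ⟨hp0, hp⟩ := Place.not_le hp
  have hne : (Finset.univ.filter fun q => ξ q ≠ 0).Nonempty := ⟨p, by simp [hp0]⟩
  obtain ⟨i, hi, hmax⟩ := Finset.exists_max_image _ (fun q => P.s (ξ q)) hne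
  refine ⟨i, by simpa using hi, hp.trans_le (hmax p (by simp [hp0])), fun q hq => hmax q (by simp [hq])⟩

namespace CoreI
open Place

variable {m : Fin 4 → ℝ} {c : ℝ} {ξ : Fin 4 → L} {ρ : Fin 4 → Fin 4 → L} {μ : L}
  (H : CoreI m c ξ ρ μ) (P : Place L G K)
  {i j k l : Fin 4} {Z : G}
include H

/-- When `ξ i` is infinite and of maximal size, a term of the equation `F i` that is not
infinitesimal can only come from a body `j` with `ξ j` of inverse size, hence with `ξ i * ξ j` of
size `0`. -/
theorem lemF (hip : i ≠ j) (hi : ξ i ≠ 0) (hZ : 0 < P.s (ξ i)) (hj : P.le (ξ j) (P.s (ξ i)))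
    (hn : ¬ P.lt (C (m j) * ξ j * ρ i j ^ 2) 0) : ξ j ≠ 0 ∧ P.s (ξ j) = - P.s (ξ i) := by
  obtain ⟨h0, h1⟩ := Place.not_lt hn
  have hj0 := right_ne_zero_of_mul (left_ne_zero_of_mul h0)
  rw [P.s_term (H.hm j) hj0 (H.ρ_ne hip)] at h1
  have hj := hj hj0
  refine ⟨hj0, ?_⟩
  rcases lt_trichotomy (P.s (ξ i) + P.s (ξ j)) 0 with h2 | h2 | h2
  · have := H.s_ρ_of_lt P hip (lt_s (by rw [P.s_mul _ _ hi hj0]; exact h2))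
    grind
  · grind
  · have := H.s_ρ_of_pos P hip hi hj0 h2
    grind

/-- When all of `ξ p`, `ξ q`, `ξ p'`, `ξ q'` have the same infinite size `Z = s (ξ i)`, the
distances `ρ p q` and `ρ p' q'` have the same size, and the residue of their ratio is determined
up to a cube root of unity. -/
theorem res_ratio {p q p' q' : Fin 4} (hi : ξ i ≠ 0) (hZ : 0 < P.s (ξ i))
    (hpq : p ≠ q) (hpq' : p' ≠ q') (hp : ξ p ≠ 0 ∧ P.s (ξ p) = P.s (ξ i))
    (hq : ξ q ≠ 0 ∧ P.s (ξ q) = P.s (ξ i)) (hp' : ξ p' ≠ 0 ∧ P.s (ξ p') = P.s (ξ i))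
    (hq' : ξ q' ≠ 0 ∧ P.s (ξ q') = P.s (ξ i)) :
    P.s (ρ p q / ρ p' q') = 0 ∧
    P.res (ρ p q / ρ p' q') ^ 3 * (P.res (ξ p / ξ i) * P.res (ξ q / ξ i)) =
      P.res (ξ p' / ξ i) * P.res (ξ q' / ξ i) := by
  have r0 := H.ρ_ne hpq
  have r0' := H.ρ_ne hpq'
  have s1 := H.s_ρ_of_pos P hpq hp.1 hq.1 (by grind)
  have s2 := H.s_ρ_of_pos P hpq' hp'.1 hq'.1 (by grind)
  have s0 : P.s (ρ p q / ρ p' q') = 0 := by rw [s_div r0 r0']; grind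
  refine ⟨s0, ?_⟩
  have hb : ∀ p, (ξ p ≠ 0 ∧ P.s (ξ p) = P.s (ξ i)) → P.le (ξ p / ξ i) 0 := fun p hp =>
    le_s (by rw [s_div hp.1 hi, hp.2, sub_self])
  have lc : P.lt (C c * (1 / ξ i ^ 2)) 0 := by
    apply lt.real_mul
    apply lt_s
    rw [s_div one_ne_zero (pow_ne_zero 2 hi), s_one, s_pow hi]
    grind
  have lb : ∀ p q, (ξ p ≠ 0 ∧ P.s (ξ p) = P.s (ξ i)) → (ξ q ≠ 0 ∧ P.s (ξ q) = P.s (ξ i)) →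
      P.le (ξ p / ξ i * (ξ q / ξ i)) 0 := fun p q h1 h2 => by
    simpa using (hb p h1).mul (hb q h2)
  have hε : ∀ p q, (ξ p ≠ 0 ∧ P.s (ξ p) = P.s (ξ i)) → (ξ q ≠ 0 ∧ P.s (ξ q) = P.s (ξ i)) →
      P.le ((C c + ξ p * ξ q) / ξ i ^ 2) 0 ∧
      P.res ((C c + ξ p * ξ q) / ξ i ^ 2) = P.res (ξ p / ξ i) * P.res (ξ q / ξ i) := by
    intro p q h1 h2
    have e : (C c + ξ p * ξ q) / ξ i ^ 2 = C c * (1 / ξ i ^ 2) + ξ p / ξ i * (ξ q / ξ i) := by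
      field_simp
    rw [e]
    refine ⟨lc.le.add (lb p q h1 h2), ?_⟩
    rw [res_add lc.le (lb p q h1 h2), res_eq_zero_of_lt lc, res_mul (hb p h1) (hb q h2), zero_add]
  have e1 := H.eqn p q hpq
  have e2 := H.eqn p' q' hpq'
  have key : (ρ p q / ρ p' q') ^ 3 * ((C c + ξ p * ξ q) / ξ i ^ 2) =
      (C c + ξ p' * ξ q') / ξ i ^ 2 := by
    field_simp
    linear_combination e1 - e2
  have hl : P.le (ρ p q / ρ p' q') 0 := le_s s0.le
  have := congrArg P.res key
  rw [res_mul (hl.pow 3) (hε p q hp hq).1, res_pow hl, (hε p q hp hq).2,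
    (hε p' q' hp' hq').2] at this
  exact this

/-- Three bodies whose `ξ` are infinite and asymptotically equal and whose masses sum to zero. -/
theorem tri (hij : i ≠ j) (hil : i ≠ l) (hjl : j ≠ l) (hi : ξ i ≠ 0) (hZ : 0 < P.s (ξ i))
    (hj : P.lt (ξ j - ξ i) (P.s (ξ i))) (hl : P.lt (ξ l - ξ i) (P.s (ξ i)))
    (hm : m i + m j + m l = 0) :
    C (m i) * ξ i * (C (m j) * ξ j) * ρ i j ^ 2 + C (m i) * ξ i * (C (m l) * ξ l) * ρ i l ^ 2 +
      C (m j) * ξ j * (C (m l) * ξ l) * ρ j l ^ 2 ≠ 0 ∧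
    3 • P.s (C (m i) * ξ i * (C (m j) * ξ j) * ρ i j ^ 2 +
      C (m i) * ξ i * (C (m l) * ξ l) * ρ i l ^ 2 +
      C (m j) * ξ j * (C (m l) * ξ l) * ρ j l ^ 2) = 2 • P.s (ξ i) := by
  obtain ⟨N, hN⟩ : ∃ N, N = ξ i ^ 2 * ρ i j ^ 2 := ⟨_, rfl⟩
  have rij := H.ρ_ne hij
  have N0 : N ≠ 0 := by rw [hN]; exact mul_ne_zero (pow_ne_zero 2 hi) (pow_ne_zero 2 rij)
  have near : ∀ p, P.lt (ξ p - ξ i) (P.s (ξ i)) → (ξ p ≠ 0 ∧ P.s (ξ p) = P.s (ξ i)) ∧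
      P.le (ξ p / ξ i) 0 ∧ P.res (ξ p / ξ i) = 1 := by
    intro p hp
    have h1 := dom hi hp
    rw [add_sub_cancel] at h1
    have hle : P.le (ξ p / ξ i) 0 := le_s (by rw [s_div h1.1 hi, h1.2, sub_self])
    refine ⟨h1, hle, ?_⟩
    rw [← res_one (P := P)]
    refine res_eq hle le_one ?_
    have e : ξ p / ξ i - 1 = (ξ p - ξ i) * (ξ i)⁻¹ := by field_simp
    rw [e]
    have := hp.mul_le (le_s (P := P) (x := (ξ i)⁻¹) (g := - P.s (ξ i)) (by rw [s_inv hi]))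
    rwa [add_neg_cancel] at this
  obtain ⟨si, li, ri⟩ := near i (by rw [sub_self]; exact lt_zero)
  obtain ⟨sj, lj, rj⟩ := near j hj
  obtain ⟨sl, ll, rl⟩ := near l hl
  obtain ⟨s1, t1⟩ := H.res_ratio P hi hZ hil hij si sl si sj
  obtain ⟨s2, t2⟩ := H.res_ratio P hi hZ hjl hij sj sl si sj
  rw [ri, rj, rl, mul_one, mul_one] at t1
  rw [ri, rj, rl, mul_one, mul_one] at t2
  obtain ⟨e, he⟩ : ∃ e, e = ρ i l / ρ i j := ⟨_, rfl⟩
  obtain ⟨f, hf⟩ : ∃ f, f = ρ j l / ρ i j := ⟨_, rfl⟩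
  rw [← he] at s1 t1
  rw [← hf] at s2 t2
  have le' : P.le e 0 := le_s s1.le
  have lf' : P.le f 0 := le_s s2.le
  obtain ⟨Y, hY⟩ : ∃ Y, Y = C (m i) * ξ i * (C (m j) * ξ j) * ρ i j ^ 2 +
      C (m i) * ξ i * (C (m l) * ξ l) * ρ i l ^ 2 +
      C (m j) * ξ j * (C (m l) * ξ l) * ρ j l ^ 2 := ⟨_, rfl⟩
  rw [← hY]
  obtain ⟨Q, hQ⟩ : ∃ Q, Q = C (m i * m j) * (ξ j / ξ i) + C (m i * m l) * (ξ l / ξ i * e ^ 2) +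
    C (m j * m l) * (ξ j / ξ i * (ξ l / ξ i) * f ^ 2) := ⟨_, rfl⟩
  have hYQ : Y = N * Q := by
    rw [hY, hQ, hN, he, hf]; simp only [map_mul]; field_simp
  have l2 : P.le (ξ l / ξ i * e ^ 2) 0 := by simpa using ll.mul (le'.pow 2)
  have l3' : P.le (ξ j / ξ i * (ξ l / ξ i)) 0 := by simpa using lj.mul ll
  have l3 : P.le (ξ j / ξ i * (ξ l / ξ i) * f ^ 2) 0 := by simpa using l3'.mul (lf'.pow 2)
  have lQ : P.le Q 0 := by
    rw [hQ]; exact ((lj.real_mul _).add (l2.real_mul _)).add (l3.real_mul _)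
  have rQ : P.res Q ≠ 0 := by
    rw [hQ, res_add ((lj.real_mul _).add (l2.real_mul _)) (l3.real_mul _),
      res_add (lj.real_mul _) (l2.real_mul _), res_real_mul lj, res_real_mul l2, res_real_mul l3,
      res_mul ll (le'.pow 2), res_mul l3' (lf'.pow 2), res_mul lj ll, res_pow le', res_pow lf',
      rj, rl, mul_one, one_mul, one_mul, one_mul]
    exact P.omega_sum_ne (H.hm i) (H.hm j) (H.hm l) hm (by rw [← pow_mul, mul_comm, pow_mul, t1, one_pow])
      (by rw [← pow_mul, mul_comm, pow_mul, t2, one_pow])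
  have Q0 : Q ≠ 0 := by intro h; rw [h] at rQ; exact rQ (res_eq_zero_of_lt lt_zero)
  have sQ : P.s Q = 0 := by
    refine le_antisymm (lQ Q0) (_root_.not_lt.1 fun h => rQ (res_eq_zero_of_lt (lt_s h)))
  refine ⟨by rw [hYQ]; exact mul_ne_zero N0 Q0, ?_⟩
  rw [hYQ, P.s_mul _ _ N0 Q0, sQ, hN, P.s_mul _ _ (pow_ne_zero 2 hi) (pow_ne_zero 2 rij),
    s_pow hi, s_pow rij]
  have := H.s_ρ_of_pos P hij hi sj.1 (by grind)
  grind

set_option maxHeartbeats 1000000 in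
/-- Two bodies `i`, `j` with `ξ` of maximal infinite size, and a body `k` with `ξ k` of inverse size
whose term in the equation `F i` is at least as large as a `μ` that is not infinitesimal. -/
theorem claim2_two (D : D4 i j k l) (hi : ξ i ≠ 0) (hZ : 0 < P.s (ξ i)) (hj : ξ j ≠ 0)
    (hjs : P.s (ξ j) = P.s (ξ i)) (hl : P.lt (ξ l) (P.s (ξ i))) (hk : ξ k ≠ 0)
    (hks : P.s (ξ k) = - P.s (ξ i)) (hμ : 0 ≤ P.s μ)
    (hik : P.s μ ≤ P.s (C (m k) * ξ k * ρ i k ^ 2)) : False := by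
  have rik := H.ρ_ne D.ik
  have rjk := H.ρ_ne D.jk
  have rij := H.ρ_ne D.ij
  obtain ⟨Z, hZe⟩ : ∃ Z, Z = P.s (ξ i) := ⟨_, rfl⟩
  obtain ⟨q, hq⟩ : ∃ q, q = P.s (ρ i k) := ⟨_, rfl⟩
  rw [P.s_term (H.hm k) hk rik, ← hq] at hik
  rw [← hZe] at hZ hjs hl hks
  -- the term of `F k` coming from `i` can only be compensated by the one coming from `j`
  have hlk : ∀ q, P.lt (ξ q) Z → P.lt (ξ k * ξ q) 0 := fun q hq => by
    have := (le_s (P := P) hks.le).mul_lt hq; rwa [neg_add_cancel] at this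
  have skl := H.s_ρ_of_lt P D.kl (hlk l hl)
  have hjk : P.s (ρ j k) = q := by
    have Fk := H.F k i j l D.b.a
    rw [H.symm k i, H.symm k j] at Fk
    have t1 : P.lt (C (m l) * ξ l * ρ k l ^ 2) (Z + 2 • q) := by
      have := (hl.real_mul (m l)).mul_le ((le_s (P := P) skl.le).pow 2)
      exact this.mono (by grind)
    have t2 : P.lt μ (Z + 2 • q) := lt_s (by grind)
    have h0 : C (m i) * ξ i * ρ i k ^ 2 ≠ 0 :=
      mul_ne_zero (mul_ne_zero (cst_ne L (H.hm i)) hi) (pow_ne_zero 2 rik)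
    have s0 := P.s_term (H.hm i) hi rik
    rw [← hZe, ← hq] at s0
    have h1 := (dom (P := P) h0 (y := C (m l) * ξ l * ρ k l ^ 2 - μ)
      (by rw [s0]; exact t1.sub t2)).2
    have e : C (m i) * ξ i * ρ i k ^ 2 + (C (m l) * ξ l * ρ k l ^ 2 - μ) =
        - (C (m j) * ξ j * ρ j k ^ 2) := by linear_combination Fk
    rw [e, s_neg, s0, P.s_term (H.hm j) hj rjk, hjs] at h1
    grind
  have hdiff : P.le (ξ i - ξ j) (Z - 3 • q) := by
    have e : ξ i - ξ j = ((C c + ξ i * ξ k) - (C c + ξ j * ξ k)) * (ξ k)⁻¹ := by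
      field_simp; ring
    rw [e]
    have e1 := H.s_ε P D.ik
    have e2 := H.s_ε P D.jk
    have l1 : P.le (C c + ξ i * ξ k) (-(3 • q)) := le_s (by grind)
    have l2 : P.le (C c + ξ j * ξ k) (-(3 • q)) := le_s (by grind)
    have l3 : P.le (ξ k)⁻¹ Z := le_s (by rw [s_inv hk]; grind)
    exact ((l1.sub l2).mul l3).mono (by grind)
  have hmm : m i + m j = 0 := by
    by_contra hne
    have e : C (m i + m j) * ξ i = C (m j) * (ξ i - ξ j) - C (m k) * ξ k - C (m l) * ξ l := by
      rw [map_add]; linear_combination H.sum i j k l D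
    have : P.lt (C (m i + m j) * ξ i) Z := by
      rw [e]
      refine (lt.sub ?_ ?_).sub ?_
      · exact (hdiff.trans_lt (by grind)).real_mul _
      · exact (lt_s (by grind)).real_mul _
      · exact hl.real_mul _
    have := this.of_real_mul hne hi
    grind
  have S := H.S2 D.b
  have e : C (m i) * ξ i + C (m j) * ξ j = C (m i) * (ξ i - ξ j) := by
    have : m j = - m i := by linarith
    rw [this, map_neg]; ring
  rw [e] at S
  have hl1 : P.le (C (m i) * (ξ i - ξ j) * μ) (Z - 3 • q + P.s μ) :=
    (hdiff.real_mul _).mul (le_self μ)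
  rw [S] at hl1
  have h0 : C (m i) * ξ i * (C (m j) * ξ j) * ρ i j ^ 2 ≠ 0 :=
    mul_ne_zero (mul_ne_zero (mul_ne_zero (cst_ne L (H.hm i)) hi)
      (mul_ne_zero (cst_ne L (H.hm j)) hj)) (pow_ne_zero 2 rij)
  have s0 := P.s_edge (H.hm i) (H.hm j) hi hj rij
  have sij := H.s_ρ_of_pos P D.ij hi hj (by grind)
  have hkl : P.lt (C (m k) * ξ k * (C (m l) * ξ l) * ρ k l ^ 2) 0 := by
    have := ((((hlk l hl)).mul_le ((le_s (P := P) skl.le).pow 2)).real_mul (m k)).real_mul (m l)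
    rw [add_zero] at this
    convert this using 1; ring
  have h2 := dom h0 (hkl.mono (h := P.s (C (m i) * ξ i * (C (m j) * ξ j) * ρ i j ^ 2))
    (by rw [s0]; grind)).neg
  rw [← sub_eq_add_neg] at h2
  have h3 := hl1 h2.1
  rw [h2.2, s0] at h3
  grind

set_option maxHeartbeats 1000000 in
/-- Three bodies `i`, `j`, `l` with `ξ` of the same infinite size, and `ξ k` of inverse size. -/
theorem claim2_three (D : D4 i j k l) (hi : ξ i ≠ 0) (hZ : 0 < P.s (ξ i)) (hj : ξ j ≠ 0)
    (hjs : P.s (ξ j) = P.s (ξ i)) (hl : ξ l ≠ 0) (hls : P.s (ξ l) = P.s (ξ i)) (hk : ξ k ≠ 0)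
    (hks : P.s (ξ k) = - P.s (ξ i)) (hμ0 : μ ≠ 0) (hμ : 0 ≤ P.s μ) : False := by
  obtain ⟨Z, hZe⟩ : ∃ Z, Z = P.s (ξ i) := ⟨_, rfl⟩
  rw [← hZe] at hZ hjs hls hks
  -- in the equation `F p` of each body `p ≠ k`, the term coming from `k` dominates
  have key : ∀ p q r, D4 p q k r → ξ p ≠ 0 → P.s (ξ p) = Z → ξ q ≠ 0 → P.s (ξ q) = Z →
      ξ r ≠ 0 → P.s (ξ r) = Z → 2 • P.s (ρ p k) = Z + P.s μ := by
    intro p q r D hp hps hq hqs hr hrs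
    have F := H.F p q k r D
    have sm : ∀ q, p ≠ q → ξ q ≠ 0 → P.s (ξ q) = Z → P.lt (C (m q) * ξ q * ρ p q ^ 2) (P.s μ) := by
      intro q hpq hq hqs
      by_contra hn
      have := H.lemF P hpq hp (by grind) (le_s (by grind)) (fun h => hn (h.mono hμ))
      grind
    have h1 := (dom hμ0 ((sm q D.ij hq hqs).add (sm r D.il hr hrs)).neg).2
    have e : μ + -(C (m q) * ξ q * ρ p q ^ 2 + C (m r) * ξ r * ρ p r ^ 2) =
      C (m k) * ξ k * ρ p k ^ 2 := by linear_combination -F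
    rw [e, P.s_term (H.hm k) hk (H.ρ_ne D.ik), hks] at h1
    grind
  have k1 := key i j l D hi hZe.symm hj hjs hl hls
  have k2 := key j i l D.a hj hjs hi hZe.symm hl hls
  have k3 := key l i j (by unfold D4 at *; tauto) hl hls hi hZe.symm hj hjs
  obtain ⟨q, hq⟩ : ∃ q, q = P.s (ρ i k) := ⟨_, rfl⟩
  have e1 := H.s_ε P D.ik
  have hdiff : ∀ p, p ≠ k → P.s (ρ p k) = q → P.le (ξ p - ξ i) (Z - 3 • q) := by
    intro p hp hs
    have e : ξ p - ξ i = ((C c + ξ p * ξ k) - (C c + ξ i * ξ k)) * (ξ k)⁻¹ := by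
      field_simp; ring
    rw [e]
    have e2 := H.s_ε P hp
    have l1 : P.le (C c + ξ i * ξ k) (-(3 • q)) := le_s (by grind)
    have l2 : P.le (C c + ξ p * ξ k) (-(3 • q)) := le_s (by grind)
    have l3 : P.le (ξ k)⁻¹ Z := le_s (by rw [s_inv hk]; grind)
    exact ((l2.sub l1).mul l3).mono (by grind)
  have dj := hdiff j D.jk (by grind)
  have dl := hdiff l D.kl.symm (by grind)
  have hmm : m i + m j + m l = 0 := by
    by_contra hne
    have e : C (m i + m j + m l) * ξ i =
        -(C (m j) * (ξ j - ξ i)) - C (m l) * (ξ l - ξ i) - C (m k) * ξ k := by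
      simp only [map_add]; linear_combination H.sum i j k l D
    have : P.lt (C (m i + m j + m l) * ξ i) Z := by
      rw [e]
      refine (lt.sub ?_ ?_).sub ?_
      · exact ((dj.trans_lt (by grind)).real_mul _).neg
      · exact (dl.trans_lt (by grind)).real_mul _
      · exact (lt_s (by grind)).real_mul _
    have := this.of_real_mul hne hi
    grind
  obtain ⟨Y0, sY⟩ := H.tri P D.ij D.il D.jl hi (by grind) (dj.trans_lt (by grind))
    (dl.trans_lt (by grind)) hmm
  have S := H.S1 (i := k) (j := i) (k := j) (l := l) D.b.a
  have s1 : P.s (C (m k) * ξ k * μ) = - Z + P.s μ := by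
    rw [P.s_mul _ _ (mul_ne_zero (cst_ne L (H.hm k)) hk) hμ0, s_real_mul (H.hm k) hk, hks]
  rw [S, s_neg] at s1
  have hkle : P.le (C (m k) * ξ k) (Z - 3 • q) := by
    have e : C (m k) * ξ k = -(C (m j) * (ξ j - ξ i)) - C (m l) * (ξ l - ξ i) := by
      have : m i = - m j - m l := by linarith
      have h := H.sum i j k l D
      rw [this] at h; simp only [map_sub, map_neg] at h; linear_combination h
    rw [e]; exact (dj.real_mul _).neg.sub (dl.real_mul _)
  have := hkle (mul_ne_zero (cst_ne L (H.hm k)) hk)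
  rw [s_real_mul (H.hm k) hk] at this
  grind

/-- The relation `∑ m p * ξ p = 0` forces a second body of maximal size. -/
theorem exists_second (hi : ξ i ≠ 0) (hmax : ∀ p, P.le (ξ p) (P.s (ξ i))) :
    ∃ j, i ≠ j ∧ ξ j ≠ 0 ∧ P.s (ξ j) = P.s (ξ i) := by
  by_contra hcon
  have sm : ∀ q, i ≠ q → P.lt (C (m q) * ξ q) (P.s (ξ i)) := fun q hq => by
    apply lt.real_mul
    intro h
    exact lt_of_le_of_ne (hmax q h) (fun h2 => hcon ⟨q, hq, h, h2⟩)
  obtain ⟨j, k, l, D⟩ := D4.complete1 i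
  have e : C (m i) * ξ i = -(C (m j) * ξ j + C (m k) * ξ k + C (m l) * ξ l) := by
    linear_combination H.sum i j k l D
  have := (((sm _ D.ij).add (sm _ D.ik)).add (sm _ D.il)).neg
  rw [← e] at this
  exact lt_irrefl _ (this.of_real_mul (H.hm i) hi)

/-- When some `ξ` is infinite, `μ` is infinitesimal. -/
theorem claim2 (hb : ∃ p, ¬ P.le (ξ p) 0) : P.lt μ 0 := by
  by_contra hμ
  obtain ⟨hμ0, hμ⟩ := Place.not_lt hμ
  obtain ⟨i, hi, hZ, hmax⟩ := P.exists_max hb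
  -- every body of maximal size has a neighbour whose `ξ` has the inverse size
  have nb : ∀ p, ξ p ≠ 0 → P.s (ξ p) = P.s (ξ i) → ∃ q, p ≠ q ∧ ξ q ≠ 0 ∧
      P.s (ξ q) = - P.s (ξ i) ∧ P.s μ ≤ P.s (C (m q) * ξ q * ρ p q ^ 2) := by
    intro p hp hps
    by_contra hcon
    obtain ⟨j, k, l, D⟩ := D4.complete1 p
    have sm : ∀ q, p ≠ q → P.lt (C (m q) * ξ q * ρ p q ^ 2) (P.s μ) := by
      intro q hpq
      by_contra hn
      have h1 := H.lemF P hpq hp (by rwa [hps]) (by rw [hps]; exact hmax q)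
        (fun h => hn (h.mono hμ))
      rw [hps] at h1
      exact hcon ⟨q, hpq, h1.1, h1.2, (Place.not_lt hn).2⟩
    have := ((sm _ D.ij).add (sm _ D.ik)).add (sm _ D.il)
    rw [H.F p j k l D] at this
    exact not_lt_self hμ0 this
  obtain ⟨j, hij, hj, hjs⟩ := H.exists_second P hi hmax
  obtain ⟨k, hik, hk, hks, hsk⟩ := nb i hi rfl
  have hjk : j ≠ k := by rintro rfl; grind
  obtain ⟨l, D⟩ := D4.complete3 hij hik hjk
  by_cases hl : P.lt (ξ l) (P.s (ξ i))
  · exact H.claim2_two P D hi hZ hj hjs hl hk hks hμ hsk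
  · obtain ⟨hl0, hls⟩ := Place.not_lt hl
    exact H.claim2_three P D hi hZ hj hjs hl0 (le_antisymm (hmax l hl0) hls) hk hks hμ0 hμ

end CoreI
end CoreI

/-! ### Nonzero total mass, not collinear: the case `μ = 0` -/

section CoreI

variable {L : Type*} [Field L] [Algebra ℝ L] {G : Type*} [AddCommGroup G] [LinearOrder G]
    [IsOrderedAddMonoid G] {K : Type*} [Field K]

local notation "C" => algebraMap ℝ L

/-- Three elements with sum zero whose cubes agree up to sign have equal cubes; the other sign
patterns would force `28 * u ^ 9 = 0`, by cubing `u ^ 3 + v ^ 3 + w ^ 3 = 3 * u * v * w`. -/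
theorem cubes_sum {K : Type*} [Field K] {u v w : K} (h28 : (28 : K) ≠ 0) (hu : u ≠ 0)
    (hs : u + v + w = 0)
    (hv : v ^ 3 = u ^ 3 ∨ v ^ 3 = - u ^ 3) (hw : w ^ 3 = u ^ 3 ∨ w ^ 3 = - u ^ 3) :
    v ^ 3 = u ^ 3 ∧ w ^ 3 = u ^ 3 := by
  have key : u ^ 3 + v ^ 3 + w ^ 3 = 3 * (u * v * w) := by
    have : u = - v - w := by linear_combination hs
    rw [this]; ring
  have key3 : (u ^ 3 + v ^ 3 + w ^ 3) ^ 3 = 27 * (u ^ 3 * v ^ 3 * w ^ 3) := by rw [key]; ring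
  have fin : 28 * (u ^ 3) ^ 3 ≠ 0 := mul_ne_zero h28 (pow_ne_zero _ (pow_ne_zero _ hu))
  rcases hv with hv | hv <;> rcases hw with hw | hw <;> rw [hv, hw] at key3
  · exact ⟨hv, hw⟩
  all_goals exfalso; apply fin; first | linear_combination key3 | linear_combination -key3

namespace CoreI
open Place

variable {m : Fin 4 → ℝ} {c : ℝ} {ξ : Fin 4 → L} {ρ : Fin 4 → Fin 4 → L} {μ : L}
  (H : CoreI m c ξ ρ μ) (P : Place L G K)
  {i j k l : Fin 4} {Z : G}
include H

/-- For `μ = 0` the weighted squared lengths of opposite edges agree. -/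
theorem opp (hμ : μ = 0) (D : D4 i j k l) : C (m i) * ξ i * (C (m j) * ξ j) * ρ i j ^ 2 =
    C (m k) * ξ k * (C (m l) * ξ l) * ρ k l ^ 2 := by
  have := H.S2 D.b
  rw [hμ, mul_zero] at this
  exact (sub_eq_zero.1 this.symm)

theorem edge_ne (hij : i ≠ j) (hi : ξ i ≠ 0) (hj : ξ j ≠ 0) :
    C (m i) * ξ i * (C (m j) * ξ j) * ρ i j ^ 2 ≠ 0 :=
  mul_ne_zero (mul_ne_zero (mul_ne_zero (cst_ne L (H.hm i)) hi)
    (mul_ne_zero (cst_ne L (H.hm j)) hj)) (pow_ne_zero 2 (H.ρ_ne hij))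

theorem s_edge_pos (hij : i ≠ j) (hi : ξ i ≠ 0) (hj : ξ j ≠ 0) (ht : 0 < P.s (ξ i) + P.s (ξ j)) :
    3 • P.s (C (m i) * ξ i * (C (m j) * ξ j) * ρ i j ^ 2) = P.s (ξ i) + P.s (ξ j) := by
  rw [P.s_edge (H.hm i) (H.hm j) hi hj (H.ρ_ne hij)]
  have := H.s_ρ_of_pos P hij hi hj ht
  grind

theorem s_edge_neg (hij : i ≠ j) (hi : ξ i ≠ 0) (hj : ξ j ≠ 0) (ht : P.s (ξ i) + P.s (ξ j) < 0) :
    P.s (C (m i) * ξ i * (C (m j) * ξ j) * ρ i j ^ 2) = P.s (ξ i) + P.s (ξ j) := by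
  rw [P.s_edge (H.hm i) (H.hm j) hi hj (H.ρ_ne hij)]
  have := H.s_ρ_of_lt P hij (lt_s (by rw [P.s_mul _ _ hi hj]; exact ht))
  grind

/-- `μ = 0` and exactly two `ξ` of maximal infinite size: the edge `i j` would
dominate the equation `F i`. -/
theorem claim3_two (hμ : μ = 0) (D : D4 i j k l) (hi : ξ i ≠ 0) (hZ : 0 < P.s (ξ i))
    (hj : ξ j ≠ 0) (hjs : P.s (ξ j) = P.s (ξ i)) (hk : P.lt (ξ k) (P.s (ξ i)))
    (hl : P.lt (ξ l) (P.s (ξ i))) : False := by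
  have e1 := H.s_edge_pos P D.ij hi hj (by grind)
  have n1 := H.edge_ne D.ij hi hj
  have F : C (m i) * ξ i * (C (m j) * ξ j) * ρ i j ^ 2 =
      -(C (m i) * ξ i * (C (m k) * ξ k) * ρ i k ^ 2 +
        C (m i) * ξ i * (C (m l) * ξ l) * ρ i l ^ 2) := by
    have := H.F i j k l D
    rw [hμ] at this
    linear_combination (C (m i) * ξ i) * this
  have e2 := H.opp hμ D
  have n2 := n1
  rw [e2] at n2
  have hk0 : ξ k ≠ 0 := by intro h; simp [h] at n2
  have hl0 : ξ l ≠ 0 := by intro h; simp [h] at n2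
  have hks := hk hk0
  have hls := hl hl0
  have ht : P.s (ξ k) + P.s (ξ l) = 0 := by
    rw [e2] at e1
    rcases lt_trichotomy (P.s (ξ k) + P.s (ξ l)) 0 with h | h | h
    · have := H.s_edge_neg P D.kl hk0 hl0 h
      grind
    · exact h
    · have := H.s_edge_pos P D.kl hk0 hl0 h
      grind
  have e3 := H.s_edge_pos P D.ik hi hk0 (by grind)
  have e4 := H.s_edge_pos P D.il hi hl0 (by grind)
  have : P.lt (C (m i) * ξ i * (C (m j) * ξ j) * ρ i j ^ 2)
      (P.s (C (m i) * ξ i * (C (m j) * ξ j) * ρ i j ^ 2)) := by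
    nth_rewrite 1 [F]
    exact ((lt_s (by grind)).add (lt_s (by grind))).neg
  exact not_lt_self n1 this

/-- `μ = 0` and exactly three `ξ` of maximal infinite size. -/
theorem claim3_three (hμ : μ = 0) (D : D4 i j k l) (hi : ξ i ≠ 0) (hZ : 0 < P.s (ξ i))
    (hj : ξ j ≠ 0) (hjs : P.s (ξ j) = P.s (ξ i)) (hl : ξ l ≠ 0) (hls : P.s (ξ l) = P.s (ξ i))
    (hk : P.lt (ξ k) (P.s (ξ i))) : False := by
  -- every distance to the small body `k` is determined by the opposite edge
  have key : ∀ p q r, D4 p k q r → ξ p ≠ 0 → P.s (ξ p) = P.s (ξ i) → ξ q ≠ 0 →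
      P.s (ξ q) = P.s (ξ i) → ξ r ≠ 0 → P.s (ξ r) = P.s (ξ i) →
      ξ k ≠ 0 ∧ P.s (ξ k) = - P.s (ξ i) ∧ 3 • P.s (ρ p k) = P.s (ξ i) := by
    intro p q r D hp hps hq hqs hr hrs
    have n1 := H.edge_ne D.kl hq hr
    have e1 := H.s_edge_pos P D.kl hq hr (by grind)
    rw [← H.opp hμ D] at n1 e1
    have hk0 : ξ k ≠ 0 := by intro h; simp [h] at n1
    have hks := hk hk0
    have hz : P.s (ξ p) + P.s (ξ k) = 0 := by
      rcases lt_trichotomy (P.s (ξ p) + P.s (ξ k)) 0 with h | h | h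
      · have := H.s_edge_neg P D.ij hp hk0 h
        grind
      · exact h
      · have := H.s_edge_pos P D.ij hp hk0 h
        grind
    rw [P.s_edge (H.hm p) (H.hm k) hp hk0 (H.ρ_ne D.ij)] at e1
    refine ⟨hk0, by grind, by grind⟩
  obtain ⟨hk0, hks, r1⟩ := key i j l D.b hi rfl hj hjs hl hls
  obtain ⟨-, -, r2⟩ := key j i l (by unfold D4 at *; tauto) hj hjs hi rfl hl hls
  obtain ⟨-, -, r3⟩ := key l i j (by unfold D4 at *; tauto) hl hls hi rfl hj hjs
  have e1 := H.s_ε P D.ik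
  have hdiff : ∀ p, p ≠ k → 3 • P.s (ρ p k) = P.s (ξ i) → P.lt (ξ p - ξ i) (P.s (ξ i)) := by
    intro p hp hs
    have e : ξ p - ξ i = ((C c + ξ p * ξ k) - (C c + ξ i * ξ k)) * (ξ k)⁻¹ := by
      field_simp; ring
    rw [e]
    have e2 := H.s_ε P hp
    have l1 : P.le (C c + ξ i * ξ k) (-P.s (ξ i)) := le_s (by grind)
    have l2 : P.le (C c + ξ p * ξ k) (-P.s (ξ i)) := le_s (by grind)
    have l3 : P.le (ξ k)⁻¹ (P.s (ξ i)) := le_s (by rw [s_inv hk0]; grind)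
    exact ((l2.sub l1).mul l3).trans_lt (by grind)
  have dj := hdiff j D.jk r2
  have dl := hdiff l D.kl.symm r3
  have hmm : m i + m j + m l = 0 := by
    by_contra hne
    have e : C (m i + m j + m l) * ξ i =
        -(C (m j) * (ξ j - ξ i)) - C (m l) * (ξ l - ξ i) - C (m k) * ξ k := by
      simp only [map_add]; linear_combination H.sum i j k l D
    have : P.lt (C (m i + m j + m l) * ξ i) (P.s (ξ i)) := by
      rw [e]
      exact ((dj.real_mul _).neg.sub (dl.real_mul _)).sub ((lt_s (by grind)).real_mul _)
    exact lt_irrefl _ (this.of_real_mul hne hi)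
  have S := H.S1 (i := k) (j := i) (k := j) (l := l) D.b.a
  rw [hμ, mul_zero] at S
  exact (H.tri P D.ij D.il D.jl hi hZ dj dl hmm).1 (neg_eq_zero.1 S.symm)

set_option maxHeartbeats 1000000 in
/-- All four `ξ` infinite of the same size: with `η p = m p ^ 3 * res (ξ p / ξ i)`, the products
of `η` over opposite edges agree, so the `η` agree up to sign. -/
theorem claim3_four (hμ : μ = 0) (D : D4 i j k l) (hZ : 0 < P.s (ξ i))
    (hall : ∀ p, ξ p ≠ 0 ∧ P.s (ξ p) = P.s (ξ i)) : False := by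
  obtain ⟨hi, -⟩ := hall i
  obtain ⟨b, hb⟩ : ∃ b : Fin 4 → L, ∀ p, b p = ξ p / ξ i := ⟨_, fun p => rfl⟩
  have sb : ∀ p, P.s (b p) = 0 := fun p => by rw [hb, s_div (hall p).1 hi, (hall p).2, sub_self]
  have lb : ∀ p, P.le (b p) 0 := fun p => le_s (sb p).le
  obtain ⟨β, hβ⟩ : ∃ β : Fin 4 → K, ∀ p, β p = P.res (b p) := ⟨_, fun p => rfl⟩
  have β0 : ∀ p, β p ≠ 0 := fun p => by
    rw [hβ]; exact res_ne_zero (by rw [hb]; exact div_ne_zero (hall p).1 hi) (sb p)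
  have ratio : ∀ p q p' q', p ≠ q → p' ≠ q' → P.s (ρ p q / ρ p' q') = 0 ∧
      P.res (ρ p q / ρ p' q') ^ 3 * (β p * β q) = β p' * β q' := fun p q p' q' h h' => by
    simp only [hβ, hb]
    exact H.res_ratio P hi hZ h h' (hall p) (hall q) (hall p') (hall q')
  have φm : ∀ p, P.φ (m p) ≠ 0 := fun p => P.φ_ne (H.hm p)
  have eta : ∀ p q p' q', D4 p q p' q' →
      (P.φ (m p) ^ 3 * β p) * (P.φ (m q) ^ 3 * β q) =
      (P.φ (m p') ^ 3 * β p') * (P.φ (m q') ^ 3 * β q') := by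
    intro p q p' q' D
    obtain ⟨s1, r1⟩ := ratio p q p' q' D.ij D.kl
    obtain ⟨g, hg⟩ : ∃ g, g = ρ p q / ρ p' q' := ⟨_, rfl⟩
    rw [← hg] at s1 r1
    have lg : P.le g 0 := le_s s1.le
    have r0 := H.ρ_ne D.kl
    have e : C (m p * m q) * (b p * b q * g ^ 2) = C (m p' * m q') * (b p' * b q') := by
      rw [hg]; simp only [hb, map_mul]; field_simp; linear_combination H.opp hμ D
    have lbb : ∀ p q, P.le (b p * b q) 0 := fun p q => by simpa using (lb p).mul (lb q)
    have l3 : P.le (b p * b q * g ^ 2) 0 := by simpa using (lbb p q).mul (lg.pow 2)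
    have e2 := congrArg P.res e
    rw [res_real_mul l3, res_real_mul (lbb _ _), res_mul (lbb _ _) (lg.pow 2),
      res_mul (lb _) (lb _), res_mul (lb _) (lb _), res_pow lg, ← hβ, ← hβ, ← hβ, ← hβ,
      map_mul, map_mul] at e2
    apply mul_left_cancel₀ (pow_ne_zero 2 (mul_ne_zero (β0 p') (β0 q')))
    have e3 := congrArg (· ^ 3) e2
    beta_reduce at e3
    linear_combination e3 - (P.φ (m p) * P.φ (m q)) ^ 3 * (β p * β q) *
      (P.res g ^ 3 * (β p * β q) + β p' * β q') * r1
  have hη0 : ∀ p, P.φ (m p) ^ 3 * β p ≠ 0 := fun p => mul_ne_zero (pow_ne_zero 3 (φm p)) (β0 p)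
  obtain ⟨η, hη⟩ : ∃ η : Fin 4 → K, ∀ p, η p = P.φ (m p) ^ 3 * β p := ⟨_, fun p => rfl⟩
  simp only [← hη] at eta hη0
  have η1 := eta i j k l D
  have η2 := eta i k j l D.b
  have η3 := eta i l j k (by unfold D4 at *; tauto)
  have sq1 : η k ^ 2 = η j ^ 2 := by
    apply mul_left_cancel₀ (mul_ne_zero (hη0 i) (hη0 l))
    linear_combination η k * η l * η2 - η j * η l * η1
  have sq2 : η l ^ 2 = η j ^ 2 := by
    apply mul_left_cancel₀ (mul_ne_zero (hη0 i) (hη0 k))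
    linear_combination η k * η l * η3 - η j * η k * η1
  -- the three terms of the equation `F i`, divided by `ξ i * ρ i j ^ 2`
  obtain ⟨s1, r1⟩ := ratio i k i j D.ik D.ij
  obtain ⟨s2, r2⟩ := ratio i l i j D.il D.ij
  obtain ⟨g, hg⟩ : ∃ g, g = ρ i k / ρ i j := ⟨_, rfl⟩
  obtain ⟨f, hf⟩ : ∃ f, f = ρ i l / ρ i j := ⟨_, rfl⟩
  rw [← hg] at s1 r1
  rw [← hf] at s2 r2
  have lg : P.le g 0 := le_s s1.le
  have lf : P.le f 0 := le_s s2.le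
  have r0 := H.ρ_ne D.ij
  have e : C (m j) * b j + C (m k) * (b k * g ^ 2) + C (m l) * (b l * f ^ 2) = 0 := by
    have F := H.F i j k l D
    rw [hμ] at F
    rw [hg, hf]; simp only [hb]; field_simp; linear_combination F
  have lk : P.le (b k * g ^ 2) 0 := by simpa using (lb k).mul (lg.pow 2)
  have ll : P.le (b l * f ^ 2) 0 := by simpa using (lb l).mul (lf.pow 2)
  have e2 := congrArg P.res e
  rw [res_add (((lb j).real_mul _).add (lk.real_mul _)) (ll.real_mul _),
    res_add ((lb j).real_mul _) (lk.real_mul _), res_real_mul (lb j), res_real_mul lk,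
    res_real_mul ll, res_mul (lb k) (lg.pow 2), res_mul (lb l) (lf.pow 2), res_pow lg, res_pow lf,
    ← hβ, ← hβ, ← hβ, res_eq_zero_of_lt lt_zero] at e2
  have hg3 : P.res g ^ 3 * β k = β j := by
    apply mul_left_cancel₀ (β0 i); linear_combination r1
  have hf3 : P.res f ^ 3 * β l = β j := by
    apply mul_left_cancel₀ (β0 i); linear_combination r2
  have v3 : (P.φ (m k) * (β k * P.res g ^ 2)) ^ 3 = η k * β j ^ 2 := by
    rw [hη, ← hg3]; ring
  have w3 : (P.φ (m l) * (β l * P.res f ^ 2)) ^ 3 = η l * β j ^ 2 := by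
    rw [hη, ← hf3]; ring
  have u3 : (P.φ (m j) * β j) ^ 3 = η j * β j ^ 2 := by rw [hη]; ring
  have h28 : (28 : K) ≠ 0 := by
    have := P.φ_ne (r := 28) (by norm_num)
    rwa [map_ofNat] at this
  obtain ⟨c1, c2⟩ := cubes_sum h28 (mul_ne_zero (φm j) (β0 j)) e2
    (by rw [v3, u3]; rcases sq_eq_sq_iff_eq_or_eq_neg.1 sq1 with h | h
        · left; rw [h]
        · right; rw [h]; ring)
    (by rw [w3, u3]; rcases sq_eq_sq_iff_eq_or_eq_neg.1 sq2 with h | h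
        · left; rw [h]
        · right; rw [h]; ring)
  rw [v3, u3] at c1
  rw [w3, u3] at c2
  have hk := mul_right_cancel₀ (pow_ne_zero 2 (β0 j)) c1
  have hl := mul_right_cancel₀ (pow_ne_zero 2 (β0 j)) c2
  have hi' : η i = η j := by
    apply mul_right_cancel₀ (hη0 j); rw [η1, hk, hl]
  -- hence all the `η` agree, and the sum relation says that `∑ 1 / m p ^ 2` vanishes
  have S : C (m i) * b i + C (m j) * b j + C (m k) * b k + C (m l) * b l = 0 := by
    simp only [hb]; field_simp; linear_combination H.sum i j k l D
  have S2 := congrArg P.res S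
  have lmb : ∀ p, P.le (C (m p) * b p) 0 := fun p => (lb p).real_mul _
  rw [res_add (((lmb _).add (lmb _)).add (lmb _)) (lmb _), res_add ((lmb _).add (lmb _)) (lmb _),
    res_add (lmb _) (lmb _), res_eq_zero_of_lt lt_zero] at S2
  simp only [res_real_mul (lb _), ← hβ] at S2
  have hterm : ∀ p, η p = η j → P.φ (m p) * β p = P.φ ((1 / m p) ^ 2) * η j := fun p hp => by
    rw [← hp, hη]
    have := H.hm p
    rw [← mul_assoc, ← map_pow, ← map_mul]; congr 2; field_simp
  rw [hterm i hi', hterm j rfl, hterm k hk, hterm l hl, ← add_mul, ← add_mul, ← add_mul,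
    ← map_add, ← map_add, ← map_add] at S2
  have : (1 / m i) ^ 2 + (1 / m j) ^ 2 + (1 / m k) ^ 2 + (1 / m l) ^ 2 ≠ 0 := by
    have := H.hm i
    positivity
  exact mul_ne_zero (P.φ_ne this) (hη0 j) S2

/-- When `μ = 0`, every `ξ` is finite. -/
theorem claim3 (hμ : μ = 0) (hb : ∃ p, ¬ P.le (ξ p) 0) : False := by
  obtain ⟨i, hi, hZ, hmax⟩ := P.exists_max hb
  obtain ⟨j, hij, hj, hjs⟩ := H.exists_second P hi hmax
  obtain ⟨k, l, D⟩ := D4.complete2 hij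
  have eqZ : ∀ p, ¬ P.lt (ξ p) (P.s (ξ i)) → ξ p ≠ 0 ∧ P.s (ξ p) = P.s (ξ i) := fun p hp =>
    ⟨(Place.not_lt hp).1, le_antisymm (hmax p (Place.not_lt hp).1) (Place.not_lt hp).2⟩
  by_cases hk : P.lt (ξ k) (P.s (ξ i)) <;> by_cases hl : P.lt (ξ l) (P.s (ξ i))
  · exact H.claim3_two P hμ D hi hZ hj hjs hk hl
  · exact H.claim3_three P hμ D hi hZ hj hjs (eqZ l hl).1 (eqZ l hl).2 hk
  · exact H.claim3_three P hμ D.c hi hZ hj hjs (eqZ k hk).1 (eqZ k hk).2 hl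
  · refine H.claim3_four P hμ D hZ fun p => ?_
    rcases D.cases p with rfl | rfl | rfl | rfl
    · exact ⟨hi, rfl⟩
    · exact ⟨hj, hjs⟩
    · exact eqZ _ hk
    · exact eqZ _ hl

/-- Non-collinear central configurations with nonzero total mass have algebraic distances. -/
theorem algebraic (hij : i ≠ j) : IsAlgebraic ℝ (ρ i j) := by
  have hμ : IsAlgebraic ℝ μ := by
    by_contra h
    obtain ⟨G, _, _, _, K, _, P, hP⟩ := exists_place μ h
    have h0 : μ ≠ 0 := by rintro rfl; exact h isAlgebraic_zero
    by_cases hb : ∃ p, ¬ P.le (ξ p) 0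
    · exact absurd (H.claim2 P hb h0) (_root_.not_lt.2 hP.le)
    · push Not at hb
      exact absurd (H.claim1 P hb h0) (_root_.not_le.2 hP)
  by_contra h
  have h' : ¬ IsAlgebraic ℝ (ρ i j)⁻¹ := fun h2 => h (by simpa using h2.inv)
  obtain ⟨G, _, _, _, K, _, P, hP⟩ := exists_place _ h'
  rw [s_inv (H.ρ_ne hij)] at hP
  have hb : ∃ p, ¬ P.le (ξ p) 0 := by
    by_contra hcon
    push Not at hcon
    have := H.s_ρ_of_le P hij (by simpa using (hcon i).mul (hcon j))
    grind
  by_cases h0 : μ = 0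
  · exact H.claim3 P h0 hb
  · have := H.claim2 P hb h0
    rw [P.s_algebraic h0 hμ] at this
    exact lt_irrefl _ this

end CoreI
end CoreI

/-! ### Zero total mass, not collinear -/

section CoreII

variable {L : Type*} [Field L] [Algebra ℝ L] {G : Type*} [AddCommGroup G] [LinearOrder G]
    [IsOrderedAddMonoid G] {K : Type*} [Field K]

local notation "C" => algebraMap ℝ L

/-- Algebraic equations satisfied by non-collinear central configurations with vanishing total
mass: the masses form an affine dependency of the bodies, so that `ρ i j ^ (-3)` splits as
`a i + a j`. -/
structure CoreII (m : Fin 4 → ℝ) (τ : ℝ) (a : Fin 4 → L) (ρ : Fin 4 → Fin 4 → L) (μ : L) :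
    Prop where
  hm : ∀ i, m i ≠ 0
  hτ : τ ≠ 0
  hM : ∀ i j k l, D4 i j k l → m i + m j + m k + m l = 0
  symm : ∀ i j, ρ i j = ρ j i
  eqn : ∀ i j, i ≠ j → (a i + a j) * ρ i j ^ 3 = 1
  lin : ∀ i j k l, D4 i j k l →
    C (m i) * a i + C (m j) * a j + C (m k) * a k + C (m l) * a l = C τ
  F : ∀ i j k l, D4 i j k l →
    C (m j) * ρ i j ^ 2 + C (m k) * ρ i k ^ 2 + C (m l) * ρ i l ^ 2 = μ
  hA : ∀ i j k l, D4 i j k l → a i + a j + a k + a l ≠ 0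

namespace CoreII
open Place

variable {m : Fin 4 → ℝ} {τ : ℝ} {a : Fin 4 → L} {ρ : Fin 4 → Fin 4 → L} {μ : L}
  (H : CoreII m τ a ρ μ) (P : Place L G K)
  {i j k l : Fin 4}
include H

theorem hMC (i j k l : Fin 4) (D : D4 i j k l) : C (m i) + C (m j) + C (m k) + C (m l) = 0 := by
  rw [← map_add, ← map_add, ← map_add, H.hM i j k l D, map_zero]

/-- The edges `i k` and `j l` are opposite. -/
theorem S2 (D : D4 i j k l) : (C (m i) + C (m k)) * μ =
    C (m i) * C (m k) * ρ i k ^ 2 - C (m j) * C (m l) * ρ j l ^ 2 :=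
  weights_S2 (w := fun i => C (m i)) (y := fun i j => C (m i) * C (m j) * ρ i j ^ 2) (L_two_ne L)
    (fun i j => by rw [H.symm i j]; ring) H.hMC
    (fun i j k l D => by rw [← H.F i j k l D]; ring) D

theorem S1 (D : D4 i j k l) : C (m i) * μ =
    -(C (m j) * C (m k) * ρ j k ^ 2 + C (m j) * C (m l) * ρ j l ^ 2 +
      C (m k) * C (m l) * ρ k l ^ 2) :=
  weights_S1 (w := fun i => C (m i)) (y := fun i j => C (m i) * C (m j) * ρ i j ^ 2) (L_two_ne L)
    (fun i j => by rw [H.symm i j]; ring) H.hMC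
    (fun i j k l D => by rw [← H.F i j k l D]; ring) D

theorem ρ_ne (h : i ≠ j) : ρ i j ≠ 0 := by
  intro h0
  have := H.eqn i j h
  rw [h0] at this; simp at this

theorem ε_ne (h : i ≠ j) : a i + a j ≠ 0 := by
  intro h0
  have := H.eqn i j h
  rw [h0] at this; simp at this

theorem s_ε (h : i ≠ j) : P.s (a i + a j) + 3 • P.s (ρ i j) = 0 := by
  have := H.eqn i j h
  have h2 := P.s_mul _ _ (H.ε_ne h) (pow_ne_zero 3 (H.ρ_ne h))
  rw [this, s_one, s_pow (H.ρ_ne h)] at h2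
  exact h2.symm

theorem lt_of_big (h : i ≠ j) (hb : 0 < P.s (ρ i j)) : P.lt (a i + a j) 0 := by
  have h3 := H.s_ε P h
  exact lt_s (by grind)

theorem res_of_big (h : i ≠ j) (hb : 0 < P.s (ρ i j)) (hi : P.le (a i) 0) (hj : P.le (a j) 0) :
    P.res (a i) = - P.res (a j) := by
  have := res_eq_zero_of_lt (H.lt_of_big P h hb)
  rw [res_add hi hj] at this
  linear_combination this

theorem exists_big (hμ : ¬ P.le μ 0) (i : Fin 4) : ∃ j, i ≠ j ∧ 0 < P.s (ρ i j) := by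
  by_contra hcon
  push Not at hcon
  obtain ⟨j, k, l, D⟩ := D4.complete1 i
  apply hμ
  rw [← H.F i j k l D]
  have key : ∀ q, i ≠ q → P.le (C (m q) * ρ i q ^ 2) 0 := fun q hq =>
    ((le_s (hcon q hq)).pow 2).real_mul (m q)
  exact ((key _ D.ij).add (key _ D.ik)).add (key _ D.il)

theorem y_le {p q : Fin 4} (hb : ¬ 0 < P.s (ρ p q)) : P.le (C (m p) * C (m q) * ρ p q ^ 2) 0 := by
  rw [mul_assoc]; exact ((le_sq hb).real_mul _).real_mul _

theorem y_lt {p q : Fin 4} (h : p ≠ q) (hb : P.s (ρ p q) < 0) :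
    P.lt (C (m p) * C (m q) * ρ p q ^ 2) 0 := by
  rw [mul_assoc]
  refine ((lt_s ?_).real_mul _).real_mul _
  rw [s_pow (H.ρ_ne h)]; grind

/-- The residue of the relation `∑ m p * a p = τ`. -/
theorem res_lin (hle : ∀ p, P.le (a p) 0) (D : D4 i j k l) :
    P.φ (m i) * P.res (a i) + P.φ (m j) * P.res (a j) + P.φ (m k) * P.res (a k) +
      P.φ (m l) * P.res (a l) = P.φ τ := by
  have s := congrArg P.res (H.lin i j k l D)
  have hlm : ∀ p, P.le (C (m p) * a p) 0 := fun p => (hle p).real_mul (m p)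
  rw [res_add (((hlm _).add (hlm _)).add (hlm _)) (hlm _), res_add ((hlm _).add (hlm _)) (hlm _),
    res_add (hlm _) (hlm _), P.res_real] at s
  simpa only [res_real_mul (hle _)] using s

theorem φM (D : D4 i j k l) : P.φ (m i) + P.φ (m j) + P.φ (m k) + P.φ (m l) = 0 := by
  rw [← map_add, ← map_add, ← map_add, H.hM i j k l D, map_zero]

/-- The residues of `a` take two opposite values on the pairs `i`, `k` and `j`, `l`, whose inner
distances are not infinite: `S2` bounds `μ`, since `m i + m k = 0` would make the residue of
`∑ m p * a p` vanish, while it is `τ`. -/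
theorem claim1_pairs (hle : ∀ p, P.le (a p) 0) (D : D4 i j k l) (hij : P.res (a i) = - P.res (a j))
    (hik : P.res (a i) = P.res (a k)) (hjl : P.res (a j) = P.res (a l))
    (h1 : ¬ 0 < P.s (ρ i k)) (h2 : ¬ 0 < P.s (ρ j l)) : P.le μ 0 := by
  have e := H.S2 D
  have h7 := (H.y_le P h1).sub (H.y_le P h2)
  rw [← e, ← map_add] at h7
  refine h7.of_real_mul fun hm => P.φ_ne H.hτ ?_
  rw [← H.res_lin P hle D, ← hik, ← hjl, hij]
  have hm' := congrArg P.φ hm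
  rw [map_add, map_zero] at hm'
  linear_combination (-2 * P.res (a j)) * hm' + P.res (a j) * H.φM P D

/-- If `i` is infinitely far from two bodies and `l` from some body, then by `res_of_big` the
residues of `a` take two opposite nonzero values; bodies with equal residues are not infinitely far
from each other. -/
theorem claim1_path (hle : ∀ p, P.le (a p) 0) (D : D4 i j k l) (hij : 0 < P.s (ρ i j))
    (hik : 0 < P.s (ρ i k)) (hl : ∃ p, l ≠ p ∧ 0 < P.s (ρ l p)) : P.le μ 0 := by
  have e1 := H.res_of_big P D.ij hij (hle _) (hle _)
  have e2 := H.res_of_big P D.ik hik (hle _) (hle _)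
  have hjk : P.res (a j) = P.res (a k) := by linear_combination e1 - e2
  have hl' : P.res (a l) = P.res (a i) ∨ P.res (a l) = P.res (a j) := by
    obtain ⟨p, hp, hb⟩ := hl
    have e3 := H.res_of_big P hp hb (hle _) (hle _)
    rcases D.cases p with rfl | rfl | rfl | rfl
    · right; linear_combination e3 - e1
    · left; linear_combination e3 - e1
    · left; linear_combination e3 - e2
    · exact absurd rfl hp
  have hi : P.res (a i) ≠ 0 := fun h0 => by
    have hj0 : P.res (a j) = 0 := by linear_combination e1 - h0
    apply P.φ_ne H.hτ
    rw [← H.res_lin P hle D, ← hjk, hj0, h0]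
    rcases hl' with h | h
    · rw [h, h0]; ring
    · rw [h, hj0]; ring
  have hj : P.res (a j) ≠ 0 := fun h => hi (by rw [e1, h, neg_zero])
  have nb : ∀ p q, p ≠ q → P.res (a p) = P.res (a q) → P.res (a p) ≠ 0 → ¬ 0 < P.s (ρ p q) := by
    intro p q hpq hr h0 hb
    have e3 := H.res_of_big P hpq hb (hle _) (hle _)
    rw [← hr] at e3
    exact mul_ne_zero P.two_ne h0 (by linear_combination e3)
  rcases hl' with h | h
  · exact H.claim1_pairs P hle D.c e1 h.symm hjk (nb _ _ D.il h.symm hi) (nb _ _ D.jk hjk hj)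
  · refine le.of_real_mul (H.hm i) ?_
    rw [H.S1 D]
    exact (((H.y_le P (nb _ _ D.jk hjk hj)).add (H.y_le P (nb _ _ D.jl h.symm hj))).add
      (H.y_le P (nb _ _ D.kl (hjk.symm.trans h.symm) (hjk ▸ hj)))).neg

/-- If `ρ i j` is at least as large as a bound which the distances from `i`, `j` to `k`, `l` do not
reach, then `i` and `j` have equal masses. -/
theorem eq_mass {g : G} (D : D4 i j k l) (hij : g ≤ P.s (ρ i j ^ 2)) (hik : P.lt (ρ i k ^ 2) g)
    (hil : P.lt (ρ i l ^ 2) g) (hjk : P.lt (ρ j k ^ 2) g) (hjl : P.lt (ρ j l ^ 2) g) :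
    m i = m j := by
  by_contra hne
  have F1 := H.F i j k l D
  have F2 := H.F j i k l D.a
  rw [H.symm j i] at F2
  have h : P.lt (C (m i - m j) * ρ i j ^ 2) g := by
    have e : C (m i - m j) * ρ i j ^ 2 =
        (C (m k) * ρ i k ^ 2 - C (m k) * ρ j k ^ 2) +
        (C (m l) * ρ i l ^ 2 - C (m l) * ρ j l ^ 2) := by
      rw [map_sub]; linear_combination F2 - F1
    rw [e]
    exact ((hik.real_mul _).sub (hjk.real_mul _)).add ((hil.real_mul _).sub (hjl.real_mul _))
  have := (h.of_real_mul (sub_ne_zero.2 hne)) (pow_ne_zero 2 (H.ρ_ne D.ij))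
  exact lt_irrefl _ (this.trans_le hij)

theorem opposite_masses (D : D4 i j k l) (hij : m i = m j) (hkl : m k = m l) : m k = - m i := by
  have := H.hM i j k l D
  linarith

/-- Two pairs of mutually infinite distances, all other distances being finite: by `eq_mass` the
masses agree within each pair and the residues of `a` cancel within each pair, so that the residue
of `∑ m p * a p` would be zero instead of `τ`. -/
theorem claim1_matching (hle : ∀ p, P.le (a p) 0) (D : D4 i j k l) (hij : 0 < P.s (ρ i j))
    (hkl : 0 < P.s (ρ k l)) (hik : ¬ 0 < P.s (ρ i k)) (hil : ¬ 0 < P.s (ρ i l))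
    (hjk : ¬ 0 < P.s (ρ j k)) (hjl : ¬ 0 < P.s (ρ j l)) : False := by
  have big : ∀ p q, p ≠ q → 0 < P.s (ρ p q) → 0 < P.s (ρ p q ^ 2) := fun p q hpq h => by
    rw [s_pow (H.ρ_ne hpq)]; grind
  obtain ⟨g, hg⟩ : ∃ g, g = min (P.s (ρ i j ^ 2)) (P.s (ρ k l ^ 2)) := ⟨_, rfl⟩
  have hg0 : 0 < g := by rw [hg]; exact lt_min (big _ _ D.ij hij) (big _ _ D.kl hkl)
  have small : ∀ {p q}, ¬ 0 < P.s (ρ p q) → P.lt (ρ p q ^ 2) g := fun h => (le_sq h).trans_lt hg0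
  have e1 := H.eq_mass P D (by rw [hg]; exact min_le_left _ _) (small hik) (small hil) (small hjk)
    (small hjl)
  have e2 := H.eq_mass P (i := k) (j := l) (k := i) (l := j) (by unfold D4 at *; tauto)
    (by rw [hg]; exact min_le_right _ _) (small (by rwa [H.symm])) (small (by rwa [H.symm]))
    (small (by rwa [H.symm])) (small (by rwa [H.symm]))
  apply P.φ_ne H.hτ
  rw [← H.res_lin P hle D, ← e1, ← e2, H.res_of_big P D.ij hij (hle _) (hle _),
    H.res_of_big P D.kl hkl (hle _) (hle _)]
  ring

/-- When every `a` is finite, so is `μ`. -/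
theorem claim1 (hle : ∀ p, P.le (a p) 0) : P.le μ 0 := by
  by_contra hμ
  have nb := H.exists_big P hμ
  obtain ⟨j, h0, hb⟩ := nb 0
  obtain ⟨k, l, D⟩ := D4.complete2 h0
  have hb' := hb
  rw [H.symm] at hb'
  by_cases h1 : 0 < P.s (ρ 0 k)
  · exact hμ (H.claim1_path P hle D hb h1 (nb l))
  by_cases h2 : 0 < P.s (ρ 0 l)
  · exact hμ (H.claim1_path P hle D.c hb h2 (nb k))
  by_cases h3 : 0 < P.s (ρ j k)
  · exact hμ (H.claim1_path P hle D.a hb' h3 (nb l))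
  by_cases h4 : 0 < P.s (ρ j l)
  · exact hμ (H.claim1_path P hle D.a.c hb' h4 (nb k))
  obtain ⟨p, hp, h5⟩ := nb k
  rcases D.cases p with rfl | rfl | rfl | rfl
  · exact h1 (by rwa [H.symm])
  · exact h3 (by rwa [H.symm])
  · exact hp rfl
  · exact H.claim1_matching P hle D hb h5 h1 h2 h3 h4

theorem near (hp : i ≠ j) (h : 0 ≤ P.s (ρ i j)) : P.le (a i + a j) 0 := by
  have := H.s_ε P hp
  exact le_s (by grind)

/-- `a i + a j` infinite makes `ρ i j` infinitely small. -/
theorem small_of_far (hp : i ≠ j) (h : ¬ P.le (a i + a j) 0) : P.s (ρ i j) < 0 := by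
  have := H.s_ε P hp
  have := (Place.not_le h).2
  grind

theorem sq_lt (hp : i ≠ j) (h : ¬ P.le (a i + a j) 0) : P.lt (ρ i j ^ 2) 0 := by
  refine lt_s ?_
  have := H.small_of_far P hp h
  rw [s_pow (H.ρ_ne hp)]; grind

/-- The square of the relation `(a i + a j) * ρ i j ^ 3 = 1`. -/
theorem cube {i j : Fin 4} (h : i ≠ j) : (ρ i j ^ 2) ^ 3 * (a i + a j) ^ 2 = 1 := by
  linear_combination ((a i + a j) * ρ i j ^ 3 + 1) * H.eqn i j h

theorem eq_of_sq_eq (D : D4 i j k l) (h : ρ i j ^ 2 = ρ k l ^ 2) : a i + a j = a k + a l := by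
  have e1 := H.cube D.ij
  have e2 := H.cube D.kl
  rw [h] at e1
  have hne : (ρ k l ^ 2) ^ 3 * (a i + a j + a k + a l) ≠ 0 :=
    mul_ne_zero (pow_ne_zero _ (pow_ne_zero _ (H.ρ_ne D.kl))) (H.hA i j k l D)
  apply sub_eq_zero.1
  apply (mul_eq_zero_iff_left hne).1
  linear_combination e1 - e2

/-- Two pairs `i`, `j` and `k`, `l` such that the cross distances are infinitely small. -/
theorem claim2_two (D : D4 i j k l) (hi : ¬ P.le (a i) 0) (hij : 0 ≤ P.s (ρ i j))
    (hkl : 0 ≤ P.s (ρ k l)) (hik : ¬ P.le (a i + a k) 0) (hil : ¬ P.le (a i + a l) 0)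
    (hjk : ¬ P.le (a j + a k) 0) (hjl : ¬ P.le (a j + a l) 0) : False := by
  have sq : ∀ p q, p ≠ q → 0 ≤ P.s (ρ p q) → 0 ≤ P.s (ρ p q ^ 2) := fun p q hpq h => by
    rw [s_pow (H.ρ_ne hpq)]; grind
  have e1 := H.eq_mass P D (sq _ _ D.ij hij) (H.sq_lt P D.ik hik) (H.sq_lt P D.il hil)
    (H.sq_lt P D.jk hjk) (H.sq_lt P D.jl hjl)
  have e2 := H.eq_mass P (i := k) (j := l) (k := i) (l := j) (by unfold D4 at *; tauto)
    (sq _ _ D.kl hkl)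
    (by rw [H.symm]; exact H.sq_lt P D.ik hik) (by rw [H.symm]; exact H.sq_lt P D.jk hjk)
    (by rw [H.symm]; exact H.sq_lt P D.il hil) (by rw [H.symm]; exact H.sq_lt P D.jl hjl)
  have e3 := H.opposite_masses D e1 e2
  have Fi := H.F i j k l D
  have Fj := H.F j i k l D.a
  have Fk := H.F k l i j (by unfold D4 at *; tauto)
  have Fl := H.F l k i j (by unfold D4 at *; tauto)
  rw [← e2, e3, ← e1, map_neg] at Fi
  rw [← e2, e3, map_neg] at Fj
  rw [← e2, e3, ← e1, map_neg] at Fk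
  rw [e3, ← e1, map_neg] at Fl
  rw [H.symm j i] at Fj
  rw [H.symm k i, H.symm k j] at Fk
  rw [H.symm l k, H.symm l i, H.symm l j] at Fl
  have h2 : 2 * C (m i) ≠ 0 := mul_ne_zero (L_two_ne L) (cst_ne L (H.hm i))
  have x1 : ρ i k ^ 2 = ρ j l ^ 2 := by
    apply mul_left_cancel₀ h2; linear_combination Fj - Fi + Fk - Fl
  have x2 : ρ i l ^ 2 = ρ j k ^ 2 := by
    apply mul_left_cancel₀ h2; linear_combination Fj - Fi - Fk + Fl
  have f1 := H.eq_of_sq_eq D.b x1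
  have f2 := H.eq_of_sq_eq D.c.b x2
  apply hi
  have : P.le (C 2 * a i) 0 := by
    have e : C 2 * a i = a i + a j := by
      rw [map_ofNat]
      apply mul_left_cancel₀ (L_two_ne L); linear_combination f1 + f2
    rw [e]; exact H.near P D.ij hij
  exact this.of_real_mul two_ne_zero

/-- Two pairs `i`, `k` and `j`, `l` of infinitely close bodies. -/
theorem claim2_pairs (D : D4 i j k l) (hi : ¬ P.le (a i) 0) (hij : P.le (a i + a j) 0)
    (hik : P.le (a i - a k) 0) (hil : P.le (a i + a l) 0) : P.lt μ 0 := by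
  have far : ∀ x : L, P.le (a i - x) 0 → ¬ P.le (a i + x) 0 := fun x h1 h2 => hi <| by
    have := h1.add h2
    rw [show a i - x + (a i + x) = C 2 * a i by rw [map_ofNat]; ring] at this
    exact this.of_real_mul two_ne_zero
  have fik := far _ hik
  have fjl : ¬ P.le (a j + a l) 0 := fun h => by
    apply far (a i) (by rw [sub_self]; exact le_zero)
    rw [show a i + a i = (a i + a j) + (a i + a l) - (a j + a l) by ring]
    exact (hij.add hil).sub h
  have e := H.S2 D
  have h7 := (H.y_lt P D.ik (H.small_of_far P D.ik fik)).sub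
    (H.y_lt P D.jl (H.small_of_far P D.jl fjl))
  rw [← e, ← map_add] at h7
  refine h7.of_real_mul fun hm => ?_
  have hk : m k = - m i := by linarith
  have hl : m l = - m j := by linarith [H.hM i j k l D]
  have Fi := H.F i j k l D
  have Fj := H.F j i k l D.a
  have Fk := H.F k l i j (by unfold D4 at *; tauto)
  have Fl := H.F l k i j (by unfold D4 at *; tauto)
  rw [hk, hl, map_neg, map_neg] at Fi Fj
  rw [hl, map_neg] at Fk
  rw [hk, map_neg] at Fl
  rw [H.symm j i] at Fj
  rw [H.symm k i, H.symm k j] at Fk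
  rw [H.symm l k, H.symm l i, H.symm l j] at Fl
  have main : C (m i) ^ 2 * ρ i k ^ 2 = C (m j) ^ 2 * ρ j l ^ 2 := by
    apply mul_left_cancel₀ (L_two_ne L)
    linear_combination C (m i) * (Fk - Fi) + C (m j) * (Fj - Fl)
  have hs : (C (m i) ^ 3 * (a j + a l)) ^ 2 = (C (m j) ^ 3 * (a i + a k)) ^ 2 := by
    apply mul_left_cancel₀ (mul_ne_zero (pow_ne_zero 3 (pow_ne_zero 2 (H.ρ_ne D.ik)))
      (pow_ne_zero 3 (pow_ne_zero 2 (H.ρ_ne D.jl))))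
    have m3 := congrArg (· ^ 3) main
    beta_reduce at m3
    linear_combination m3 + C (m i) ^ 6 * (ρ i k ^ 2) ^ 3 * H.cube D.jl
      - C (m j) ^ 6 * (ρ j l ^ 2) ^ 3 * H.cube D.ik
  -- both signs of the square root contradict the non-vanishing of the sum of all `a`
  have fin : ∀ t : ℝ, C (m i) ^ 3 * (a j + a l) = C t * (a i + a k) → False := fun t ht => by
    have hA : P.le (a i + a j + a k + a l) 0 := by
      rw [show a i + a j + a k + a l = (a i + a j) + (a i + a l) - (a i - a k) by ring]
      exact (hij.add hil).sub hik
    have e1 : C (m i ^ 3) * (a i + a j + a k + a l) = C (t + m i ^ 3) * (a i + a k) := by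
      rw [map_add, map_pow]; linear_combination ht
    by_cases h0 : t + m i ^ 3 = 0
    · rw [h0, map_zero, zero_mul] at e1
      exact mul_ne_zero (cst_ne L (pow_ne_zero 3 (H.hm i))) (H.hA i j k l D) e1
    · have := hA.real_mul (m i ^ 3)
      rw [e1] at this
      exact fik (this.of_real_mul h0)
  rcases sq_eq_sq_iff_eq_or_eq_neg.1 hs with h | h
  · exact fin (m j ^ 3) (by rw [h, map_pow])
  · exact fin (- m j ^ 3) (by rw [h, map_neg, map_pow]; ring)

/-- All `a` agree up to sign and up to finite elements. Bodies with the same sign are infinitely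
close to each other, so that `S1` applies when three signs agree, and `claim2_pairs` otherwise. -/
theorem claim2_class (D : D4 i j k l) (hi : ¬ P.le (a i) 0) (hij : P.le (a i + a j) 0)
    (hk : P.le (a i + a k) 0 ∨ P.le (a i - a k) 0) (hl : P.le (a i + a l) 0 ∨ P.le (a i - a l) 0) :
    P.lt μ 0 := by
  have far : ∀ x y : L, P.le (a i - x) 0 → P.le (a i - y) 0 → ¬ P.le (x + y) 0 :=
    fun x y h1 h2 h3 => hi <| by
    have := (h1.add h2).add h3
    rw [show a i - x + (a i - y) + (x + y) = C 2 * a i by rw [map_ofNat]; ring] at this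
    exact this.of_real_mul two_ne_zero
  have far' : ∀ x y : L, P.le (a i + x) 0 → P.le (a i + y) 0 → ¬ P.le (x + y) 0 :=
    fun x y h1 h2 h3 => far (-x) (-y) (by rwa [sub_neg_eq_add]) (by rwa [sub_neg_eq_add])
      (by rw [← neg_add]; exact h3.neg)
  have single : ∀ {i j k l}, D4 i j k l → ¬ P.le (a j + a k) 0 → ¬ P.le (a j + a l) 0 →
      ¬ P.le (a k + a l) 0 → P.lt μ 0 := fun {i j k l} D h1 h2 h3 => by
    refine lt.of_real_mul (H.hm i) ?_
    rw [H.S1 D]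
    exact (((H.y_lt P D.jk (H.small_of_far P D.jk h1)).add
      (H.y_lt P D.jl (H.small_of_far P D.jl h2))).add
      (H.y_lt P D.kl (H.small_of_far P D.kl h3))).neg
  have hii : P.le (a i - a i) 0 := by rw [sub_self]; exact le_zero
  rcases hk with hk | hk <;> rcases hl with hl | hl
  · exact single D (far' _ _ hij hk) (far' _ _ hij hl) (far' _ _ hk hl)
  · exact H.claim2_pairs P D.c hi hij hl hk
  · exact H.claim2_pairs P D hi hij hk hl
  · exact single D.a (far _ _ hii hk) (far _ _ hii hl) (far _ _ hk hl)

/-- When some `a` is infinite, `μ` is infinitesimal. -/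
theorem claim2 (hb : ∃ p, ¬ P.le (a p) 0) : P.lt μ 0 := by
  by_contra hμ
  have nb : ∀ p, ∃ q, p ≠ q ∧ 0 ≤ P.s (ρ p q) := by
    intro i
    by_contra hcon
    push Not at hcon
    obtain ⟨j, k, l, D⟩ := D4.complete1 i
    apply hμ
    rw [← H.F i j k l D]
    have key : ∀ q, i ≠ q → P.lt (C (m q) * ρ i q ^ 2) 0 := fun q hq => by
      refine (lt_s ?_).real_mul _
      have := hcon q hq
      rw [s_pow (H.ρ_ne hq)]; grind
    exact ((key _ D.ij).add (key _ D.ik)).add (key _ D.il)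
  obtain ⟨i, hi⟩ := hb
  obtain ⟨j, hij, hb⟩ := nb i
  obtain ⟨k, l, D⟩ := D4.complete2 hij
  have nij := H.near P hij hb
  -- membership in the class of `i` up to sign propagates to neighbours
  have step : ∀ p q : Fin 4, P.le (a p + a q) 0 → (P.le (a i + a q) 0 ∨ P.le (a i - a q) 0) →
      (P.le (a i + a p) 0 ∨ P.le (a i - a p) 0) := by
    rintro p q h (h1 | h1)
    · right; rw [show a i - a p = (a i + a q) - (a p + a q) by ring]; exact h1.sub h
    · left; rw [show a i + a p = (a i - a q) + (a p + a q) by ring]; exact h1.add h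
  have ci : P.le (a i + a i) 0 ∨ P.le (a i - a i) 0 := Or.inr (by rw [sub_self]; exact le_zero)
  have cj : P.le (a i + a j) 0 ∨ P.le (a i - a j) 0 := Or.inl nij
  have propag : ∀ {k l}, D4 i j k l → (P.le (a i + a k) 0 ∨ P.le (a j + a k) 0) → False := by
    intro k l D h
    have ck : P.le (a i + a k) 0 ∨ P.le (a i - a k) 0 := by
      rcases h with h | h
      · exact Or.inl h
      · exact step k j (by rwa [add_comm]) cj
    obtain ⟨q, hq, hb⟩ := nb l
    have := H.near P hq hb
    refine hμ (H.claim2_class P D hi nij ck (step l q this ?_))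
    rcases D.cases q with rfl | rfl | rfl | rfl
    · exact ci
    · exact cj
    · exact ck
    · exact absurd rfl hq
  by_cases h1 : P.le (a i + a k) 0 ∨ P.le (a j + a k) 0
  · exact propag D h1
  by_cases h2 : P.le (a i + a l) 0 ∨ P.le (a j + a l) 0
  · exact propag D.c h2
  push Not at h1 h2
  refine H.claim2_two P D hi hb ?_ h1.1 h2.1 h1.2 h2.2
  obtain ⟨q, hq, hb⟩ := nb k
  have := H.near P hq hb
  rcases D.cases q with rfl | rfl | rfl | rfl
  · exact absurd (by rwa [add_comm]) h1.1
  · exact absurd (by rwa [add_comm]) h1.2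
  · exact absurd rfl hq
  · exact hb

/-- For `μ = 0` the ratios of the `a i + a j` to the sum of all `a` satisfy quadratic equations with
real coefficients. -/
theorem ratio_algebraic (hμ : μ = 0) (D : D4 i j k l) :
    IsAlgebraic ℝ ((a i + a j) / (a i + a j + a k + a l)) := by
  have hA := H.hA i j k l D
  obtain ⟨e, he⟩ : ∃ e, e = (a i + a j) / (a i + a j + a k + a l) := ⟨_, rfl⟩
  have he' : a i + a j = e * (a i + a j + a k + a l) := by rw [he]; field_simp
  have he2 : a k + a l = (1 - e) * (a i + a j + a k + a l) := by linear_combination -he'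
  have S := H.S2 D.b
  rw [hμ, mul_zero] at S
  have S3 : (C (m i) * C (m j) * ρ i j ^ 2) ^ 3 = (C (m k) * C (m l) * ρ k l ^ 2) ^ 3 := by
    rw [sub_eq_zero.1 S.symm]
  have Q : (C (m i) * C (m j)) ^ 3 * (a k + a l) ^ 2 = (C (m k) * C (m l)) ^ 3 * (a i + a j) ^ 2 := by
    apply mul_left_cancel₀ (mul_ne_zero (pow_ne_zero 3 (pow_ne_zero 2 (H.ρ_ne D.ij)))
      (pow_ne_zero 3 (pow_ne_zero 2 (H.ρ_ne D.kl))))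
    linear_combination S3 + (C (m i) * C (m j)) ^ 3 * (ρ i j ^ 2) ^ 3 * H.cube D.kl
      - (C (m k) * C (m l)) ^ 3 * (ρ k l ^ 2) ^ 3 * H.cube D.ij
  have Q2 : (C (m i) * C (m j)) ^ 3 * (1 - e) ^ 2 = (C (m k) * C (m l)) ^ 3 * e ^ 2 := by
    rw [he', he2] at Q
    apply mul_left_cancel₀ (pow_ne_zero 2 hA)
    linear_combination Q
  rw [← he]
  refine ⟨Polynomial.C ((m i * m j) ^ 3) * (1 - Polynomial.X) ^ 2 -
    Polynomial.C ((m k * m l) ^ 3) * Polynomial.X ^ 2, fun h => ?_, ?_⟩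
  · have := congrArg (Polynomial.eval 0) h
    simp [H.hm] at this
  · simp only [map_sub, map_mul, map_pow, Polynomial.aeval_C, Polynomial.aeval_X, map_one]
    linear_combination Q2

/-- When `μ = 0`, the distances are algebraic because all ratios between the `a p` are, and
`∑ m p * a p = τ` fixes the scale. -/
theorem claim3 (hμ : μ = 0) (hij : i ≠ j) : IsAlgebraic ℝ (ρ i j) := by
  obtain ⟨k, l, D⟩ := D4.complete2 hij
  have hA := H.hA i j k l D
  obtain ⟨A, hAe⟩ : ∃ A, A = a i + a j + a k + a l := ⟨_, rfl⟩
  rw [← hAe] at hA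
  have r : ∀ p q, p ≠ q → IsAlgebraic ℝ ((a p + a q) / A) := by
    intro p q hpq
    obtain ⟨p', q', D'⟩ := D4.complete2 hpq
    have := H.ratio_algebraic hμ D'
    convert this using 2
    have s : ∀ p q p' q', D4 p q p' q' → a p + a q + a p' + a q' = a 0 + a 1 + a 2 + a 3 := by
      intro p q p' q' D
      fin_cases p <;> fin_cases q <;> fin_cases p' <;> fin_cases q' <;>
        first | (exfalso; revert D; decide) | (simp; done) | (simp; ring)
    rw [hAe, s _ _ _ _ D, s _ _ _ _ D']
  have two : IsAlgebraic ℝ (C 2⁻¹) := isAlgebraic_algebraMap _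
  have c2 : C 2⁻¹ * 2 = 1 := by rw [← map_ofNat C 2, ← map_mul]; norm_num
  have ra : ∀ p, IsAlgebraic ℝ (a p / A) := by
    intro p
    obtain ⟨q, s, hpq, hps, hqs⟩ : ∃ q s, p ≠ q ∧ p ≠ s ∧ q ≠ s := by revert p; decide
    have := two.mul (((r p q hpq).add (r p s hps)).sub (r q s hqs))
    have e : a p / A = C 2⁻¹ * ((a p + a q) / A + (a p + a s) / A - (a q + a s) / A) := by
      linear_combination (-a p / A) * c2
    rwa [e]
  have rτ : IsAlgebraic ℝ (C τ / A) := by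
    have hh : ∀ p, IsAlgebraic ℝ (C (m p) * (a p / A)) := fun p =>
      (isAlgebraic_algebraMap _).mul (ra p)
    have := (((hh i).add (hh j)).add (hh k)).add (hh l)
    have e : C τ / A = C (m i) * (a i / A) + C (m j) * (a j / A) + C (m k) * (a k / A) +
        C (m l) * (a l / A) := by
      rw [← H.lin i j k l D]; ring
    rwa [e]
  have rA : IsAlgebraic ℝ A := by
    have := (isAlgebraic_algebraMap (A := L) τ).mul rτ.inv
    have h0 := cst_ne L H.hτ
    have e : A = C τ * (C τ / A)⁻¹ := by field_simp
    rwa [e]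
  have rε : IsAlgebraic ℝ (a i + a j) := by
    have := (r i j hij).mul rA
    rwa [div_mul_cancel₀ _ hA] at this
  refine IsAlgebraic.of_pow (n := 3) (by norm_num) ?_
  have e := H.eqn i j hij
  rw [eq_inv_of_mul_eq_one_right e]
  exact rε.inv

/-- Non-collinear central configurations with zero total mass have algebraic distances. -/
theorem algebraic (hij : i ≠ j) : IsAlgebraic ℝ (ρ i j) := by
  have hμ : IsAlgebraic ℝ μ := by
    by_contra h
    obtain ⟨G, _, _, _, K, _, P, hP⟩ := exists_place μ h
    have h0 : μ ≠ 0 := by rintro rfl; exact h isAlgebraic_zero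
    by_cases hb : ∃ p, ¬ P.le (a p) 0
    · exact absurd (H.claim2 P hb h0) (_root_.not_lt.2 hP.le)
    · push Not at hb
      exact absurd (H.claim1 P hb h0) (_root_.not_le.2 hP)
  by_contra h
  have h' : ¬ IsAlgebraic ℝ (ρ i j)⁻¹ := fun h2 => h (by simpa using h2.inv)
  obtain ⟨G, _, _, _, K, _, P, hP⟩ := exists_place _ h'
  rw [s_inv (H.ρ_ne hij)] at hP
  have hb : ∃ p, ¬ P.le (a p) 0 := by
    by_contra hcon
    push Not at hcon
    have h1 := ((hcon i).add (hcon j)) (H.ε_ne hij)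
    have := H.s_ε P hij
    grind
  by_cases h0 : μ = 0
  · exact h (H.claim3 h0 hij)
  · have := H.claim2 P hb h0
    rw [P.s_algebraic h0 hμ] at this
    exact lt_irrefl _ this

end CoreII
end CoreII

/-! ### Limiting triples of collinear masses -/

/-- Three collinear masses, in this order, in limiting equilibrium: with mutual distances
`1 : r : 1 + r` the three accelerations vanish. The case `r < 0` is not excluded. -/
def T0 (a b c : ℝ) : Prop := ∃ r : ℝ, r ≠ 0 ∧ 1 + r ≠ 0 ∧ c = a * r ^ 2 ∧ c = -(b * (1 + r) ^ 2)

/-- Three collinear masses, in this order, of total mass zero and in limiting uniform translation,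
whose ratio of distances is `a / c`. -/
def T1 (a b c : ℝ) : Prop := a + b + c = 0 ∧ 1 / b ^ 2 = 1 / a ^ 2 + 1 / c ^ 2

section Triples
variable {a b c d : ℝ}

theorem T0.signs (ha : a ≠ 0) (hb : b ≠ 0) (h : T0 a b c) : 0 < a * c ∧ b * c < 0 := by
  obtain ⟨r, hr, hr1, h1, h2⟩ := h
  constructor
  · rw [h1]
    have : 0 < a ^ 2 * r ^ 2 := by positivity
    nlinarith
  · rw [h2]
    have : 0 < b ^ 2 * (1 + r) ^ 2 := by positivity
    nlinarith

theorem T0.mirror (h : T0 a b c) : T0 c b a := by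
  obtain ⟨r, hr, hr1, h1, h2⟩ := h
  refine ⟨r⁻¹, inv_ne_zero hr, ?_, ?_, ?_⟩
  · intro h; apply hr1; field_simp at h; linarith
  · field_simp; linarith
  · apply mul_right_cancel₀ (pow_ne_zero 2 hr)
    field_simp; linarith

theorem T1.mirror (h : T1 a b c) : T1 c b a := by
  obtain ⟨h1, h2⟩ := h
  exact ⟨by linarith, by rw [h2, add_comm]⟩

/-- The defining relation of `T1` without denominators. -/
theorem T1.eqn (ha : a ≠ 0) (hb : b ≠ 0) (hc : c ≠ 0) (h : T1 a b c) :
    a ^ 2 * c ^ 2 = b ^ 2 * c ^ 2 + a ^ 2 * b ^ 2 := by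
  have := h.2
  field_simp at this
  linarith

theorem T1.lt (ha : a ≠ 0) (hb : b ≠ 0) (hc : c ≠ 0) (h : T1 a b c) : b ^ 2 < a ^ 2 ∧ b ^ 2 < c ^ 2 := by
  have e := h.eqn ha hb hc
  have ha2 : 0 < a ^ 2 := by positivity
  have hb2 : 0 < b ^ 2 := by positivity
  have hc2 : 0 < c ^ 2 := by positivity
  constructor <;> nlinarith [mul_pos ha2 hb2, mul_pos hb2 hc2]

theorem T1.sign (ha : a ≠ 0) (hb : b ≠ 0) (hc : c ≠ 0) (h : T1 a b c) : a * c < 0 := by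
  have e := h.lt ha hb hc
  have hb' : b = -(a + c) := by linarith [h.1]
  rw [hb'] at e
  nlinarith [sq_nonneg a, sq_nonneg c]

/-- Incompatibility of limiting triples: `T1` on `a b c`, `T0` on `a b d` and on `a c d`. -/
theorem triple_gamma (ha : a ≠ 0) (hb : b ≠ 0) (hc : c ≠ 0) (h1 : T1 a b c) (h2 : T0 a b d)
    (h3 : T0 a c d) : False := by
  have e := h1.eqn ha hb hc
  have h12 := (h1.mirror.lt hc hb ha).1
  obtain ⟨r, hr, hr1, r1, r2⟩ := h2
  obtain ⟨s, hs, hs1, s1, s2⟩ := h3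
  have hrs : r ^ 2 = s ^ 2 := mul_left_cancel₀ ha (r1.symm.trans s1)
  rcases sq_eq_sq_iff_eq_or_eq_neg.1 hrs with h | h
  · rw [h] at r2
    have : b = c := mul_right_cancel₀ (pow_ne_zero 2 hs1) (by linarith)
    rw [this] at h12; exact lt_irrefl _ h12
  · obtain rfl : s = -r := by linarith
    have B : b * (1 + r) ^ 2 = -(a * r ^ 2) := by linarith
    have G : c * (1 + -r) ^ 2 = -(a * r ^ 2) := by linarith
    have q1 : r ^ 4 + 4 * r ^ 2 - 1 = 0 := by
      apply mul_left_cancel₀ ha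
      linear_combination -(1 + r) ^ 2 * (1 + -r) ^ 2 * h1.1 + (1 + -r) ^ 2 * B + (1 + r) ^ 2 * G
    have q2 : r ^ 3 = 8 + 8 * r ^ 2 := by
      have hB2 : b ^ 2 * (1 + r) ^ 4 = a ^ 2 * r ^ 4 := by
        linear_combination (b * (1 + r) ^ 2 - a * r ^ 2) * B
      have hG2 : c ^ 2 * (1 + -r) ^ 4 = a ^ 2 * r ^ 4 := by
        linear_combination (c * (1 + -r) ^ 2 - a * r ^ 2) * G
      have : (a ^ 4 * r ^ 4 * r) * r ^ 3 = (a ^ 4 * r ^ 4 * r) * (8 + 8 * r ^ 2) := by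
        linear_combination (-(1 + r) ^ 4 * (1 + -r) ^ 4) * e +
          (1 + r) ^ 4 * a ^ 2 * hG2 - (c ^ 2 * (1 + -r) ^ 4 + a ^ 2 * (1 + -r) ^ 4) * hB2
          - a ^ 2 * r ^ 4 * hG2
      refine mul_left_cancel₀ ?_ this
      exact mul_ne_zero (mul_ne_zero (pow_ne_zero _ ha) (pow_ne_zero _ hr)) hr
    have r2 : r ^ 2 ≤ 1 := by nlinarith [sq_nonneg (r ^ 2)]
    nlinarith [sq_nonneg (r - 1), mul_nonneg (sq_nonneg r) (sq_nonneg (r - 1))]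

/-- Incompatibility of limiting triples: `T0` on `a b c` and on `a b d`, `T1` on `b c d`. -/
theorem triple_beta (hb : b ≠ 0) (hc : c ≠ 0) (hd : d ≠ 0) (h1 : T0 a b c)
    (h2 : T0 a b d) (h3 : T1 b c d) : False := by
  have e := h3.eqn hb hc hd
  have h12 := (h3.lt hb hc hd).2
  obtain ⟨r, hr, hr1, r1, r2⟩ := h1
  obtain ⟨s, hs, hs1, s1, s2⟩ := h2
  have hrs : ((1 + r) * s) ^ 2 = ((1 + s) * r) ^ 2 := by
    apply mul_left_cancel₀ hb
    linear_combination s ^ 2 * r2 - s ^ 2 * r1 + r ^ 2 * s1 - r ^ 2 * s2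
  rcases sq_eq_sq_iff_eq_or_eq_neg.1 hrs with h | h
  · have : r = s := by linarith
    rw [r2, s2, this] at h12; exact lt_irrefl _ h12
  · -- `w` is the product of `1 + r` and `1 + s`
    obtain ⟨u, hu⟩ : ∃ u, u = 1 + r := ⟨_, rfl⟩
    obtain ⟨v, hv⟩ : ∃ v, v = 1 + s := ⟨_, rfl⟩
    obtain ⟨w, hw⟩ : ∃ w, w = u * v := ⟨_, rfl⟩
    have huv : 2 * w = u + v := by rw [hw, hu, hv]; linarith
    have q1 : u ^ 2 + v ^ 2 = 1 := by
      apply mul_left_cancel₀ hb; rw [hu, hv]; linear_combination r2 + s2 - h3.1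
    have q2 : v ^ 4 = u ^ 4 * v ^ 4 + u ^ 4 := by
      have hb4 : b ^ 4 ≠ 0 := pow_ne_zero _ hb
      apply mul_left_cancel₀ hb4
      rw [r2, s2, ← hu, ← hv] at e
      linear_combination e
    have q3 : 4 * w ^ 2 - 2 * w - 1 = 0 := by
      have : (2 * w) ^ 2 = (u + v) ^ 2 := by rw [huv]
      linear_combination this + q1 - 2 * hw
    have q4 : w ^ 8 = 1 - 4 * w ^ 2 := by
      have : v ^ 2 - u ^ 2 = w ^ 4 := by
        rw [hw]; linear_combination q2 + (u ^ 2 - v ^ 2) * q1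
      have h2 : (v ^ 2 - u ^ 2) ^ 2 = w ^ 8 := by rw [this]; ring
      rw [← h2, hw]; linear_combination (u ^ 2 + v ^ 2 + 1) * q1
    have w8 : 0 ≤ w ^ 8 := by positivity
    have w2 : w ^ 2 ≤ 1 / 4 := by linarith
    have w0 : w ≠ 0 := by rintro rfl; norm_num at q3
    have q5 : w ^ 7 = -2 := by
      apply mul_left_cancel₀ w0; linear_combination q4 - q3
    have : w ^ 8 * w ^ 6 ≤ 1 := by
      have h4 : w ^ 8 ≤ 1 := by nlinarith [sq_nonneg w]
      have h6 : w ^ 6 ≤ 1 := by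
        have : (w ^ 2) ^ 3 ≤ 1 := pow_le_one₀ (sq_nonneg w) (by linarith)
        linarith [this, show (w ^ 2) ^ 3 = w ^ 6 by ring]
      exact mul_le_one₀ h4 (by positivity) h6
    have : (w ^ 7) ^ 2 ≤ 1 := by linarith [show (w ^ 7) ^ 2 = w ^ 8 * w ^ 6 by ring]
    rw [q5] at this
    norm_num at this

/-- The numerical contradiction behind `triple_alpha`: `s` is the ratio of distances of one triple,
`t` the inverse ratio of another one, and `S = s ^ 2` is confined to a small interval. -/
theorem alpha_numeric {S s t : ℝ} (hS : S = s ^ 2) (lo : 11 / 10 < S) (hi : S < 6 / 5)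
    (t2 : (1 + S) * (1 + s) ^ 2 = S * t ^ 2) (tt : t ^ 2 = S - 2 * t) : False := by
  have ht : 0 ≤ t ^ 2 := sq_nonneg t
  have h1 : 1 < |s| := by rw [← one_lt_sq_iff_one_lt_abs]; linarith
  have h2 : |s| < 11 / 10 := abs_lt_of_sq_lt_sq (by linarith) (by norm_num)
  rcases le_or_gt s 0 with hs | hs
  · rw [abs_of_nonpos hs] at h1 h2
    have v1 : (1 + s) ^ 2 ≤ 1 / 100 := by
      have := pow_le_pow_left₀ (show 0 ≤ -(1 + s) by linarith) (show -(1 + s) ≤ 1 / 10 by linarith) 2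
      linarith [neg_sq (1 + s)]
    have v2 : S * t ^ 2 ≤ 11 / 5 * (1 / 100) := by
      rw [← t2]; exact mul_le_mul (by linarith) v1 (sq_nonneg _) (by norm_num)
    have v3 : 11 / 10 * t ^ 2 ≤ S * t ^ 2 := mul_le_mul_of_nonneg_right lo.le ht
    have v4 : (1 / 2) ^ 2 ≤ t ^ 2 := pow_le_pow_left₀ (by norm_num) (by linarith) 2
    linarith
  · rw [abs_of_pos hs] at h1 h2
    have v1 : 4 ≤ (1 + s) ^ 2 := by
      have := pow_le_pow_left₀ (show (0 : ℝ) ≤ 2 by norm_num) (show 2 ≤ 1 + s by linarith) 2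
      linarith
    have v2 : 21 / 10 * 4 ≤ S * t ^ 2 := by
      rw [← t2]; exact mul_le_mul (by linarith) v1 (by norm_num) (by linarith)
    have v3 : S * t ^ 2 ≤ 6 / 5 * t ^ 2 := mul_le_mul_of_nonneg_right hi.le ht
    have v4 : t ≤ -29 / 10 := by linarith
    nlinarith

/-- Incompatibility of limiting triples: `T0` on `a b c` and on `b c d`, `T1` on `a b d`. -/
theorem triple_alpha (ha : a ≠ 0) (hb : b ≠ 0) (hd : d ≠ 0) (h1 : T0 a b c)
    (h2 : T0 b c d) (h3 : T1 a b d) : False := by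
  have e := h3.eqn ha hb hd
  obtain ⟨r, hr, hr1, r1, r2⟩ := h1
  obtain ⟨s, hs, hs1, s1, s2⟩ := h2
  have k1 : ((1 + s) * (1 + r)) ^ 2 = s ^ 2 := by
    apply mul_left_cancel₀ hb; linear_combination (1 + s) ^ 2 * r2 - s2 + s1
  have k2 : (1 + r) ^ 2 = (1 + s ^ 2) * r ^ 2 := by
    apply mul_left_cancel₀ hb
    linear_combination (-r ^ 2) * h3.1 + r2 - r1 + r ^ 2 * s1
  have hA : a * r ^ 2 = -(b * (1 + r) ^ 2) := by linarith
  have hA' : a = -(b * (1 + s ^ 2)) := by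
    apply mul_right_cancel₀ (pow_ne_zero 2 hr); rw [hA, k2]; ring
  obtain ⟨S, hS⟩ : ∃ S, S = s ^ 2 := ⟨_, rfl⟩
  have hS0 : 0 < S := by rw [hS]; positivity
  have k3 : (1 + S) ^ 2 * S ^ 2 = S ^ 2 + (1 + S) ^ 2 := by
    rw [hA', s1, ← hS] at e
    apply mul_left_cancel₀ (pow_ne_zero 4 hb)
    linear_combination e
  have k4 : (S * (1 + S) - 1) ^ 2 = 2 := by linear_combination k3
  have lo : 11 / 10 < S := by
    by_contra h
    have h1 : S * (1 + S) ≤ 2.31 := by nlinarith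
    have h2 : 0 < S * (1 + S) := by positivity
    nlinarith
  have hi : S < 6 / 5 := by
    by_contra h
    have : 2.64 ≤ S * (1 + S) := by nlinarith
    nlinarith
  -- `t` is the ratio of distances read in the opposite direction
  obtain ⟨t, ht⟩ : ∃ t, t = r⁻¹ := ⟨_, rfl⟩
  have rt : r * t = 1 := by rw [ht]; exact mul_inv_cancel₀ hr
  have t1 : (1 + t) ^ 2 = 1 + S := by
    rw [← hS] at k2
    apply mul_left_cancel₀ (pow_ne_zero 2 hr)
    linear_combination k2 + (2 * r + r * t + 1) * rt
  have t2 : (1 + S) * (1 + s) ^ 2 = S * t ^ 2 := by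
    have k5 : (1 + s) ^ 2 * ((1 + S) * r ^ 2) = S := by
      rw [hS]; linear_combination k1 - (1 + s) ^ 2 * k2
    linear_combination t ^ 2 * k5 - (1 + S) * (1 + s) ^ 2 * (r * t + 1) * rt
  have tt : t ^ 2 = S - 2 * t := by linarith
  exact alpha_numeric hS lo hi t2 tt

/-- Either kind of limiting triple. -/
def T (a b c : ℝ) : Prop := T0 a b c ∨ T1 a b c

theorem T.mirror (h : T a b c) : T c b a :=
  h.imp (fun h => h.mirror) fun h => h.mirror

/-- Among four ordered masses `a b c d`, the three triples through the first one cannot all be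
limiting triples. -/
theorem triples_I (ha : a ≠ 0) (hb : b ≠ 0) (hc : c ≠ 0) (hd : d ≠ 0) (h1 : T a b c)
    (h2 : T a b d) (h3 : T a c d) : False := by
  rcases h1 with h1 | h1 <;> rcases h3 with h3 | h3
  · obtain ⟨s1, s2⟩ := h1.signs ha hb
    obtain ⟨s3, s4⟩ := h3.signs ha hc
    nlinarith [mul_pos s1 s3, sq_nonneg a]
  · obtain ⟨s1, s2⟩ := h1.signs ha hb
    rcases h2 with h2 | h2
    · exact absurd (h2.signs ha hb).1 (h3.sign ha hc hd).not_gt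
    · have : b = c := by linarith [h2.1, h3.1]
      rw [this] at s2; nlinarith
  · rcases h2 with h2 | h2
    · exact triple_gamma ha hb hc h1 h2 h3
    · have : d = c := by linarith [h2.1, h1.1]
      have := (h3.signs ha hc).2
      rw [‹d = c›] at this
      exact (mul_self_nonneg c).not_gt this
  · have e : b = d := by linarith [h1.1, h3.1]
    have l1 := (h1.lt ha hb hc).2
    have l2 := (h3.lt ha hc hd).2
    rw [e] at l1; linarith

/-- Among four ordered masses `a b c d`, the three triples through the second one cannot all be
limiting triples. Together with `triples_I` and the mirror symmetry this covers any three triples.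
-/
theorem triples_II (ha : a ≠ 0) (hb : b ≠ 0) (hc : c ≠ 0) (hd : d ≠ 0) (h1 : T a b c)
    (h2 : T a b d) (h3 : T b c d) : False := by
  rcases h2 with h2 | h2 <;> rcases h3 with h3 | h3
  · have := (h2.signs ha hb).2
    have := (h3.signs hb hc).1
    linarith
  · rcases h1 with h1 | h1
    · exact triple_beta hb hc hd h1 h2 h3
    · have := (h1.lt ha hb hc).2
      have := (h3.lt hb hc hd).1
      linarith
  · rcases h1 with h1 | h1
    · exact triple_alpha ha hb hd h1 h3 h2
    · have : d = c := by linarith [h2.1, h1.1]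
      have := (h3.signs hb hc).2
      rw [‹d = c›] at this
      exact (mul_self_nonneg c).not_gt this
  · have e : a = c := by linarith [h2.1, h3.1]
    have l1 := (h2.lt ha hb hd).1
    have l2 := (h3.lt hb hc hd).1
    rw [e] at l1; linarith

end Triples

/-! ### Collinear configurations: close pairs -/

section CoreIII

variable {L : Type*} [Field L] [Algebra ℝ L] {G : Type*} [AddCommGroup G] [LinearOrder G]
    [IsOrderedAddMonoid G] {K : Type*} [Field K]

local notation "C" => algebraMap ℝ L

/-- The sign of `j - i` for distinct indices. -/
def sg (i j : Fin 4) : ℝ := if i < j then 1 else -1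

theorem sg_lt {i j : Fin 4} (h : i < j) : sg i j = 1 := if_pos h
theorem sg_gt {i j : Fin 4} (h : j < i) : sg i j = -1 := if_neg h.not_gt
theorem sg_cases (i j : Fin 4) : sg i j = 1 ∨ sg i j = -1 := by unfold sg; split_ifs <;> simp
theorem sg_symm {i j : Fin 4} (h : i ≠ j) : sg j i = -sg i j := by
  rcases lt_or_gt_of_ne h with h | h
  · rw [sg_lt h, sg_gt h]
  · rw [sg_lt h, sg_gt h, neg_neg]
theorem sg_ne (i j : Fin 4) : sg i j ≠ 0 := by rcases sg_cases i j with h | h <;> simp [h]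

/-- Cancellation of the exponent in a relation between cubes with signs. -/
theorem sg_cube {s t a b : ℝ} (hs : s = 1 ∨ s = -1) (ht : t = 1 ∨ t = -1)
    (h : s * a ^ 3 = t * b ^ 3) : s * a = t * b := by
  have hs3 : s ^ 3 = s := by rcases hs with rfl | rfl <;> norm_num
  have ht3 : t ^ 3 = t := by rcases ht with rfl | rfl <;> norm_num
  have : (s * a) ^ 3 = (t * b) ^ 3 := by rw [mul_pow, mul_pow, hs3, ht3, h]
  exact (Odd.strictMono_pow (by decide : Odd 3)).injective this

/-- The acceleration of the body `i` caused by the body `j`, for bodies on a line numbered from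
left to right. -/
def force (m : Fin 4 → ℝ) (x : Fin 4 → L) (i j : Fin 4) : L :=
  C (sg i j * m j) * ((x i - x j) ^ 2)⁻¹

/-- Algebraic equations satisfied by collinear central configurations whose bodies are numbered
from left to right. The field `pos` is the only trace of the order that is kept besides the
signs of the forces. -/
structure CoreIII (m : Fin 4 → ℝ) (σ : ℝ) (x : Fin 4 → L) : Prop where
  hm : ∀ i, m i ≠ 0
  hσ : σ ≠ 0
  ne : ∀ i j, i ≠ j → x i ≠ x j
  eqn : ∀ i j k l, D4 i j k l → C σ * x i = force m x i j + force m x i k + force m x i l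
  pos : ∀ i j k l, i ≠ j → k ≠ l →
    C (sg i j) * (x j - x i) + C (sg k l) * (x l - x k) ≠ 0

namespace CoreIII
open Place

variable {m : Fin 4 → ℝ} {σ : ℝ} {x : Fin 4 → L}
  (H : CoreIII m σ x) (P : Place L G K) {i j k l : Fin 4}

local notation "f" => force m x

include H

theorem sub_ne (h : i ≠ j) : x i - x j ≠ 0 := sub_ne_zero.2 (H.ne i j h)

omit H in
theorem v_symm (i j : Fin 4) : P.s (x i - x j) = P.s (x j - x i) := by
  rw [← s_neg, neg_sub]

theorem s_inv_sq (h : i ≠ j) : P.s ((x i - x j) ^ 2)⁻¹ = -(2 • P.s (x i - x j)) := by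
  rw [s_inv (pow_ne_zero 2 (H.sub_ne h)), s_pow (H.sub_ne h)]

theorem s_f (h : i ≠ j) : P.s (f i j) = -(2 • P.s (x i - x j)) := by
  unfold force
  rw [s_real_mul (mul_ne_zero (sg_ne i j) (H.hm j)) (inv_ne_zero (pow_ne_zero 2 (H.sub_ne h))),
    H.s_inv_sq P h]

theorem f_ne (h : i ≠ j) : f i j ≠ 0 :=
  mul_ne_zero (cst_ne L (mul_ne_zero (sg_ne i j) (H.hm j)))
    (inv_ne_zero (pow_ne_zero 2 (H.sub_ne h)))

omit H in
theorem f_sub (h : i ≠ j) : f i j - f j i = C (sg i j * (m i + m j)) * ((x i - x j) ^ 2)⁻¹ := by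
  unfold force
  rw [sg_symm h, ← neg_sub (x i) (x j), neg_sq, ← sub_mul, ← map_sub]
  congr 2; ring

/-- The difference of the equations of `i` and `j`. -/
theorem diff (D : D4 i j k l) : C σ * (x i - x j) =
    (f i j - f j i) + ((f i k - f j k) + (f i l - f j l)) := by
  rw [mul_sub, H.eqn _ _ _ _ D, H.eqn _ _ _ _ D.a]; ring

theorem s_σ (h : i ≠ j) : P.s (C σ * (x i - x j)) = P.s (x i - x j) :=
  s_real_mul H.hσ (H.sub_ne h)

/-- A triangle with a short side is isosceles. -/
theorem tri (h : P.s (x i - x j) < P.s (x i - x k)) (hik : i ≠ k) :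
    P.s (x j - x k) = P.s (x i - x k) := by
  have h1 := dom (P := P) (x := x i - x k) (y := -(x i - x j)) (H.sub_ne hik) (lt_s h).neg
  rw [← h1.2]; congr 1; ring

/-- If the bodies `i` and `j` attract each other with an acceleration of larger order than all
others, the distance to a third body has the same order as this acceleration. -/
theorem closest_aux (D : D4 i j k l)
    (h1 : P.s (x i - x j) < P.s (x i - x k)) (h2 : P.s (x i - x j) < P.s (x i - x l))
    (h3 : P.s (x i - x j) < P.s (x j - x k)) (h5 : P.s (x i - x j) < P.s (x k - x l)) :
    P.s (x i - x k) = -(2 • P.s (x i - x j)) := by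
  have e := H.diff D.b
  have e2 : C σ * (x i - x k) = f i j + ((f i k - f k i) + (-f k j + (f i l - f k l))) := by
    rw [e]; ring
  have l : ∀ p q, p ≠ q → P.s (x i - x j) < P.s (x p - x q) → P.lt (f p q) (P.s (f i j)) := by
    intro p q hpq h
    refine lt_s ?_
    rw [H.s_f P hpq, H.s_f P D.ij]; grind
  have h1' := h1; rw [v_symm P i k] at h1'
  have h3' := h3; rw [v_symm P j k] at h3'
  have := dom (P := P) (H.f_ne D.ij) (((l _ _ D.ik h1).sub (l _ _ D.ik.symm h1')).add
    ((l _ _ D.jk.symm h3').neg.add ((l _ _ D.il h2).sub (l _ _ D.kl h5))))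
  rw [← e2, H.s_σ P D.ik, H.s_f P D.ij] at this
  exact this.2

/-- No pair of bodies is closer than all other pairs. -/
theorem closest (D : D4 i j k l)
    (h1 : P.s (x i - x j) < P.s (x i - x k)) (h2 : P.s (x i - x j) < P.s (x i - x l))
    (h5 : P.s (x i - x j) < P.s (x k - x l)) : False := by
  have h3 := H.tri P h1 D.ik
  have h4 := H.tri P h2 D.il
  have e1 := H.closest_aux P D h1 h2 (by rwa [h3]) h5
  have e2 := H.closest_aux P D.c h2 h1 (by rwa [h4]) (by rwa [v_symm P l k])
  have e := H.diff D
  have r : ∀ p q, p ≠ q → P.s (x p - x q) = -(2 • P.s (x i - x j)) →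
      P.le (f p q) (4 • P.s (x i - x j)) := by
    intro p q hpq h
    refine le_s ?_
    rw [H.s_f P hpq, h]; grind
  have hr := ((r _ _ D.ik e1).sub (r _ _ D.jk (h3.trans e1))).add
    ((r _ _ D.il e2).sub (r _ _ D.jl (h4.trans e2)))
  by_cases hM : m i + m j = 0
  · rw [f_sub D.ij, hM, mul_zero, map_zero, zero_mul, zero_add] at e
    rw [← e] at hr
    have := hr (mul_ne_zero (cst_ne L H.hσ) (H.sub_ne D.ij))
    rw [H.s_σ P D.ij] at this
    grind
  · have hne : sg i j * (m i + m j) ≠ 0 := mul_ne_zero (sg_ne _ _) hM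
    have hx := inv_ne_zero (pow_ne_zero 2 (H.sub_ne D.ij))
    have hs : P.s (f i j - f j i) = -(2 • P.s (x i - x j)) := by
      rw [f_sub D.ij, s_real_mul hne hx, H.s_inv_sq P D.ij]
    have hf : f i j - f j i ≠ 0 := by
      rw [f_sub D.ij]; exact mul_ne_zero (cst_ne L hne) hx
    have := (dom (P := P) hf (hr.trans_lt (by rw [hs]; grind))).2
    rw [← e, H.s_σ P D.ij, hs] at this
    grind

/-- Two close pairs of the same size at mutual distances of size `B`: the mass of a pair vanishes,
since otherwise the attraction inside the pair would fix its size to be that of an infinitesimal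
acceleration. -/
theorem pairs_mass {B : G} (D : D4 i j k l) (he : P.s (x i - x j) = P.s (x k - x l))
    (hij : P.s (x i - x j) < B) (hik : P.s (x i - x k) = B) (hil : P.s (x i - x l) = B)
    (hjk : P.s (x j - x k) = B) (hjl : P.s (x j - x l) = B) :
    m i + m j = 0 ∧ P.s (x i - x j) ≤ -(2 • B) := by
  have r : ∀ p q, p ≠ q → P.s (x p - x q) = B → P.le (f p q) (-(2 • B)) := by
    intro p q hpq h
    refine le_s ?_
    rw [H.s_f P hpq, h]
  have hr := ((r _ _ D.ik hik).sub (r _ _ D.jk hjk)).add ((r _ _ D.il hil).sub (r _ _ D.jl hjl))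
  have e := H.diff D
  by_cases hM : m i + m j = 0
  · refine ⟨hM, ?_⟩
    rw [f_sub D.ij, hM, mul_zero, map_zero, zero_mul, zero_add] at e
    rw [← e] at hr
    have := hr (mul_ne_zero (cst_ne L H.hσ) (H.sub_ne D.ij))
    rwa [H.s_σ P D.ij] at this
  · exfalso
    have hne : sg i j * (m i + m j) ≠ 0 := mul_ne_zero (sg_ne _ _) hM
    have hx := inv_ne_zero (pow_ne_zero 2 (H.sub_ne D.ij))
    have hs : P.s (f i j - f j i) = -(2 • P.s (x i - x j)) := by
      rw [f_sub D.ij, s_real_mul hne hx, H.s_inv_sq P D.ij]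
    have hf : f i j - f j i ≠ 0 := by
      rw [f_sub D.ij]; exact mul_ne_zero (cst_ne L hne) hx
    have h0 := (dom (P := P) hf (hr.trans_lt (by rw [hs]; grind))).2
    rw [← e, H.s_σ P D.ij, hs] at h0
    have e2 := H.diff D.b
    have z : ∀ p q, p ≠ q → 0 ≤ P.s (x p - x q) → P.le (f p q) 0 := by
      intro p q hpq h
      refine le_s ?_
      rw [H.s_f P hpq]; grind
    have h2 := ((z _ _ D.ik (by grind)).sub (z _ _ D.ik.symm (by rw [v_symm P]; grind))).add
      (((z _ _ D.ij (by grind)).sub (z _ _ D.jk.symm (by rw [v_symm P]; grind))).add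
      ((z _ _ D.il (by grind)).sub (z _ _ D.kl (by grind))))
    rw [← e2] at h2
    have := h2 (mul_ne_zero (cst_ne L H.hσ) (H.sub_ne D.ik))
    rw [H.s_σ P D.ik] at this
    grind

/-- The first moment of the masses vanishes. -/
theorem center (D : D4 i j k l) :
    C (m i) * x i + C (m j) * x j + C (m k) * x k + C (m l) * x l = 0 := by
  apply mul_left_cancel₀ (cst_ne L H.hσ)
  have e1 := H.eqn i j k l D
  have e2 := H.eqn j i k l D.a
  have e3 := H.eqn k i j l D.b.a
  have e4 := H.eqn l i j k D.c.b.a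
  have s : ∀ p q, p ≠ q → C (m p) * f p q = -(C (m q) * f q p) := by
    intro p q h
    unfold force
    rw [sg_symm h, ← neg_sub (x p) (x q), neg_sq]
    simp only [map_mul, map_neg]; ring
  linear_combination C (m i) * e1 + C (m j) * e2 + C (m k) * e3 + C (m l) * e4 +
    s i j D.ij + s i k D.ik + s i l D.il + s j k D.jk + s j l D.jl + s k l D.kl

/-- Two close pairs of bodies far from each other are impossible. -/
theorem pairs_false {B : G} (D : D4 i j k l)
    (hij : P.s (x i - x j) < B) (hkl : P.s (x k - x l) < B)
    (hik : P.s (x i - x k) = B) (hil : P.s (x i - x l) = B)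
    (hjk : P.s (x j - x k) = B) (hjl : P.s (x j - x l) = B) : False := by
  have he : P.s (x i - x j) = P.s (x k - x l) := by
    rcases lt_trichotomy (P.s (x i - x j)) (P.s (x k - x l)) with h | h | h
    · exact (H.closest P D (by rwa [hik]) (by rwa [hil]) h).elim
    · exact h
    · refine (H.closest P (i := k) (j := l) (k := i) (l := j) (by have := D; unfold D4 at *; tauto)
        ?_ ?_ h).elim
      · rwa [v_symm P k i, hik]
      · rwa [v_symm P k j, hjk]
  obtain ⟨m1, b1⟩ := H.pairs_mass P D he hij hik hil hjk hjl
  obtain ⟨m2, b2⟩ := H.pairs_mass P (i := k) (j := l) (k := i) (l := j) (B := B)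
    (by have := D; unfold D4 at *; tauto) he.symm hkl (by rwa [v_symm P]) (by rwa [v_symm P])
    (by rwa [v_symm P]) (by rwa [v_symm P])
  have hmi : m i = -m j := by linarith
  have hmk : m k = -m l := by linarith
  have hc := H.center D
  rw [hmi, hmk, map_neg, map_neg] at hc
  have hde : C (m j) * (x j - x i) = -(C (m l) * (x l - x k)) := by linear_combination hc
  -- the forces inside the two pairs agree to leading order
  have hlt : P.lt (f i j - f k l) (-(2 • P.s (x i - x j))) := by
    have e := H.diff D.b
    have z : ∀ p q, p ≠ q → P.s (x p - x q) = B → P.lt (f p q) (-(2 • P.s (x i - x j))) := by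
      intro p q hpq h
      refine lt_s ?_
      rw [H.s_f P hpq]; grind
    have e' : f i j - f k l = C σ * (x i - x k) - ((f i k - f k i) + (f i l - f k j)) := by
      rw [e]; ring
    rw [e']
    refine lt.sub (lt_s ?_) (((z _ _ D.ik hik).sub (z _ _ D.ik.symm (by rwa [v_symm P]))).add
      ((z _ _ D.il hil).sub (z _ _ D.jk.symm (by rwa [v_symm P]))))
    rw [H.s_σ P D.ik]; grind
  have hml := cst_ne L (H.hm l)
  have hmj := cst_ne L (H.hm j)
  have hx := inv_ne_zero (pow_ne_zero 2 (H.sub_ne D.ij))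
  have hrat : f i j - f k l =
      C (sg i j * m j - sg k l * (m l ^ 3 / m j ^ 2)) * ((x i - x j) ^ 2)⁻¹ := by
    have h1 : ((x k - x l) ^ 2)⁻¹ = C (m l ^ 2 / m j ^ 2) * ((x i - x j) ^ 2)⁻¹ := by
      rw [map_div₀, map_pow, map_pow]
      have a1 := H.sub_ne D.ij
      have a2 := H.sub_ne D.kl
      field_simp
      linear_combination (C (m j) * (x i - x j) - C (m l) * (x k - x l)) * (-hde)
    unfold force
    rw [h1, map_sub, map_mul, map_mul, map_mul, map_div₀, map_div₀]
    simp only [map_pow]; ring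
  have h0 : sg i j * m j - sg k l * (m l ^ 3 / m j ^ 2) = 0 := by
    by_contra hne
    rw [hrat] at hlt
    refine not_lt_self (P := P) hx ?_
    rw [H.s_inv_sq P D.ij]
    exact hlt.of_real_mul hne
  have h3 : sg i j * m j ^ 3 = sg k l * m l ^ 3 := by
    have := H.hm j
    field_simp at h0
    linarith
  have h4 := sg_cube (sg_cases i j) (sg_cases k l) h3
  refine H.pos i j k l D.ij D.kl (mul_left_cancel₀ hmj ?_)
  have h4' : C (sg i j) * C (m j) = C (sg k l) * C (m l) := by rw [← map_mul, ← map_mul, h4]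
  have q : C (sg i j) * C (sg i j) = 1 := by
    rw [← map_mul]; rcases sg_cases i j with h | h <;> simp [h]
  have q' : C (sg k l) * C (sg k l) = 1 := by
    rw [← map_mul]; rcases sg_cases k l with h | h <;> simp [h]
  linear_combination C (sg i j) * hde + (x l - x k) * (C (sg i j) * C (sg k l) * h4' -
    C (sg k l) * C (m j) * q + C (sg i j) * C (m l) * q')
end CoreIII
end CoreIII

/-! ### Collinear configurations: clusters of three bodies -/

section CoreIII

variable {L : Type*} [Field L] [Algebra ℝ L] {G : Type*} [AddCommGroup G] [LinearOrder G]
    [IsOrderedAddMonoid G] {K : Type*} [Field K]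

local notation "C" => algebraMap ℝ L

namespace CoreIII
open Place

variable {m : Fin 4 → ℝ} {σ : ℝ} {x : Fin 4 → L}
  (H : CoreIII m σ x) (P : Place L G K) {i j k l : Fin 4}

local notation "f" => force m x

/-- The limiting accelerations `b + c * W`, `-a + c * R`, `-(a * W) - b * R` of three clustered
bodies, in units where the limits of the inverse squared distances are `1`, `R` and `W`,
being equal, and `r` being the limiting ratio of distances; if the common acceleration does not
vanish then the center of mass relation determines `r`. -/
theorem residue_triple {a b c : ℝ} (ha : a ≠ 0) (hb : b ≠ 0) (hc : c ≠ 0) {r R W : K}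
    (hR : R * r ^ 2 = 1) (hW : W * (1 + r) ^ 2 = 1)
    (e1 : P.φ b + P.φ c * W = -P.φ a + P.φ c * R)
    (e2 : P.φ b + P.φ c * W = -(P.φ a * W) - P.φ b * R)
    (h : P.φ b + P.φ c * W ≠ 0 → a + b + c = 0 → P.φ c * r = P.φ a) : T a b c := by
  have pa := P.φ_ne ha
  have pb := P.φ_ne hb
  have pc := P.φ_ne hc
  have h2 := P.two_ne
  by_cases h0 : P.φ b + P.φ c * W = 0
  · left
    have hr2 : r ^ 2 = P.φ (c / a) := by
      rw [map_div₀, eq_div_iff pa]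
      linear_combination (-r ^ 2) * (h0 - e1) + P.φ c * hR - 2 * P.φ c * hR + 2 * P.φ c * hR
    have hr1 : (1 + r) ^ 2 = P.φ (-c / b) := by
      rw [map_div₀, map_neg, eq_div_iff pb]
      linear_combination ((1 + r) ^ 2) * h0 - P.φ c * hW
    have hr : r = P.φ ((-c / b - 1 - c / a) / 2) := by
      rw [map_div₀, map_sub, map_sub, ← hr1, ← hr2, map_one, map_ofNat, eq_div_iff h2]
      ring
    generalize (-c / b - 1 - c / a) / 2 = q at hr
    rw [hr, ← map_pow] at hr2
    rw [hr, ← map_one P.φ, ← map_add, ← map_pow] at hr1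
    have q2 := P.φ.injective hr2
    have q1 := P.φ.injective hr1
    refine ⟨q, ?_, ?_, ?_, ?_⟩
    · rintro rfl
      rw [hr, map_zero] at hR; simp at hR
    · intro hq
      rw [hr, ← map_one P.φ, ← map_add, hq, map_zero] at hW; simp at hW
    · rw [q2]; field_simp
    · rw [q1]; field_simp
  · right
    have hM : a + b + c = 0 := by
      apply P.φ.injective
      rw [map_zero, map_add, map_add]
      refine (mul_eq_zero.1 ?_).resolve_left h0
      linear_combination P.φ b * e1 + P.φ c * e2
    have hr := h h0 hM
    refine ⟨hM, ?_⟩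
    have hb' : P.φ b = -(P.φ a + P.φ c) := by
      have := congrArg P.φ hM
      rw [map_add, map_add, map_zero] at this
      linear_combination this
    have hWR : W = 1 + R := by
      apply mul_left_cancel₀ pc
      linear_combination e1 - hb'
    have hR' : R = P.φ (c ^ 2 / a ^ 2) := by
      rw [map_div₀, map_pow, map_pow, eq_div_iff (pow_ne_zero 2 pa), ← hr]
      linear_combination P.φ c ^ 2 * hR
    have hW' : W = P.φ (c ^ 2 / b ^ 2) := by
      rw [map_div₀, map_pow, map_pow, eq_div_iff (pow_ne_zero 2 pb), hb', ← hr]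
      linear_combination P.φ c ^ 2 * hW
    rw [hR', hW', ← map_one P.φ, ← map_add] at hWR
    have := P.φ.injective hWR
    field_simp at this ⊢
    linarith

include H

/-- In a cluster of three bodies `i`, `j`, `k` far from `l`, the body `k` is not farther from `i`
than `j` is, in the sense of sizes: otherwise `i` and `j` would be closer than all other pairs. -/
theorem triple_equal {B : G} (D : D4 i j k l) (hij : P.s (x i - x j) < B)
    (hil : P.s (x i - x l) = B) (hkl : P.s (x k - x l) = B) :
    P.s (x i - x k) ≤ P.s (x i - x j) := by
  by_contra h
  exact H.closest P D (_root_.not_le.1 h) (by rwa [hil]) (by rwa [hkl])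

/-- A cluster of three bodies far from the fourth one satisfies the real relation `T`. -/
theorem triple {B : G} {l : Fin 4} (hn : ∀ p q, p ≠ l → q ≠ l → p ≠ q → P.s (x p - x q) < B)
    (hf : ∀ p, p ≠ l → P.s (x p - x l) = B) {a b c : Fin 4} (D : D4 a b c l) (hab : a < b)
    (hbc : b < c) : T (m a) (m b) (m c) := by
  have hac := hab.trans hbc
  obtain ⟨d, hd⟩ : ∃ d, d = P.s (x a - x b) := ⟨_, rfl⟩
  have al := D.il; have bl := D.jl; have cl := D.kl
  have dB : d < B := hd ▸ hn _ _ al bl D.ij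
  have t1 := H.triple_equal P D (hn _ _ al bl D.ij) (hf _ al) (hf _ cl)
  have t2 := H.triple_equal P D.b (hn _ _ al cl D.ik) (hf _ al) (hf _ bl)
  have t3 := H.triple_equal P D.a (hn _ _ bl al D.ij.symm) (hf _ bl) (hf _ cl)
  have t4 := H.triple_equal P D.a.b (hn _ _ bl cl D.jk) (hf _ bl) (hf _ al)
  have dab : P.s (x a - x b) = d := hd.symm
  have dba : P.s (x b - x a) = d := by rw [v_symm P, dab]
  have dac : P.s (x a - x c) = d := by rw [← dab]; exact le_antisymm t1 t2
  have dca : P.s (x c - x a) = d := by rw [v_symm P, dac]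
  have dbc : P.s (x b - x c) = d := by rw [← dba]; exact le_antisymm t3 t4
  have dcb : P.s (x c - x b) = d := by rw [v_symm P, dbc]
  have far : ∀ p, p ≠ l → P.s (f p l) = -(2 • B) := fun p hp => by rw [H.s_f P hp, hf p hp]
  have far' : ∀ p, p ≠ l → P.s (f l p) = -(2 • B) := fun p hp => by
    rw [H.s_f P hp.symm, v_symm P, hf p hp]
  have ea := H.eqn _ _ _ _ D
  have eb := H.eqn _ _ _ _ D.a
  have ec := H.eqn _ _ _ _ D.b.a
  have el := H.eqn l a b c (by have := D; unfold D4 at *; tauto)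
  have two : (-(2 • B) : G) < -(2 • d) := by grind
  have hd0 : B ≤ (-(2 • d) : G) := by
    have e : C σ * (x a - x l) = f a b + f a c + f a l - (f l a + f l b + f l c) := by
      rw [mul_sub, ea, el]
    have := (((le_s (H.s_f P D.ij).le).add (le_s ((H.s_f P D.ik).trans (by rw [dac, dab])).le)).add
      (le_s (g := -(2 • P.s (x a - x b))) (by rw [far _ al, dab]; exact two.le))).sub
      (((le_s (g := -(2 • P.s (x a - x b))) (by rw [far' _ al, dab]; exact two.le)).add
      (le_s (by rw [far' _ bl, dab]; exact two.le))).add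
      (le_s (by rw [far' _ cl, dab]; exact two.le)))
    rw [← e] at this
    have := this (mul_ne_zero (cst_ne L H.hσ) (H.sub_ne al))
    rwa [H.s_σ P al, hf _ al, dab] at this
  have sab : x a - x b ≠ 0 := H.sub_ne D.ij
  have sbc : x b - x c ≠ 0 := H.sub_ne D.jk
  have sac : x a - x c ≠ 0 := H.sub_ne D.ik
  -- the ratio of distances
  obtain ⟨g, hg⟩ : ∃ g, g = (x b - x c) / (x a - x b) := ⟨_, rfl⟩
  have g0 : g ≠ 0 := by rw [hg]; exact div_ne_zero sbc sab
  have gs : P.s g = 0 := by rw [hg, s_div sbc sab, dbc, dab, sub_self]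
  have hg1 : 1 + g = (x a - x c) / (x a - x b) := by rw [hg]; field_simp; ring
  have g10 : 1 + g ≠ 0 := by rw [hg1]; exact div_ne_zero sac sab
  have g1s : P.s (1 + g) = 0 := by rw [hg1, s_div sac sab, dac, dab, sub_self]
  obtain ⟨R, hR⟩ : ∃ R, R = (g ^ 2)⁻¹ := ⟨_, rfl⟩
  obtain ⟨W, hW⟩ : ∃ W, W = ((1 + g) ^ 2)⁻¹ := ⟨_, rfl⟩
  have Rg : R * g ^ 2 = 1 := by rw [hR]; exact inv_mul_cancel₀ (pow_ne_zero 2 g0)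
  have Wg : W * (1 + g) ^ 2 = 1 := by rw [hW]; exact inv_mul_cancel₀ (pow_ne_zero 2 g10)
  have Rle : P.le R 0 := by
    rw [hR]; exact le_s (by rw [s_inv (pow_ne_zero 2 g0), s_pow g0, gs]; simp)
  have Wle : P.le W 0 := by
    rw [hW]; exact le_s (by rw [s_inv (pow_ne_zero 2 g10), s_pow g10, g1s]; simp)
  have gle : P.le g 0 := le_s gs.le
  have g1le : P.le (1 + g) 0 := le_s g1s.le
  have fab : (x a - x b) ^ 2 * f a b = C (m b) := by
    unfold force; rw [sg_lt hab, one_mul]; field_simp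
  have fba : (x a - x b) ^ 2 * f b a = -C (m a) := by
    unfold force
    rw [sg_gt hab, ← neg_sub (x a) (x b), neg_sq, map_mul, map_neg, map_one]; field_simp
  have fac : (x a - x b) ^ 2 * f a c = C (m c) * W := by
    unfold force; rw [sg_lt hac, one_mul, hW, hg1]; field_simp
  have fca : (x a - x b) ^ 2 * f c a = -(C (m a) * W) := by
    unfold force
    rw [sg_gt hac, ← neg_sub (x a) (x c), neg_sq, map_mul, map_neg, map_one, hW, hg1]; field_simp
  have fbc : (x a - x b) ^ 2 * f b c = C (m c) * R := by
    unfold force; rw [sg_lt hbc, one_mul, hR, hg]; field_simp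
  have fcb : (x a - x b) ^ 2 * f c b = -(C (m b) * R) := by
    unfold force
    rw [sg_gt hbc, ← neg_sub (x b) (x c), neg_sq, map_mul, map_neg, map_one, hR, hg]; field_simp
  have sq : P.s ((x a - x b) ^ 2) = 2 • d := by rw [s_pow sab, dab]
  -- differences of the accelerations caused by the fourth body are negligible
  have small : ∀ p q, p ≠ l → q ≠ l → p ≠ q → P.lt ((x a - x b) ^ 2 *
      (C σ * (x p - x q) - (f p l - f q l))) 0 := by
    intro p q hp hq hpq
    have h1 : P.lt (C σ * (x p - x q) - (f p l - f q l)) (-(2 • d)) := by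
      refine lt.sub (lt_s ?_) ((lt_s ?_).sub (lt_s ?_))
      · rw [H.s_σ P hpq]; exact (hn p q hp hq hpq).trans_le hd0
      · rw [far p hp]; exact two
      · rw [far q hq]; exact two
    have := (le_s sq.le).mul_lt h1
    rwa [add_neg_cancel] at this
  have bW : P.le (C (m b) + C (m c) * W) 0 := (le_real _).add (Wle.real_mul _)
  have aR : P.le (-C (m a) + C (m c) * R) 0 := (le_real _).neg.add (Rle.real_mul _)
  have aWbR : P.le (-(C (m a) * W) - C (m b) * R) 0 := (Wle.real_mul _).neg.sub (Rle.real_mul _)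
  have rbW : P.res (C (m b) + C (m c) * W) = P.φ (m b) + P.φ (m c) * P.res W := by
    rw [res_add (le_real _) (Wle.real_mul _), P.res_real, res_real_mul Wle]
  have raR : P.res (-C (m a) + C (m c) * R) = -P.φ (m a) + P.φ (m c) * P.res R := by
    rw [res_add (le_real _).neg (Rle.real_mul _), res_neg (le_real _), P.res_real,
      res_real_mul Rle]
  have raWbR : P.res (-(C (m a) * W) - C (m b) * R) =
      -(P.φ (m a) * P.res W) - P.φ (m b) * P.res R := by
    rw [res_sub (Wle.real_mul _).neg (Rle.real_mul _), res_neg (Wle.real_mul _),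
      res_real_mul Wle, res_real_mul Rle]
  refine residue_triple P (H.hm a) (H.hm b) (H.hm c) (r := P.res g) (R := P.res R) (W := P.res W)
    ?_ ?_ ?_ ?_ ?_
  · rw [← res_pow gle, ← res_mul Rle (gle.pow 2), Rg, res_one]
  · rw [← res_one (P := P), ← res_add le_one gle, ← res_pow g1le,
      ← res_mul Wle (g1le.pow 2), Wg]
  · rw [← rbW, ← raR]
    refine res_eq bW aR ?_
    have := small a b al bl D.ij
    rw [mul_sub (C σ), ea, eb] at this
    have e : C (m b) + C (m c) * W - (-C (m a) + C (m c) * R) = (x a - x b) ^ 2 *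
        (f a b + f a c + f a l - (f b a + f b c + f b l) - (f a l - f b l)) := by
      linear_combination -fab - fac + fba + fbc
    rwa [e]
  · rw [← rbW, ← raWbR]
    refine res_eq bW aWbR ?_
    have := small a c al cl D.ik
    rw [mul_sub (C σ), ea, ec] at this
    have e : C (m b) + C (m c) * W - (-(C (m a) * W) - C (m b) * R) = (x a - x b) ^ 2 *
        (f a b + f a c + f a l - (f c a + f c b + f c l) - (f a l - f c l)) := by
      linear_combination -fab - fac + fca + fcb
    rwa [e]
  · intro h0 hM
    rw [← rbW] at h0
    have h0' : ¬ P.lt (C (m b) + C (m c) * W) 0 := fun h => h0 (res_eq_zero_of_lt h)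
    obtain ⟨n0, n1⟩ := Place.not_lt h0'
    -- the cluster has a nonzero acceleration, which must move it with respect to the fourth body
    have hB : B = (-(2 • d) : G) := by
      refine le_antisymm hd0 ?_
      have e : (f a b + f a c) = C σ * (x a - x l) - (f a l - (f l a + f l b + f l c)) := by
        rw [mul_sub, ea, el]; ring
      have n2 : P.s (f a b + f a c) = P.s (C (m b) + C (m c) * W) - 2 • d := by
        rw [← sq, ← s_div n0 (pow_ne_zero 2 sab)]
        congr 1; rw [← fab, ← fac]; field_simp
      have n3 : f a b + f a c ≠ 0 := by
        intro h; apply n0; rw [← fab, ← fac, ← mul_add, h, mul_zero]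
      by_contra hlt
      have hlt := _root_.not_le.1 hlt
      have hh := (lt_s (P := P) (x := C σ * (x a - x l)) (g := -(2 • d))
        (by rwa [H.s_σ P al, hf _ al])).sub
        ((lt_s (by rw [far _ al]; exact two)).sub (((lt_s (by rw [far' _ al]; exact two)).add
        (lt_s (by rw [far' _ bl]; exact two))).add (lt_s (by rw [far' _ cl]; exact two))))
      rw [← e] at hh
      have := hh n3
      rw [n2] at this
      grind
    -- the internal forces do not contribute to the moment of the cluster
    have moment : C σ * (C (m a) * (x a - x b) - C (m c) * (x b - x c)) =
        C (m a) * f a l + C (m b) * f b l + C (m c) * f c l := by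
      have hMC : C (m a) + C (m b) + C (m c) = 0 := by
        rw [← map_add, ← map_add, hM, map_zero]
      have s : ∀ p q, p ≠ q → C (m p) * f p q = -(C (m q) * f q p) := by
        intro p q h
        unfold force
        rw [sg_symm h, ← neg_sub (x p) (x q), neg_sq]
        simp only [map_mul, map_neg]; ring
      linear_combination C (m a) * ea + C (m b) * eb + C (m c) * ec - C σ * x b * hMC +
        s a b D.ij + s a c D.ik + s b c D.jk
    have dneg : (-(2 • B) : G) < d := by grind
    have hl : P.lt (C σ * (C (m a) * (x a - x b) - C (m c) * (x b - x c))) d := by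
      rw [moment]
      exact (((lt_s (by rw [far _ al]; exact dneg)).real_mul _).add
        ((lt_s (by rw [far _ bl]; exact dneg)).real_mul _)).add
        ((lt_s (by rw [far _ cl]; exact dneg)).real_mul _)
    have hl' := hl.of_real_mul H.hσ
    have hl2 : P.lt (C (m c) * g - C (m a)) 0 := by
      have e : C (m c) * g - C (m a) =
          -((C (m a) * (x a - x b) - C (m c) * (x b - x c)) * (x a - x b)⁻¹) := by
        rw [hg]; field_simp; ring
      rw [e]
      have := (hl'.mul_le (le_s (x := (x a - x b)⁻¹) (s_inv sab).le)).neg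
      rwa [dab, add_neg_cancel] at this
    have := res_eq (gle.real_mul (m c)) (le_real (m a)) hl2
    rwa [res_real_mul gle, P.res_real] at this

/-- Every ordered triple of bodies avoiding `l` is a limiting triple. -/
def Tri (m : Fin 4 → ℝ) (l : Fin 4) : Prop :=
  ∀ a b c, D4 a b c l → a < b → b < c → T (m a) (m b) (m c)

/-- If `i` and `j` are much closer than some pair, they belong to a cluster of three bodies, the
fourth one being `k` or `l`: two clusters of two bodies, or a single one, are impossible. -/
theorem tri_or {p q : Fin 4} (hpq : p ≠ q) (D : D4 i j k l)
    (h : P.s (x i - x j) < P.s (x p - x q)) : Tri m k ∨ Tri m l := by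
  obtain ⟨⟨p0, q0⟩, hmem, hmax⟩ := Finset.exists_max_image
    (Finset.univ.filter fun z : Fin 4 × Fin 4 => z.1 ≠ z.2) (fun z => P.s (x z.1 - x z.2))
    ⟨(p, q), by simpa using hpq⟩
  simp only [Finset.mem_filter, Finset.mem_univ, true_and] at hmem hmax
  obtain ⟨B, hB⟩ : ∃ B, B = P.s (x p0 - x q0) := ⟨_, rfl⟩
  have hle : ∀ a b, a ≠ b → P.s (x a - x b) ≤ B := fun a b hab => hB ▸ hmax (a, b) hab
  have hij : P.s (x i - x j) < B := h.trans_le (hle p q hpq)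
  -- being closer than the diameter is an equivalence relation
  have tr : ∀ a b c, P.lt (x a - x b) B → P.lt (x b - x c) B → P.lt (x a - x c) B := by
    intro a b c h1 h2
    have := h1.add h2
    rwa [sub_add_sub_cancel] at this
  have sy : ∀ a b, P.lt (x a - x b) B → P.lt (x b - x a) B := by
    intro a b h
    have := h.neg
    rwa [neg_sub] at this
  have eqB : ∀ a b, a ≠ b → ¬ P.lt (x a - x b) B → P.s (x a - x b) = B := fun a b hab h =>
    le_antisymm (hle a b hab) (Place.not_lt h).2
  have hd : ¬ P.lt (x p0 - x q0) B := fun h =>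
    absurd (h (H.sub_ne hmem)) (by rw [hB]; exact lt_irrefl _)
  have nij : P.lt (x i - x j) B := lt_s hij
  have refl : ∀ a, P.lt (x a - x a) B := fun a => by rw [sub_self]; exact lt_zero
  -- a cluster of three bodies containing `i`
  have cluster : ∀ k l, D4 i j k l → P.lt (x i - x k) B → Tri m l := by
    intro k l D hik
    have hil : ¬ P.lt (x i - x l) B := by
      intro hil
      have all : ∀ a, P.lt (x i - x a) B := fun a => by
        rcases D.cases a with rfl | rfl | rfl | rfl
        exacts [refl _, nij, hik, hil]
      exact hd (tr _ _ _ (sy _ _ (all p0)) (all q0))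
    have near : ∀ a, a ≠ l → P.lt (x i - x a) B := fun a ha => by
      rcases D.cases a with rfl | rfl | rfl | rfl
      exacts [refl _, nij, hik, absurd rfl ha]
    intro a b c D' hab hbc
    refine H.triple P (B := B) (l := l) (fun u v hu hv huv => ?_) (fun u hu => ?_) D' hab hbc
    · exact tr _ _ _ (sy _ _ (near u hu)) (near v hv) (H.sub_ne huv)
    · exact eqB _ _ hu fun h => hil (tr _ _ _ (near u hu) h)
  by_cases hik : P.lt (x i - x k) B
  · exact Or.inr (cluster k l D hik)
  by_cases hil : P.lt (x i - x l) B
  · exact Or.inl (cluster l k D.c hil)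
  exfalso
  have hjk : ¬ P.lt (x j - x k) B := fun h => hik (tr _ _ _ nij h)
  have hjl : ¬ P.lt (x j - x l) B := fun h => hil (tr _ _ _ nij h)
  have ik := eqB _ _ D.ik hik
  have il := eqB _ _ D.il hil
  by_cases hkl : P.lt (x k - x l) B
  · exact H.pairs_false P D hij (hkl (H.sub_ne D.kl)) ik il (eqB _ _ D.jk hjk) (eqB _ _ D.jl hjl)
  · exact H.closest P D (by rwa [ik]) (by rwa [il]) (by rwa [eqB _ _ D.kl hkl])

/-- If some distance is transcendental then every given pair of bodies is much closer than another
pair at some place. -/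
theorem exists_ratio {i₀ j₀ : Fin 4} (h₀ : ¬ IsAlgebraic ℝ (x i₀ - x j₀)) (D : D4 i j k l) :
    ∃ p q, p ≠ q ∧ ¬ IsAlgebraic ℝ ((x p - x q) / (x i - x j)) := by
  by_contra hcon
  push Not at hcon
  have hij := H.sub_ne D.ij
  have fa : ∀ p q, p ≠ q → IsAlgebraic ℝ ((x i - x j) ^ 2 * f p q) := by
    intro p q hpq
    have e : (x i - x j) ^ 2 * f p q =
        C (sg p q * m q) * (((x p - x q) / (x i - x j)) ^ 2)⁻¹ := by
      unfold force
      have := H.sub_ne hpq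
      field_simp
    rw [e]
    exact (isAlgebraic_algebraMap _).mul ((hcon p q hpq).pow 2).inv
  have d3 : IsAlgebraic ℝ ((x i - x j) ^ 3) := by
    have e : (x i - x j) ^ 3 = C σ⁻¹ * (((x i - x j) ^ 2 * f i j - (x i - x j) ^ 2 * f j i) +
        (((x i - x j) ^ 2 * f i k - (x i - x j) ^ 2 * f j k) +
        ((x i - x j) ^ 2 * f i l - (x i - x j) ^ 2 * f j l))) := by
      have := H.diff D
      have hσ : C σ⁻¹ * C σ = 1 := by rw [← map_mul, inv_mul_cancel₀ H.hσ, map_one]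
      linear_combination (C σ⁻¹ * (x i - x j) ^ 2) * this - (x i - x j) ^ 3 * hσ
    rw [e]
    exact (isAlgebraic_algebraMap _).mul (((fa _ _ D.ij).sub (fa _ _ D.ij.symm)).add
      (((fa _ _ D.ik).sub (fa _ _ D.jk)).add ((fa _ _ D.il).sub (fa _ _ D.jl))))
  have d1 : IsAlgebraic ℝ (x i - x j) := d3.of_pow (by norm_num)
  apply h₀
  rcases eq_or_ne i₀ j₀ with rfl | hne
  · rw [sub_self]; exact isAlgebraic_zero
  · have e : x i₀ - x j₀ = (x i₀ - x j₀) / (x i - x j) * (x i - x j) := by field_simp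
    rw [e]
    exact (hcon _ _ hne).mul d1

/-- Collinear central configurations have algebraic distances. -/
theorem algebraic (i₀ j₀ : Fin 4) : IsAlgebraic ℝ (x i₀ - x j₀) := by
  by_contra h₀
  have key : ∀ k l : Fin 4, k ≠ l → Tri m k ∨ Tri m l := by
    intro k l hkl
    obtain ⟨i, j, D⟩ := D4.complete2 hkl
    have D' : D4 i j k l := by unfold D4 at *; tauto
    obtain ⟨p, q, hpq, hr⟩ := H.exists_ratio h₀ D'
    obtain ⟨G, _, _, _, K, _, P, hP⟩ := exists_place _ hr
    rw [s_div (H.sub_ne hpq) (H.sub_ne D'.ij)] at hP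
    exact H.tri_or P hpq D' (by grind)
  have fin : ∀ p q r s : Prop, (p ∨ q) → (p ∨ r) → (p ∨ s) → (q ∨ r) → (q ∨ s) → (r ∨ s) →
      ¬ (q ∧ r ∧ s) → ¬ (p ∧ r ∧ s) → ¬ (p ∧ q ∧ s) → ¬ (p ∧ q ∧ r) → False := by
    intro p q r s h1 h2 h3 h4 h5 h6 c0 c1 c2 c3
    clear key h₀ H
    grind
  have t012 : Tri m 3 → T (m 0) (m 1) (m 2) := fun h => h 0 1 2 (by decide) (by decide) (by decide)
  have t013 : Tri m 2 → T (m 0) (m 1) (m 3) := fun h => h 0 1 3 (by decide) (by decide) (by decide)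
  have t023 : Tri m 1 → T (m 0) (m 2) (m 3) := fun h => h 0 2 3 (by decide) (by decide) (by decide)
  have t123 : Tri m 0 → T (m 1) (m 2) (m 3) := fun h => h 1 2 3 (by decide) (by decide) (by decide)
  have c0 : ¬ (Tri m 1 ∧ Tri m 2 ∧ Tri m 3) := fun h =>
    triples_I (H.hm 0) (H.hm 1) (H.hm 2) (H.hm 3) (t012 h.2.2) (t013 h.2.1) (t023 h.1)
  have c1 : ¬ (Tri m 0 ∧ Tri m 2 ∧ Tri m 3) := fun h =>
    triples_II (H.hm 0) (H.hm 1) (H.hm 2) (H.hm 3) (t012 h.2.2) (t013 h.2.1) (t123 h.1)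
  have c2 : ¬ (Tri m 0 ∧ Tri m 1 ∧ Tri m 3) := fun h =>
    triples_II (H.hm 3) (H.hm 2) (H.hm 1) (H.hm 0) (t123 h.1).mirror (t023 h.2.1).mirror
      (t012 h.2.2).mirror
  have c3 : ¬ (Tri m 0 ∧ Tri m 1 ∧ Tri m 2) := fun h =>
    triples_I (H.hm 3) (H.hm 2) (H.hm 1) (H.hm 0) (t123 h.1).mirror (t023 h.2.1).mirror
      (t013 h.2.2).mirror
  exact fin _ _ _ _ (key 0 1 (by decide)) (key 0 2 (by decide)) (key 0 3 (by decide))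
    (key 1 2 (by decide)) (key 1 3 (by decide)) (key 2 3 (by decide)) c0 c1 c2 c3

end CoreIII
end CoreIII

/-! ### Central configurations in coordinates -/

theorem D4.sum {i j k l : Fin 4} (D : D4 i j k l) {A : Type*} [AddCommMonoid A] (w : Fin 4 → A) :
    ∑ p, w p = w i + (w j + (w k + w l)) := by
  have h : (Finset.univ : Finset (Fin 4)) = {i, j, k, l} := by
    revert i j k l; decide
  obtain ⟨h1, h2, h3, h4, h5, h6⟩ := D
  rw [h, Finset.sum_insert (by simp [h1, h2, h3]), Finset.sum_insert (by simp [h4, h5]),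
    Finset.sum_insert (by simp [h6]), Finset.sum_singleton]

theorem D4.map {i j k l : Fin 4} (D : D4 i j k l) (π : Equiv.Perm (Fin 4)) :
    D4 (π i) (π j) (π k) (π l) := by
  unfold D4 at *; simpa only [ne_eq, EmbeddingLike.apply_eq_iff_eq] using D

/-- A planar central configuration in coordinates, with mutual distances `ρ`. -/
structure Config (m : Fin 4 → ℝ) (σ : ℝ) (X Y : Fin 4 → ℝ) (ρ : Fin 4 → Fin 4 → ℝ) : Prop where
  hm : ∀ i, m i ≠ 0
  hσ : σ ≠ 0
  pos : ∀ i j, i ≠ j → 0 < ρ i j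
  symm : ∀ i j, ρ i j = ρ j i
  sq : ∀ i j, ρ i j ^ 2 = (X i - X j) ^ 2 + (Y i - Y j) ^ 2
  eqX : ∀ i j k l, D4 i j k l → σ * X i = m j * (ρ i j ^ 3)⁻¹ * (X j - X i) +
    m k * (ρ i k ^ 3)⁻¹ * (X k - X i) + m l * (ρ i l ^ 3)⁻¹ * (X l - X i)
  eqY : ∀ i j k l, D4 i j k l → σ * Y i = m j * (ρ i j ^ 3)⁻¹ * (Y j - Y i) +
    m k * (ρ i k ^ 3)⁻¹ * (Y k - Y i) + m l * (ρ i l ^ 3)⁻¹ * (Y l - Y i)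

/-- An affine dependency of four points of the plane. -/
def Dep (X Y w : Fin 4 → ℝ) : Prop := ∑ p, w p = 0 ∧ ∑ p, w p * X p = 0 ∧ ∑ p, w p * Y p = 0

/-- Twice the signed area of a triangle. -/
def area (X Y : Fin 4 → ℝ) (i j k : Fin 4) : ℝ :=
  (X j - X i) * (Y k - Y i) - (X k - X i) * (Y j - Y i)

/-- Up to a factor, four points of the plane that do not lie on a line have only one affine
dependency. -/
theorem exists_dep {X Y : Fin 4 → ℝ} (h : area X Y 0 1 2 ≠ 0 ∨ area X Y 0 1 3 ≠ 0) :
    ∃ Δ : Fin 4 → ℝ, Dep X Y Δ ∧ (∃ p, Δ p ≠ 0) ∧ ∀ w, Dep X Y w → ∃ α, ∀ p, w p = α * Δ p := by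
  refine ⟨![area X Y 1 2 3, -area X Y 0 2 3, area X Y 0 1 3, -area X Y 0 1 2], ?_, ?_, ?_⟩
  · refine ⟨?_, ?_, ?_⟩ <;> simp [Fin.sum_univ_four, area] <;> ring
  · rcases h with h | h
    · exact ⟨3, by simpa using h⟩
    · exact ⟨2, by simpa using h⟩
  · rintro w ⟨h1, h2, h3⟩
    rw [Fin.sum_univ_four] at h1 h2 h3
    rcases h with h | h
    · refine ⟨-w 3 / area X Y 0 1 2, fun p => ?_⟩
      rw [div_mul_eq_mul_div, eq_div_iff h]
      fin_cases p <;> simp [area]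
      · linear_combination (Y 1 - Y 2) * h2 - (X 1 - X 2) * h3 + (X 1 * Y 2 - X 2 * Y 1) * h1
      · linear_combination (Y 2 - Y 0) * h2 - (X 2 - X 0) * h3 + (X 2 * Y 0 - X 0 * Y 2) * h1
      · linear_combination (Y 0 - Y 1) * h2 - (X 0 - X 1) * h3 + (X 0 * Y 1 - X 1 * Y 0) * h1
      · ring
    · refine ⟨w 2 / area X Y 0 1 3, fun p => ?_⟩
      rw [div_mul_eq_mul_div, eq_div_iff h]
      fin_cases p <;> simp [area]
      · linear_combination (Y 1 - Y 3) * h2 - (X 1 - X 3) * h3 + (X 1 * Y 3 - X 3 * Y 1) * h1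
      · linear_combination (Y 3 - Y 0) * h2 - (X 3 - X 0) * h3 + (X 3 * Y 0 - X 0 * Y 3) * h1
      · linear_combination (Y 0 - Y 1) * h2 - (X 0 - X 1) * h3 + (X 0 * Y 1 - X 1 * Y 0) * h1

/-- The origin is an affine combination of points that do not lie on a line. -/
theorem exists_bary {X Y : Fin 4 → ℝ} (h : area X Y 0 1 2 ≠ 0 ∨ area X Y 0 1 3 ≠ 0) :
    ∃ p : Fin 4 → ℝ, ∑ i, p i = 1 ∧ ∑ i, p i * X i = 0 ∧ ∑ i, p i * Y i = 0 := by
  rcases h with h | h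
  · refine ⟨![(X 1 * Y 2 - X 2 * Y 1) / area X Y 0 1 2, (X 2 * Y 0 - X 0 * Y 2) / area X Y 0 1 2,
      (X 0 * Y 1 - X 1 * Y 0) / area X Y 0 1 2, 0], ?_, ?_, ?_⟩ <;>
    simp [Fin.sum_univ_four] <;> field_simp
    · unfold area; ring
    · ring
    · ring
  · refine ⟨![(X 1 * Y 3 - X 3 * Y 1) / area X Y 0 1 3, (X 3 * Y 0 - X 0 * Y 3) / area X Y 0 1 3,
      0, (X 0 * Y 1 - X 1 * Y 0) / area X Y 0 1 3], ?_, ?_, ?_⟩ <;>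
    simp [Fin.sum_univ_four] <;> field_simp
    · unfold area; ring
    · ring
    · ring

/-- The weights in a linear relation between the vectors from one point to the three others extend
to an affine dependency. -/
theorem row_dep {X Y Δ : Fin 4 → ℝ} (hΔ : ∀ w, Dep X Y w → ∃ α, ∀ p, w p = α * Δ p) (i : Fin 4)
    (u : Fin 4 → ℝ) (h : ∀ j k l, D4 i j k l →
      u j * (X j - X i) + u k * (X k - X i) + u l * (X l - X i) = 0 ∧
      u j * (Y j - Y i) + u k * (Y k - Y i) + u l * (Y l - Y i) = 0) :
    ∃ α, ∀ p, i ≠ p → u p = α * Δ p := by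
  obtain ⟨j, k, l, D⟩ := D4.complete1 i
  obtain ⟨hX, hY⟩ := h j k l D
  obtain ⟨α, hα⟩ := hΔ (fun p => if p = i then -(u j + u k + u l) else u p) (by
    refine ⟨?_, ?_, ?_⟩ <;> rw [D.sum] <;>
      simp only [D.ij.symm, D.ik.symm, D.il.symm, if_true, if_false]
    · ring
    · linear_combination hX
    · linear_combination hY)
  refine ⟨α, fun p hp => ?_⟩
  rw [← hα p, if_neg hp.symm]

namespace Config

variable {m : Fin 4 → ℝ} {σ : ℝ} {X Y : Fin 4 → ℝ} {ρ : Fin 4 → Fin 4 → ℝ}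
  (H : Config m σ X Y ρ) {i j k l : Fin 4}
include H

/-- The first moment of the masses vanishes. -/
theorem center : ∑ p, m p * X p = 0 ∧ ∑ p, m p * Y p = 0 := by
  have D : D4 0 1 2 3 := by decide
  have s := H.symm
  constructor
  · rw [D.sum]
    apply mul_left_cancel₀ H.hσ
    have e1 := H.eqX _ _ _ _ D
    have e2 := H.eqX _ _ _ _ D.a
    have e3 := H.eqX _ _ _ _ D.b.a
    have e4 := H.eqX _ _ _ _ D.c.b.a
    rw [s 1 0] at e2
    rw [s 2 0, s 2 1] at e3
    rw [s 3 0, s 3 1, s 3 2] at e4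
    linear_combination m 0 * e1 + m 1 * e2 + m 2 * e3 + m 3 * e4
  · rw [D.sum]
    apply mul_left_cancel₀ H.hσ
    have e1 := H.eqY _ _ _ _ D
    have e2 := H.eqY _ _ _ _ D.a
    have e3 := H.eqY _ _ _ _ D.b.a
    have e4 := H.eqY _ _ _ _ D.c.b.a
    rw [s 1 0] at e2
    rw [s 2 0, s 2 1] at e3
    rw [s 3 0, s 3 1, s 3 2] at e4
    linear_combination m 0 * e1 + m 1 * e2 + m 2 * e3 + m 3 * e4

theorem inv_mul (h : i ≠ j) : (ρ i j ^ 3)⁻¹ * ρ i j ^ 3 = 1 :=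
  inv_mul_cancel₀ (pow_ne_zero 3 (H.pos i j h).ne')

omit H in
/-- The weighted sum of squared distances to a body does not depend on the body. -/
theorem sum_sq (hsq : ∀ i j, ρ i j ^ 2 = (X i - X j) ^ 2 + (Y i - Y j) ^ 2) {w : Fin 4 → ℝ}
    (hw : Dep X Y w) (D : D4 i j k l) :
    w j * ρ i j ^ 2 + w k * ρ i k ^ 2 + w l * ρ i l ^ 2 = ∑ p, w p * (X p ^ 2 + Y p ^ 2) := by
  obtain ⟨h1, h2, h3⟩ := hw
  rw [D.sum] at h1 h2 h3 ⊢
  rw [hsq, hsq, hsq]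
  linear_combination (X i ^ 2 + Y i ^ 2) * h1 - 2 * X i * h2 - 2 * Y i * h3

/-- With nonzero total mass, subtracting the multiple `c` of the center of mass relation turns every
row of the equations into an affine dependency of the four bodies. This dependency `Δ` is unique up
to a factor, so that `ρ i j ^ (-3) - c` is, by symmetry, a multiple of `(Δ i / m i) * (Δ j / m j)`.
The multiple may be negative, and it is absorbed into `ξ` by a complex square root. -/
theorem coreI (h : area X Y 0 1 2 ≠ 0 ∨ area X Y 0 1 3 ≠ 0) (hM : ∑ p, m p ≠ 0) :
    ∃ (ξ : Fin 4 → ℂ) (μ : ℂ),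
      CoreI m (-σ / ∑ p, m p) ξ (fun i j => (ρ i j : ℂ)) μ := by
  obtain ⟨c, hc⟩ : ∃ c, c = -σ / ∑ p, m p := ⟨_, rfl⟩
  have hcM : c * ∑ p, m p = -σ := by rw [hc]; field_simp
  obtain ⟨Δ, hd, ⟨q, hq⟩, hΔ⟩ := exists_dep h
  have hα : ∀ i, ∃ α, ∀ p, i ≠ p → m p * ((ρ i p ^ 3)⁻¹ - c) = α * Δ p := by
    intro i
    refine row_dep hΔ i (fun p => m p * ((ρ i p ^ 3)⁻¹ - c)) fun j k l D => ?_
    obtain ⟨hX, hY⟩ := H.center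
    rw [D.sum] at hX hY hcM
    have e1 := H.eqX _ _ _ _ D
    have e2 := H.eqY _ _ _ _ D
    constructor
    · linear_combination X i * hcM - c * hX - e1
    · linear_combination Y i * hcM - c * hY - e2
  choose α hα using hα
  have hβ : ∀ i, m i * α i * Δ q = m q * α q * Δ i := by
    intro i
    rcases eq_or_ne i q with rfl | hi
    · rfl
    have e1 := hα i q hi
    have e2 := hα q i hi.symm
    rw [H.symm q i] at e2
    linear_combination -m i * e1 + m q * e2
  obtain ⟨κ, hκ⟩ : ∃ κ, κ = m q * α q / Δ q := ⟨_, rfl⟩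
  have hA : ∀ i j, i ≠ j → (ρ i j ^ 3)⁻¹ = c + κ * (Δ i / m i) * (Δ j / m j) := by
    intro i j hij
    have e1 := hα i j hij
    have e2 := hβ i
    have h1 := H.hm i
    have h2 := H.hm j
    have : m i * α i = κ * Δ i := by rw [hκ]; field_simp; linear_combination e2
    rw [← sub_eq_iff_eq_add']
    apply mul_left_cancel₀ (mul_ne_zero h1 h2)
    have e3 : m i * m j * (κ * (Δ i / m i) * (Δ j / m j)) = κ * Δ i * Δ j := by field_simp
    rw [e3]
    linear_combination m i * e1 + Δ j * this
  obtain ⟨z, hz⟩ := IsAlgClosed.exists_pow_nat_eq (κ : ℂ) (n := 2) (by norm_num)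
  have hmC : ∀ i, (m i : ℂ) ≠ 0 := fun i => by exact_mod_cast H.hm i
  refine ⟨fun i => z * (Δ i / m i : ℝ), z * (∑ p, Δ p * (X p ^ 2 + Y p ^ 2) : ℝ), ?_⟩
  rw [← hc]
  refine ⟨H.hm, ?_, ?_, ?_, ?_, ?_, ?_⟩
  · rw [hc]; exact div_ne_zero (neg_ne_zero.2 H.hσ) hM
  · intro i j k l D
    rw [D.sum] at hM
    rwa [← add_assoc, ← add_assoc] at hM
  · intro i j
    simp only [H.symm i j]
  · intro i j hij
    have e := H.inv_mul hij
    rw [hA i j hij] at e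
    have e' := congrArg (fun x : ℝ => (x : ℂ)) e
    simp only [Complex.coe_algebraMap]
    push_cast at e' ⊢
    rw [← e', ← hz]; ring
  · intro i j k l D
    have e := hd.1
    rw [D.sum] at e
    have e' := congrArg (fun x : ℝ => (x : ℂ)) e
    simp only [Complex.coe_algebraMap]
    push_cast at e' ⊢
    have := hmC i; have := hmC j; have := hmC k; have := hmC l
    field_simp
    linear_combination z * e'
  · intro i j k l D
    have e' := congrArg (fun x : ℝ => (x : ℂ)) (sum_sq H.sq hd D)
    simp only [Complex.coe_algebraMap]
    rw [← e']
    push_cast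
    have := hmC i; have := hmC j; have := hmC k; have := hmC l
    field_simp

/-- With zero total mass the masses themselves are the affine dependency of the bodies. Writing the
origin as an affine combination `p` of the bodies, every row of the equations becomes an affine
dependency, so that `ρ i j ^ (-3) + σ * p j / m j` depends only on `i`; symmetry splits
`ρ i j ^ (-3)` as `a i + a j`. -/
theorem coreII (h : area X Y 0 1 2 ≠ 0 ∨ area X Y 0 1 3 ≠ 0) (hM : ∑ p, m p = 0) :
    ∃ (a : Fin 4 → ℂ) (μ : ℂ), CoreII m (-σ) a (fun i j => (ρ i j : ℂ)) μ := by
  obtain ⟨Δ, hd, ⟨q, hq⟩, hΔ⟩ := exists_dep h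
  obtain ⟨p, hp1, hpX, hpY⟩ := exists_bary h
  have hdm : Dep X Y m := ⟨hM, H.center⟩
  obtain ⟨γ, hγ⟩ := hΔ m hdm
  have hγ0 : γ ≠ 0 := by rintro rfl; exact H.hm 0 (by rw [hγ]; simp)
  have hm' : ∀ w, Dep X Y w → ∃ α, ∀ p, w p = α * m p := by
    intro w hw
    obtain ⟨α, hα⟩ := hΔ w hw
    refine ⟨α / γ, fun p => ?_⟩
    rw [hα, hγ]; field_simp
  have hα : ∀ i, ∃ α, ∀ j, i ≠ j → m j * (ρ i j ^ 3)⁻¹ + σ * p j = α * m j := by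
    intro i
    refine row_dep hm' i (fun j => m j * (ρ i j ^ 3)⁻¹ + σ * p j) fun j k l D => ?_
    rw [D.sum] at hp1 hpX hpY
    have e1 := H.eqX _ _ _ _ D
    have e2 := H.eqY _ _ _ _ D
    constructor
    · linear_combination -e1 + σ * hpX - σ * X i * hp1
    · linear_combination -e2 + σ * hpY - σ * Y i * hp1
  choose α hα using hα
  have hS : ∀ i j, i ≠ j → (ρ i j ^ 3)⁻¹ = α i - σ * p j / m j := by
    intro i j hij
    have := hα i j hij
    have hj := H.hm j
    rw [eq_sub_iff_add_eq]
    apply mul_left_cancel₀ hj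
    rw [mul_add, mul_div_cancel₀ _ hj]
    linear_combination this
  obtain ⟨c, hc⟩ : ∃ c, ∀ i, α i = c - σ * p i / m i := by
    refine ⟨α 0 + σ * p 0 / m 0, fun i => ?_⟩
    rcases eq_or_ne i 0 with rfl | hi
    · ring
    have e1 := hS i 0 hi
    have e2 := hS 0 i hi.symm
    rw [H.symm 0 i] at e2
    linear_combination e2 - e1
  obtain ⟨a, ha⟩ : ∃ a : Fin 4 → ℝ, ∀ i, a i = c / 2 - σ * p i / m i := ⟨_, fun i => rfl⟩
  have hSa : ∀ i j, i ≠ j → (ρ i j ^ 3)⁻¹ = a i + a j := by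
    intro i j hij
    rw [hS i j hij, hc, ha, ha]; ring
  refine ⟨fun i => a i, (∑ p, m p * (X p ^ 2 + Y p ^ 2) : ℝ), ?_⟩
  refine ⟨H.hm, neg_ne_zero.2 H.hσ, ?_, ?_, ?_, ?_, ?_, ?_⟩
  · intro i j k l D
    rw [D.sum] at hM
    linarith
  · intro i j
    simp only [H.symm i j]
  · intro i j hij
    have e := H.inv_mul hij
    rw [hSa i j hij] at e
    exact_mod_cast e
  · intro i j k l D
    have key : ∀ i, m i * a i = m i * (c / 2) - σ * p i := by
      intro i
      have := H.hm i
      rw [ha]; field_simp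
    rw [D.sum] at hM hp1
    have : m i * a i + m j * a j + m k * a k + m l * a l = -σ := by
      rw [key, key, key, key]; linear_combination (c / 2) * hM - σ * hp1
    simp only [Complex.coe_algebraMap]
    exact_mod_cast this
  · intro i j k l D
    have := sum_sq H.sq hdm D
    simp only [Complex.coe_algebraMap]
    exact_mod_cast this
  · intro i j k l D
    have h1 := inv_pos.2 (pow_pos (H.pos _ _ D.ij) 3)
    have h2 := inv_pos.2 (pow_pos (H.pos _ _ D.kl) 3)
    rw [hSa _ _ D.ij] at h1
    rw [hSa _ _ D.kl] at h2
    have : a i + a j + a k + a l ≠ 0 := by linarith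
    exact_mod_cast this

/-- Bodies on a line lie on a line through the origin; they are renumbered from left to right along
it. -/
theorem coreIII (h : ¬ (area X Y 0 1 2 ≠ 0 ∨ area X Y 0 1 3 ≠ 0)) :
    ∃ (π : Equiv.Perm (Fin 4)) (x : Fin 4 → ℂ), CoreIII (fun i => m (π i)) σ x ∧
      ∀ i j, i < j → (ρ (π i) (π j) : ℂ) = x j - x i := by
  push Not at h
  obtain ⟨h2, h3⟩ := h
  have hr := H.pos 0 1 (by decide)
  have hsq := H.sq 0 1
  -- the direction of the line
  obtain ⟨a, ha⟩ : ∃ a, a = (X 1 - X 0) / ρ 0 1 := ⟨_, rfl⟩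
  obtain ⟨b, hb⟩ : ∃ b, b = (Y 1 - Y 0) / ρ 0 1 := ⟨_, rfl⟩
  have hab : a ^ 2 + b ^ 2 = 1 := by
    rw [ha, hb]; field_simp; linarith
  have hcol0 : ∀ i, (X i - X 0) * b = (Y i - Y 0) * a := by
    intro i
    rw [ha, hb]
    field_simp
    unfold area at h2 h3
    fin_cases i
    · simp
    · simp; ring
    · simp; linarith
    · simp; linarith
  have hcol : ∀ i j, (X i - X j) * b = (Y i - Y j) * a := fun i j => by
    linear_combination hcol0 i - hcol0 j
  have horig : ∀ i, X i * b = Y i * a := by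
    intro i
    obtain ⟨j, k, l, D⟩ := D4.complete1 i
    apply mul_left_cancel₀ H.hσ
    linear_combination b * H.eqX _ _ _ _ D - a * H.eqY _ _ _ _ D +
      m j * (ρ i j ^ 3)⁻¹ * hcol j i + m k * (ρ i k ^ 3)⁻¹ * hcol k i +
      m l * (ρ i l ^ 3)⁻¹ * hcol l i
  obtain ⟨x, hx⟩ : ∃ x : Fin 4 → ℝ, ∀ i, x i = X i * a + Y i * b := ⟨_, fun _ => rfl⟩
  have hX : ∀ i, X i = x i * a := fun i => by
    rw [hx]; linear_combination (-X i) * hab + b * horig i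
  have hY : ∀ i, Y i = x i * b := fun i => by
    rw [hx]; linear_combination (-Y i) * hab - a * horig i
  have hρ : ∀ i j, ρ i j ^ 2 = (x i - x j) ^ 2 := fun i j => by
    rw [H.sq, hX i, hX j, hY i, hY j]; linear_combination (x i - x j) ^ 2 * hab
  have hinj : Function.Injective x := by
    intro i j hij
    by_contra hne
    have := hρ i j
    rw [hij, sub_self] at this
    exact (pow_pos (H.pos i j hne) 2).ne' (by rw [this]; norm_num)
  have heq : ∀ i j k l, D4 i j k l → σ * x i = m j * (ρ i j ^ 3)⁻¹ * (x j - x i) +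
      m k * (ρ i k ^ 3)⁻¹ * (x k - x i) + m l * (ρ i l ^ 3)⁻¹ * (x l - x i) := by
    intro i j k l D
    rw [hx, hx, hx, hx]
    linear_combination a * H.eqX _ _ _ _ D + b * H.eqY _ _ _ _ D
  obtain ⟨π, hπ⟩ : ∃ π : Equiv.Perm (Fin 4), StrictMono (x ∘ π) :=
    ⟨Tuple.sort x, (Tuple.monotone_sort x).strictMono_of_injective
      (hinj.comp (Equiv.injective _))⟩
  have hlt : ∀ i j, i < j → ρ (π i) (π j) = x (π j) - x (π i) := by
    intro i j hij
    have h1 : x (π i) < x (π j) := hπ hij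
    have h2 := hρ (π i) (π j)
    have h3 := H.pos (π i) (π j) (π.injective.ne hij.ne)
    refine (sq_eq_sq₀ h3.le (by linarith)).1 ?_
    rw [h2]; ring
  have hsg : ∀ i j, i ≠ j → ρ (π i) (π j) = sg i j * (x (π j) - x (π i)) := by
    intro i j hij
    rcases lt_or_gt_of_ne hij with h | h
    · rw [hlt i j h, sg_lt h, one_mul]
    · rw [H.symm, hlt j i h, sg_gt h]; ring
  have hf : ∀ i j, i ≠ j → m (π j) * (ρ (π i) (π j) ^ 3)⁻¹ * (x (π j) - x (π i)) =
      sg i j * m (π j) * ((x (π i) - x (π j)) ^ 2)⁻¹ := by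
    intro i j hij
    have hs3 : sg i j ^ 2 = 1 := by rcases sg_cases i j with h | h <;> rw [h] <;> norm_num
    have hne : x (π j) - x (π i) ≠ 0 := sub_ne_zero.2 fun h => hij (π.injective (hinj h)).symm
    have hs := sg_ne i j
    rw [hsg i j hij, ← neg_sub (x (π j)), neg_sq]
    field_simp
    linear_combination (-m (π j) * (sg i j ^ 2 + 1)) * hs3
  refine ⟨π, fun i => (x (π i) : ℂ), ⟨fun i => H.hm _, H.hσ, ?_, ?_, ?_⟩, ?_⟩
  · intro i j hij h
    exact hij (π.injective (hinj (by exact_mod_cast h)))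
  · intro i j k l D
    have e := heq _ _ _ _ (D.map π)
    rw [hf i j D.ij, hf i k D.ik, hf i l D.il] at e
    unfold force
    simp only [Complex.coe_algebraMap]
    exact_mod_cast e
  · intro i j k l hij hkl
    have h1 := H.pos _ _ (π.injective.ne hij)
    have h2 := H.pos _ _ (π.injective.ne hkl)
    rw [hsg i j hij] at h1
    rw [hsg k l hkl] at h2
    simp only [Complex.coe_algebraMap]
    exact_mod_cast (add_pos h1 h2).ne'
  · intro i j hij
    show (ρ (π i) (π j) : ℂ) = (x (π j) : ℂ) - (x (π i) : ℂ)
    exact_mod_cast hlt i j hij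

end Config

/-! ### Transfer to an ultrapower -/

section Transfer

open Filter

variable {ι : Type*} {U : Ultrafilter ι}

/-- Real numbers as constant sequences in the ultrapower of the complex field. -/
noncomputable instance germAlgebra : Algebra ℝ (Germ (U : Filter ι) ℂ) :=
  ((Germ.coeRingHom (U : Filter ι)).comp
    (RingHom.pi fun _ : ι => algebraMap ℝ ℂ)).toAlgebra

/-- The class of a sequence in the ultrapower. -/
def germ (U : Ultrafilter ι) (g : ι → ℂ) : Germ (U : Filter ι) ℂ := g

theorem germ_eq {g h : ι → ℂ} : germ U g = germ U h ↔ ∀ᶠ s in U, g s = h s := Germ.coe_eq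

theorem germ_ne {g h : ι → ℂ} (H : ∀ᶠ s in U, g s ≠ h s) : germ U g ≠ germ U h := fun e => by
  obtain ⟨s, h1, h2⟩ := (H.and (germ_eq.1 e)).exists
  exact h1 h2

/-- A real sequence whose class is algebraic is constant along the ultrafilter, as it takes its
values among the roots of a polynomial. -/
theorem eventually_const {g : ι → ℝ} (h : IsAlgebraic ℝ (germ U fun s => (g s : ℂ))) :
    ∃ c, ∀ᶠ s in U, g s = c := by
  obtain ⟨p, hp, h⟩ := h
  have e : ∀ᶠ s in U, ∃ c ∈ (p.roots.toFinset : Set ℝ), g s = c := by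
    have e1 : Polynomial.aeval (germ U fun s => (g s : ℂ)) p =
        germ U (Polynomial.eval₂ (RingHom.pi fun _ : ι => algebraMap ℝ ℂ)
          (fun s => (g s : ℂ)) p) :=
      (Polynomial.hom_eval₂ p (RingHom.pi fun _ : ι => algebraMap ℝ ℂ)
        (Germ.coeRingHom (U : Filter ι)) (fun s => (g s : ℂ))).symm
    rw [e1] at h
    have h' := (germ_eq (h := fun _ => 0)).1 h
    refine h'.mono fun s hs => ⟨g s, ?_, rfl⟩
    have e2 := Polynomial.hom_eval₂ p (RingHom.pi fun _ : ι => algebraMap ℝ ℂ)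
        (Pi.evalRingHom (fun _ : ι => ℂ) s) (fun s => (g s : ℂ))
    have e3 : Polynomial.eval₂ (algebraMap ℝ ℂ) (g s : ℂ) p = 0 := e2.symm.trans hs
    have e4 : ((Polynomial.eval (g s) p : ℝ) : ℂ) = 0 := by
      rw [← e3]; exact (Polynomial.eval₂_at_apply (algebraMap ℝ ℂ) (g s)).symm
    simpa [hp] using e4
  obtain ⟨c, -, hc⟩ := (U.eventually_exists_mem_iff (Finset.finite_toSet _)).1 e
  exact ⟨c, hc⟩

variable {m : Fin 4 → ℝ}

theorem CoreI.transfer {c : ℝ} {ξ : ι → Fin 4 → ℂ} {ρ : ι → Fin 4 → Fin 4 → ℂ} {μ : ι → ℂ}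
    (h : ∀ᶠ s in U, CoreI m c (ξ s) (ρ s) (μ s)) :
    CoreI m c (fun i => germ U fun s => ξ s i) (fun i j => germ U fun s => ρ s i j)
      (germ U μ) := by
  obtain ⟨s₀, h₀⟩ := h.exists
  exact ⟨h₀.hm, h₀.hc, h₀.hM,
    fun i j => germ_eq.2 (h.mono fun s hs => hs.symm i j),
    fun i j hij => germ_eq.2 (h.mono fun s hs => hs.eqn i j hij),
    fun i j k l D => germ_eq.2 (h.mono fun s hs => hs.sum i j k l D),
    fun i j k l D => germ_eq.2 (h.mono fun s hs => hs.F i j k l D)⟩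

theorem CoreII.transfer {τ : ℝ} {a : ι → Fin 4 → ℂ} {ρ : ι → Fin 4 → Fin 4 → ℂ} {μ : ι → ℂ}
    (h : ∀ᶠ s in U, CoreII m τ (a s) (ρ s) (μ s)) :
    CoreII m τ (fun i => germ U fun s => a s i) (fun i j => germ U fun s => ρ s i j)
      (germ U μ) := by
  obtain ⟨s₀, h₀⟩ := h.exists
  exact ⟨h₀.hm, h₀.hτ, h₀.hM,
    fun i j => germ_eq.2 (h.mono fun s hs => hs.symm i j),
    fun i j hij => germ_eq.2 (h.mono fun s hs => hs.eqn i j hij),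
    fun i j k l D => germ_eq.2 (h.mono fun s hs => hs.lin i j k l D),
    fun i j k l D => germ_eq.2 (h.mono fun s hs => hs.F i j k l D),
    fun i j k l D => germ_ne (h := fun _ => 0) (h.mono fun s hs => hs.hA i j k l D)⟩

theorem CoreIII.transfer {σ : ℝ} {x : ι → Fin 4 → ℂ}
    (h : ∀ᶠ s in U, CoreIII m σ (x s)) : CoreIII m σ (fun i => germ U fun s => x s i) := by
  obtain ⟨s₀, h₀⟩ := h.exists
  exact ⟨h₀.hm, h₀.hσ,
    fun i j hij => germ_ne (h.mono fun s hs => hs.ne i j hij),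
    fun i j k l D => germ_eq.2 (h.mono fun s hs => hs.eqn i j k l D),
    fun i j k l hij hkl => germ_ne (h := fun _ => 0) (h.mono fun s hs => hs.pos i j k l hij hkl)⟩

/-- Along an ultrafilter, the distances in a family of central configurations with a common
multiplier are constant. -/
theorem Config.eventually_const {σ : ℝ} {X Y : ι → Fin 4 → ℝ} {ρ : ι → Fin 4 → Fin 4 → ℝ}
    (H : ∀ᶠ s in U, Config m σ (X s) (Y s) (ρ s)) (i j : Fin 4) (hij : i ≠ j) :
    ∃ c, ∀ᶠ s in U, ρ s i j = c := by
  by_cases h : ∀ᶠ s in U, area (X s) (Y s) 0 1 2 ≠ 0 ∨ area (X s) (Y s) 0 1 3 ≠ 0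
  · apply _root_.eventually_const
    by_cases hM : ∑ p, m p = 0
    · obtain ⟨a, ha⟩ := skolem.1 ((H.and h).mono fun s hs => hs.1.coreII hs.2 hM)
      obtain ⟨μ, hμ⟩ := skolem.1 ha
      exact (CoreII.transfer hμ).algebraic hij
    · obtain ⟨ξ, hξ⟩ := skolem.1 ((H.and h).mono fun s hs => hs.1.coreI hs.2 hM)
      obtain ⟨μ, hμ⟩ := skolem.1 hξ
      exact (CoreI.transfer hμ).algebraic hij
  · rw [← U.eventually_not] at h
    obtain ⟨π, hπ⟩ := U.eventually_exists_iff.1 ((H.and h).mono fun s hs => hs.1.coreIII hs.2)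
    obtain ⟨x, hx⟩ := skolem.1 hπ
    have key : ∀ a b, a < b → ∃ c, ∀ᶠ s in U, ρ s (π a) (π b) = c := by
      intro a b hab
      apply _root_.eventually_const
      rw [germ_eq.2 (hx.mono fun s hs => hs.2 a b hab)]
      exact (CoreIII.transfer (hx.mono fun s hs => hs.1)).algebraic b a
    obtain ⟨a, rfl⟩ := π.surjective i
    obtain ⟨b, rfl⟩ := π.surjective j
    rcases lt_or_gt_of_ne (fun e : a = b => hij (by rw [e])) with hab | hab
    · exact key a b hab
    · obtain ⟨c, hc⟩ := key b a hab
      exact ⟨c, (hc.and H).mono fun s hs => by rw [hs.2.symm, hs.1]⟩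

end Transfer

/-! ### The finiteness theorem -/

/-- The equations of a central configuration in coordinates. -/
theorem config_of_eqn {m : Fin 4 → ℝ} (hm : ∀ k, m k ≠ 0) {σ : ℝ}
    {r : Fin 4 → EuclideanSpace ℝ (Fin 2)} (hσ : σ = 1 ∨ σ = -1)
    (hne : ∀ j k, j ≠ k → r j ≠ r k)
    (heq : ∀ k, σ • r k = ∑ j ∈ Finset.univ.filter (fun j => j ≠ k),
      (m j / ‖r j - r k‖ ^ 3) • (r j - r k)) :
    Config m σ (fun i => r i 0) (fun i => r i 1) (fun i j => ‖r i - r j‖) := by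
  have key : ∀ i j k l, D4 i j k l → σ • r i = (m j * (‖r i - r j‖ ^ 3)⁻¹) • (r j - r i) +
      (m k * (‖r i - r k‖ ^ 3)⁻¹) • (r k - r i) + (m l * (‖r i - r l‖ ^ 3)⁻¹) • (r l - r i) := by
    intro i j k l D
    have hs : Finset.univ.filter (fun p => p ≠ i) = {j, k, l} := by
      revert i j k l; decide
    rw [heq i, hs, Finset.sum_insert (by simp [D.jk, D.jl]), Finset.sum_insert (by simp [D.kl]),
      Finset.sum_singleton, norm_sub_rev (r i), norm_sub_rev (r i), norm_sub_rev (r i), add_assoc]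
    simp only [div_eq_mul_inv]
  refine ⟨hm, ?_, fun i j h => norm_pos_iff.2 (sub_ne_zero.2 (hne i j h)),
    fun i j => norm_sub_rev _ _, fun i j => ?_, fun i j k l D => ?_, fun i j k l D => ?_⟩
  · rcases hσ with rfl | rfl <;> norm_num
  · rw [EuclideanSpace.norm_sq_eq, Fin.sum_univ_two]
    simp
  · simpa using congrArg (fun v : EuclideanSpace ℝ (Fin 2) => v 0) (key i j k l D)
  · simpa using congrArg (fun v : EuclideanSpace ℝ (Fin 2) => v 1) (key i j k l D)

/-- For any four nonzero real masses (of arbitrary signs), the planar four-body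
problem has finitely many central configurations with nonzero multiplier:
the set of attained 6-tuples of mutual distances is finite. -/
theorem finiteness_of_four_body_central_configurations
    (m : Fin 4 → ℝ) (hm : ∀ k, m k ≠ 0) :
    (CCDistanceSet m).Finite := by
  by_contra hinf
  have : Infinite (CCDistanceSet m) := Set.infinite_coe_iff.2 hinf
  -- a nonprincipal ultrafilter on the infinite set of distance tuples
  let U : Ultrafilter (CCDistanceSet m) := Filter.hyperfilter _
  choose σ r hσ hne heq hd using fun d : CCDistanceSet m => d.2
  obtain ⟨τ, hτ⟩ : ∃ τ, ∀ᶠ d in U, σ d = τ := by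
    rcases U.eventually_or.1 (Filter.Eventually.of_forall hσ) with h | h
    · exact ⟨1, h⟩
    · exact ⟨-1, h⟩
  have hconf : ∀ᶠ d in U, Config m τ (fun i => r d i 0) (fun i => r d i 1)
      (fun i j => ‖r d i - r d j‖) :=
    hτ.mono fun d h => h ▸ config_of_eqn hm (hσ d) (hne d) (heq d)
  have hconst : ∀ i j : Fin 4, ∃ c : ℝ, ∀ᶠ d : CCDistanceSet m in U, d.1 i j = c := by
    intro i j
    rcases eq_or_ne i j with rfl | hij
    · exact ⟨0, Filter.Eventually.of_forall fun d => by rw [hd]; simp⟩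
    · obtain ⟨c, hc⟩ := Config.eventually_const hconf i j hij
      exact ⟨c, hc.mono fun d h => by rw [hd]; exact h⟩
  choose c hc using hconst
  have hall : ∀ᶠ d : CCDistanceSet m in U, d.1 = c :=
    (Filter.eventually_all.2 fun i => Filter.eventually_all.2 fun j => hc i j).mono
      fun d h => funext fun i => funext fun j => h i j
  have hsub : {d : CCDistanceSet m | d.1 = c}.Subsingleton := fun d h e h' =>
    Subtype.ext (h.trans h'.symm)
  exact Filter.notMem_hyperfilter_of_finite hsub.finite hall
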